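/- arXiv:math/0603035 — 3 statements merged into one kernel-verified Lean document; each statement's English description precedes it below -/
import Mathlib

section
/- Let m, n ≥ 1 and let (L_ε)_{ε∈(0,1]} be a moderate net of linear maps L_ε : 𝓢(ℝ^n) → C^∞(ℝ^m), each L_ε being continuous into O_M(ℝ^m), such that the constants in the moderation estimate can be chosen as follows: there exists a sequence r : ℕ → [0,+∞) with limsup_{l→∞} r(l)/l < 1 such that for every l ∈ ℕ there exist p, q, l' ∈ ℕ and C ≥ 0 with μ_{-p,l}(L_ε(f)) ≤ C ε^{-r(l)} μ_{q,l'}(f) for all f ∈ 𝓢(ℝ^n) and all ε small enough. Then there exists a net (H_ε)_{ε∈(0,1]} belonging to E_τ(ℝ^{m+n}) such that for every net (f_ε)_{ε∈(0,1]} belonging to E_S^∞(ℝ^n), the net ( x ↦ ∫_{ℝ^n} H_ε(x,y) f_ε(y) dy − L_ε(f_ε)(x) )_{ε∈(0,1]} belongs to N_τ(ℝ^m). -/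
open MeasureTheory Filter

noncomputable def mu {E : Type*} [NormedAddCommGroup E] [NormedSpace ℝ E]
    (r : ℤ) (l : ℕ) (f : E → ℂ) : ENNReal :=
  ⨆ (x : E) (i : ℕ) (_ : i ≤ l),
    ENNReal.ofReal ((1 + ‖x‖) ^ r * ‖iteratedFDeriv ℝ i f x‖)

def IsOEps (g : ℝ → ENNReal) (h : ℝ → ℝ) : Prop :=
  ∃ C > (0:ℝ), ∃ η > (0:ℝ), ∀ ε : ℝ, 0 < ε → ε ≤ η → g ε ≤ ENNReal.ofReal (C * h ε)

def SchwartzLike {E : Type*} [NormedAddCommGroup E] [NormedSpace ℝ E] (f : E → ℂ) : Prop :=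
  ContDiff ℝ (⊤ : ℕ∞) f ∧ ∀ q l : ℕ, mu (q : ℤ) l f < ⊤

def TemperateGrowth' {E : Type*} [NormedAddCommGroup E] [NormedSpace ℝ E] (f : E → ℂ) : Prop :=
  ContDiff ℝ (⊤ : ℕ∞) f ∧ ∀ l : ℕ, ∃ q : ℕ, mu (-(q:ℤ)) l f < ⊤

def IsESNet {E : Type*} [NormedAddCommGroup E] [NormedSpace ℝ E] (f : ℝ → E → ℂ) : Prop :=
  (∀ ε ∈ Set.Ioc (0:ℝ) 1, SchwartzLike (f ε)) ∧
  ∀ q l : ℕ, ∃ N : ℕ, IsOEps (fun ε => mu (q:ℤ) l (f ε)) (fun ε => ε ^ (-(N:ℤ)))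

def IsNSNet {E : Type*} [NormedAddCommGroup E] [NormedSpace ℝ E] (f : ℝ → E → ℂ) : Prop :=
  (∀ ε ∈ Set.Ioc (0:ℝ) 1, SchwartzLike (f ε)) ∧
  ∀ q l p : ℕ, IsOEps (fun ε => mu (q:ℤ) l (f ε)) (fun ε => ε ^ p)

def IsEtauNet {E : Type*} [NormedAddCommGroup E] [NormedSpace ℝ E] (f : ℝ → E → ℂ) : Prop :=
  (∀ ε ∈ Set.Ioc (0:ℝ) 1, TemperateGrowth' (f ε)) ∧
  ∀ l : ℕ, ∃ q N : ℕ, IsOEps (fun ε => mu (-(q:ℤ)) l (f ε)) (fun ε => ε ^ (-(N:ℤ)))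

def IsNtauNet {E : Type*} [NormedAddCommGroup E] [NormedSpace ℝ E] (f : ℝ → E → ℂ) : Prop :=
  (∀ ε ∈ Set.Ioc (0:ℝ) 1, TemperateGrowth' (f ε)) ∧
  ∀ l : ℕ, ∃ q : ℕ, ∀ p : ℕ, IsOEps (fun ε => mu (-(q:ℤ)) l (f ε)) (fun ε => ε ^ p)

noncomputable def scaled {d : ℕ} (ρ : (Fin d → ℝ) → ℂ) (t : ℝ) (x : Fin d → ℝ) : ℂ :=
  ((t ^ (-(d:ℤ)) : ℝ) : ℂ) * ρ (t⁻¹ • x)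

def IsMollifier {d : ℕ} (ρ : SchwartzMap (Fin d → ℝ) ℂ) : Prop :=
  (∫ x : Fin d → ℝ, ρ x) = 1 ∧
  ∀ α : Fin d → ℕ, α ≠ 0 → (∫ x : Fin d → ℝ, (∏ j, (x j : ℂ) ^ (α j)) * ρ x) = 0

def MemLa (a : ℝ) (N : ℕ → ℝ) : Prop :=
  (∀ l, 0 ≤ N l) ∧
  ((a = 0 ∧ Filter.Tendsto (fun l : ℕ => N l / (l:ℝ)) Filter.atTop (nhds 0)) ∨
   (0 < a ∧ Filter.limsup (fun l : ℕ => N l / (l:ℝ)) Filter.atTop < a))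

def IsESLNet {E : Type*} [NormedAddCommGroup E] [NormedSpace ℝ E]
    (a : ℝ) (f : ℝ → E → ℂ) : Prop :=
  (∀ ε ∈ Set.Ioc (0:ℝ) 1, SchwartzLike (f ε)) ∧
  ∃ N : ℕ → ℝ, MemLa a N ∧
    ∀ q l : ℕ, IsOEps (fun ε => mu (q:ℤ) l (f ε)) (fun ε => ε ^ (-(N l)))

def IsEtauLNet {E : Type*} [NormedAddCommGroup E] [NormedSpace ℝ E]
    (c : ℝ) (f : ℝ → E → ℂ) : Prop :=
  (∀ ε ∈ Set.Ioc (0:ℝ) 1, TemperateGrowth' (f ε)) ∧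
  ∃ N : ℕ → ℝ, MemLa c N ∧ ∃ q : ℕ, ∀ l : ℕ,
    IsOEps (fun ε => mu (-(q:ℤ)) l (f ε)) (fun ε => ε ^ (-(N l)))

def IsESinfNet {E : Type*} [NormedAddCommGroup E] [NormedSpace ℝ E] (f : ℝ → E → ℂ) : Prop :=
  (∀ ε ∈ Set.Ioc (0:ℝ) 1, SchwartzLike (f ε)) ∧
  ∃ N : ℕ, ∀ q l : ℕ, IsOEps (fun ε => mu (q:ℤ) l (f ε)) (fun ε => ε ^ (-(N:ℤ)))

def ModerateNetMaps (m n : ℕ)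
    (L : ℝ → SchwartzMap (Fin n → ℝ) ℂ → ((Fin m → ℝ) → ℂ)) : Prop :=
  (∀ ε ∈ Set.Ioc (0:ℝ) 1, ∀ f, TemperateGrowth' (L ε f)) ∧
  ∀ l : ℕ, ∃ C : ℝ → ℝ, (∀ ε, 0 ≤ C ε) ∧
    (∃ N : ℕ, ∃ C₀ > (0:ℝ), ∃ η > (0:ℝ), ∀ ε : ℝ, 0 < ε → ε ≤ η → C ε ≤ C₀ * ε ^ (-(N:ℤ))) ∧
    ∃ p q l' : ℕ, ∃ η > (0:ℝ), ∀ ε : ℝ, 0 < ε → ε ≤ η →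
      ∀ f : SchwartzMap (Fin n → ℝ) ℂ,
        mu (-(p:ℤ)) l (L ε f) ≤ ENNReal.ofReal (C ε) * mu (q:ℤ) l' ⇑f

def NegligibleNetMaps (m n : ℕ)
    (L : ℝ → SchwartzMap (Fin n → ℝ) ℂ → ((Fin m → ℝ) → ℂ)) : Prop :=
  (∀ ε ∈ Set.Ioc (0:ℝ) 1, ∀ f, TemperateGrowth' (L ε f)) ∧
  ∀ l : ℕ, ∃ C : ℝ → ℝ, (∀ ε, 0 ≤ C ε) ∧
    (∀ p' : ℕ, ∃ C₀ > (0:ℝ), ∃ η > (0:ℝ), ∀ ε : ℝ, 0 < ε → ε ≤ η → C ε ≤ C₀ * ε ^ p') ∧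
    ∃ p q l' : ℕ, ∃ η > (0:ℝ), ∀ ε : ℝ, 0 < ε → ε ≤ η →
      ∀ f : SchwartzMap (Fin n → ℝ) ℂ,
        mu (-(p:ℤ)) l (L ε f) ≤ ENNReal.ofReal (C ε) * mu (q:ℤ) l' ⇑f

def StronglyModerateWith (m n : ℕ)
    (L : ℝ → SchwartzMap (Fin n → ℝ) ℂ → ((Fin m → ℝ) → ℂ))
    (lam : ℕ → ℕ) (r : ℕ → ℝ) : Prop :=
  (∀ ε ∈ Set.Ioc (0:ℝ) 1, ∀ f, TemperateGrowth' (L ε f)) ∧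
  (∀ l, 0 ≤ r l) ∧
  ∀ l : ℕ, ∃ C ≥ (0:ℝ), ∃ p q : ℕ, ∃ η > (0:ℝ), ∀ ε : ℝ, 0 < ε → ε ≤ η →
    ∀ f : SchwartzMap (Fin n → ℝ) ℂ,
      mu (-(p:ℤ)) l (L ε f) ≤ ENNReal.ofReal (C * ε ^ (-(r l))) * mu (q:ℤ) (lam l) ⇑f

def ContinuousIntoOM (m n : ℕ) (L : SchwartzMap (Fin n → ℝ) ℂ → ((Fin m → ℝ) → ℂ)) : Prop :=
  ∀ l : ℕ, ∃ C ≥ (0:ℝ), ∃ p q l' : ℕ, ∀ f,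
    mu (-(p:ℤ)) l (L f) ≤ ENNReal.ofReal C * mu (q:ℤ) l' ⇑f

noncomputable def muOn {d : ℕ} (Ω : Set (Fin d → ℝ)) (r : ℤ) (l : ℕ)
    (f : (Fin d → ℝ) → ℂ) : ENNReal :=
  ⨆ (x : Ω) (i : ℕ) (_ : i ≤ l),
    ENNReal.ofReal ((1 + ‖(x : Fin d → ℝ)‖) ^ r * ‖iteratedFDerivWithin ℝ i f Ω (x : Fin d → ℝ)‖)

def IsBox {d : ℕ} (Ω : Set (Fin d → ℝ)) : Prop :=
  ∃ I : Fin d → Set ℝ, (∀ j, IsOpen (I j) ∧ Convex ℝ (I j)) ∧ Ω = Set.univ.pi I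

def IsRegularSet (R : Set (ℕ → ℝ)) : Prop :=
  R.Nonempty ∧ (∀ N ∈ R, ∀ n, 0 ≤ N n) ∧
  (∀ N ∈ R, ∀ k : ℕ, ∃ N' ∈ R, ∀ n, N n + k ≤ N' n) ∧
  (∀ N₁ ∈ R, ∀ N₂ ∈ R, ∃ N ∈ R, ∀ n, max (N₁ n) (N₂ n) ≤ N n) ∧
  (∀ N₁ ∈ R, ∀ N₂ ∈ R, ∃ N ∈ R, ∀ l₁ l₂ : ℕ, N₁ l₁ + N₂ l₂ ≤ N (l₁ + l₂))

def IsESRNet {E : Type*} [NormedAddCommGroup E] [NormedSpace ℝ E]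
    (R : Set (ℕ → ℝ)) (f : ℝ → E → ℂ) : Prop :=
  (∀ ε ∈ Set.Ioc (0:ℝ) 1, SchwartzLike (f ε)) ∧
  ∃ N ∈ R, ∀ q l : ℕ, IsOEps (fun ε => mu (q:ℤ) l (f ε)) (fun ε => ε ^ (-(N l)))

def IsEtauRNet {E : Type*} [NormedAddCommGroup E] [NormedSpace ℝ E]
    (R : Set (ℕ → ℝ)) (f : ℝ → E → ℂ) : Prop :=
  (∀ ε ∈ Set.Ioc (0:ℝ) 1, TemperateGrowth' (f ε)) ∧
  ∃ N ∈ R, ∃ q : ℕ, ∀ l : ℕ,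
    IsOEps (fun ε => mu (-(q:ℤ)) l (f ε)) (fun ε => ε ^ (-(N l)))

noncomputable def pderiv' {d : ℕ} (j : Fin d) (f : (Fin d → ℝ) → ℂ) : (Fin d → ℝ) → ℂ :=
  fun x => fderiv ℝ f x (Pi.single j 1)

noncomputable def multiDeriv {d : ℕ} : List (Fin d) → ((Fin d → ℝ) → ℂ) → ((Fin d → ℝ) → ℂ)
  | [], f => f
  | j :: js, f => pderiv' j (multiDeriv js f)

/-! The kernel comes from a Gabor expansion. Cutting a Schwartz function `f` with a smooth partition
of unity indexed by the lattice `(ℤ/4)ⁿ` and expanding each piece into a Fourier series gives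
`f = ∑ᵢ (∫ gᵢ f) hᵢ`, where `gᵢ`, `hᵢ` are time-frequency shifts of two fixed functions. Their
seminorms grow polynomially in the size `wᵢ` of the shift, whereas the coefficients `∫ gᵢ f` decay
faster than any power of `wᵢ`, with a constant that is a seminorm of `f`.

Put `H_ε(x, y) = ∑_{wᵢ ≤ 1/ε} L_ε(hᵢ)(x) gᵢ(y)`. The sum has polynomially many terms in `1/ε`, each
polynomially bounded, hence `H` is moderate. It represents `L_ε` applied to the truncated expansion
of `f_ε`, and the tail is at most `ε^P` times a seminorm of `f_ε` that depends on `P`. On `E_S^∞`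
the growth exponent of `f_ε` is the same for all seminorms, so the error is negligible. -/

noncomputable section

open scoped FourierTransform SchwartzMap ENNReal NNReal Topology ContDiff

section Weight

variable {E : Type*} [NormedAddCommGroup E]

theorem one_add_enorm_ne_zero (x : E) : 1 + ‖x‖ₑ ≠ 0 := by simp

theorem one_add_enorm_ne_top (x : E) : 1 + ‖x‖ₑ ≠ ⊤ := by simp

theorem one_add_enorm_le_mul (x b : E) : 1 + ‖x‖ₑ ≤ (1 + ‖x - b‖ₑ) * (1 + ‖b‖ₑ) := by
  calc 1 + ‖x‖ₑ ≤ 1 + (‖x - b‖ₑ + ‖b‖ₑ) := by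
        gcongr
        simpa using enorm_add_le (x - b) b
    _ ≤ 1 + (‖x - b‖ₑ + ‖b‖ₑ) + ‖x - b‖ₑ * ‖b‖ₑ := le_self_add
    _ = (1 + ‖x - b‖ₑ) * (1 + ‖b‖ₑ) := by ring

theorem ofReal_one_add_norm_zpow (x : E) (r : ℤ) :
    ENNReal.ofReal ((1 + ‖x‖) ^ r) = (1 + ‖x‖ₑ) ^ r := by
  have hx : ENNReal.ofReal (1 + ‖x‖) = 1 + ‖x‖ₑ := by
    rw [ENNReal.ofReal_add zero_le_one (norm_nonneg x), ENNReal.ofReal_one, ofReal_norm]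
  cases r with
  | ofNat n => simp [ENNReal.ofReal_pow (show 0 ≤ 1 + ‖x‖ by positivity), hx]
  | negSucc n =>
    rw [zpow_negSucc, zpow_negSucc, ENNReal.ofReal_inv_of_pos (by positivity),
      ENNReal.ofReal_pow (by positivity), hx]

end Weight

section Mu

variable {E E' : Type*} [NormedAddCommGroup E] [NormedSpace ℝ E] [NormedAddCommGroup E']
  [NormedSpace ℝ E'] {r s : ℤ} {l : ℕ} {f g : E → ℂ}

theorem mul_mu_le_iff {c C : ℝ≥0∞} : c * mu r l f ≤ C ↔
    ∀ i ≤ l, ∀ x, c * ((1 + ‖x‖ₑ) ^ r * ‖iteratedFDeriv ℝ i f x‖ₑ) ≤ C := by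
  have h (x : E) (i : ℕ) : ENNReal.ofReal ((1 + ‖x‖) ^ r * ‖iteratedFDeriv ℝ i f x‖) =
      (1 + ‖x‖ₑ) ^ r * ‖iteratedFDeriv ℝ i f x‖ₑ := by
    rw [ENNReal.ofReal_mul (by positivity), ofReal_one_add_norm_zpow, ofReal_norm]
  simp only [mu, h, ENNReal.mul_iSup, iSup_le_iff]
  exact ⟨fun h i hi x => h x i hi, fun h x i hi => h i hi x⟩

theorem mu_le_iff {C : ℝ≥0∞} :
    mu r l f ≤ C ↔ ∀ i ≤ l, ∀ x, (1 + ‖x‖ₑ) ^ r * ‖iteratedFDeriv ℝ i f x‖ₑ ≤ C := by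
  simpa only [one_mul] using mul_mu_le_iff (c := 1)

theorem weight_mul_le_mu (r : ℤ) {i : ℕ} (hi : i ≤ l) (f : E → ℂ) (x : E) :
    (1 + ‖x‖ₑ) ^ r * ‖iteratedFDeriv ℝ i f x‖ₑ ≤ mu r l f :=
  mu_le_iff.1 le_rfl i hi x

theorem enorm_iteratedFDeriv_le_mu {i : ℕ} (hi : i ≤ l) (f : E → ℂ) (x : E) :
    ‖iteratedFDeriv ℝ i f x‖ₑ ≤ mu 0 l f := by
  simpa using weight_mul_le_mu 0 hi f x

theorem mu_mono {r' : ℤ} {l' : ℕ} (hr : r ≤ r') (hl : l ≤ l') : mu r l f ≤ mu r' l' f :=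
  mu_le_iff.2 fun _ hi x => (mul_le_mul_left (ENNReal.zpow_le_of_le le_self_add hr) _).trans
    (weight_mul_le_mu r' (hi.trans hl) f x)

theorem mu_const_mul_le (c : ℂ) (hf : ContDiff ℝ ∞ f) :
    mu r l (fun x => c * f x) ≤ ‖c‖ₑ * mu r l f := by
  refine mu_le_iff.2 fun i hi x => ?_
  have hderiv : iteratedFDeriv ℝ i (fun x => c * f x) x = c • iteratedFDeriv ℝ i f x :=
    iteratedFDeriv_const_smul_apply (a := c) (hf.of_le (by exact_mod_cast le_top)).contDiffAt
  rw [hderiv, enorm_smul, mul_left_comm]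
  gcongr
  exact weight_mul_le_mu r hi f x

theorem mu_sum_le {ι : Type*} (t : Finset ι) {u : ι → E → ℂ} (hu : ∀ i ∈ t, ContDiff ℝ ∞ (u i)) :
    mu r l (fun x => ∑ i ∈ t, u i x) ≤ ∑ i ∈ t, mu r l (u i) := by
  refine mu_le_iff.2 fun k hk x => ?_
  rw [iteratedFDeriv_fun_sum_apply fun i hi =>
    ((hu i hi).of_le (by exact_mod_cast le_top)).contDiffAt]
  calc (1 + ‖x‖ₑ) ^ r * ‖∑ i ∈ t, iteratedFDeriv ℝ k (u i) x‖ₑ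
      ≤ (1 + ‖x‖ₑ) ^ r * ∑ i ∈ t, ‖iteratedFDeriv ℝ k (u i) x‖ₑ := by
        gcongr
        exact enorm_sum_le t fun i => iteratedFDeriv ℝ k (u i) x
    _ = ∑ i ∈ t, (1 + ‖x‖ₑ) ^ r * ‖iteratedFDeriv ℝ k (u i) x‖ₑ := Finset.mul_sum ..
    _ ≤ ∑ i ∈ t, mu r l (u i) := Finset.sum_le_sum fun i _ => weight_mul_le_mu r hk (u i) x

theorem enorm_iteratedFDeriv_mul_le (hf : ContDiff ℝ ∞ f) (hg : ContDiff ℝ ∞ g) (x : E) (i : ℕ) :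
    ‖iteratedFDeriv ℝ i (fun y => f y * g y) x‖ₑ ≤ ∑ j ∈ Finset.range (i + 1),
      (i.choose j : ℝ≥0∞) * ‖iteratedFDeriv ℝ j f x‖ₑ * ‖iteratedFDeriv ℝ (i - j) g x‖ₑ := by
  have h := norm_iteratedFDeriv_mul_le hf hg x (n := i) (by exact_mod_cast le_top)
  simp only [enorm_eq_nnnorm]
  norm_cast
  rw [← NNReal.coe_le_coe]
  push_cast
  exact h

theorem mu_mul_le (hf : ContDiff ℝ ∞ f) (hg : ContDiff ℝ ∞ g) :
    mu (r + s) l (fun x => f x * g x) ≤ 2 ^ l * (mu r l f * mu s l g) := by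
  refine mu_le_iff.2 fun i hi x => ?_
  rw [ENNReal.zpow_add (one_add_enorm_ne_zero x) (one_add_enorm_ne_top x)]
  calc (1 + ‖x‖ₑ) ^ r * (1 + ‖x‖ₑ) ^ s * ‖iteratedFDeriv ℝ i (fun x => f x * g x) x‖ₑ
      ≤ (1 + ‖x‖ₑ) ^ r * (1 + ‖x‖ₑ) ^ s * ∑ j ∈ Finset.range (i + 1),
          (i.choose j : ℝ≥0∞) * ‖iteratedFDeriv ℝ j f x‖ₑ * ‖iteratedFDeriv ℝ (i - j) g x‖ₑ := by
        gcongr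
        exact enorm_iteratedFDeriv_mul_le hf hg x i
    _ = ∑ j ∈ Finset.range (i + 1), (i.choose j : ℝ≥0∞) *
          (((1 + ‖x‖ₑ) ^ r * ‖iteratedFDeriv ℝ j f x‖ₑ) *
            ((1 + ‖x‖ₑ) ^ s * ‖iteratedFDeriv ℝ (i - j) g x‖ₑ)) := by
        rw [Finset.mul_sum]
        exact Finset.sum_congr rfl fun j _ => by ring
    _ ≤ ∑ j ∈ Finset.range (i + 1), (i.choose j : ℝ≥0∞) * (mu r l f * mu s l g) := by
        gcongr with j hj
        · exact weight_mul_le_mu r ((Finset.mem_range_succ_iff.1 hj).trans hi) f x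
        · exact weight_mul_le_mu s ((Nat.sub_le i j).trans hi) g x
    _ = 2 ^ i * (mu r l f * mu s l g) := by
        rw [← Finset.sum_mul, ← Nat.cast_sum, Nat.sum_range_choose, Nat.cast_pow, Nat.cast_ofNat]
    _ ≤ 2 ^ l * (mu r l f * mu s l g) := by
        gcongr
        norm_num

theorem enorm_iteratedFDeriv_comp_clm_le (T : E →L[ℝ] E') {f : E' → ℂ} (hf : ContDiff ℝ ∞ f)
    (i : ℕ) (x : E) :
    ‖iteratedFDeriv ℝ i (fun y => f (T y)) x‖ₑ ≤ ‖iteratedFDeriv ℝ i f (T x)‖ₑ * ‖T‖ₑ ^ i := by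
  have hcomp : iteratedFDeriv ℝ i (fun y => f (T y)) x =
      (iteratedFDeriv ℝ i f (T x)).compContinuousLinearMap fun _ => T :=
    T.iteratedFDeriv_comp_right hf x (by exact_mod_cast le_top)
  have h := ContinuousMultilinearMap.norm_compContinuousLinearMap_le
    (iteratedFDeriv ℝ i f (T x)) fun _ => T
  simp only [hcomp, enorm_eq_nnnorm]
  norm_cast
  simpa [← NNReal.coe_le_coe] using h

theorem mu_comp_clm_le {T : E →L[ℝ] E'} (hT : ‖T‖ₑ ≤ 1) {f : E' → ℂ} (hf : ContDiff ℝ ∞ f)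
    (hr : r ≤ 0) (l : ℕ) : mu r l (fun x => f (T x)) ≤ mu r l f := by
  refine mu_le_iff.2 fun i hi x => ?_
  have hweight : (1 + ‖x‖ₑ) ^ r ≤ (1 + ‖T x‖ₑ) ^ r := by
    obtain ⟨p, rfl⟩ := Int.exists_eq_neg_ofNat hr
    rw [ENNReal.zpow_neg, ENNReal.zpow_neg, ENNReal.inv_le_inv, zpow_natCast, zpow_natCast]
    gcongr
    exact (T.le_opENorm x).trans (mul_le_of_le_one_left' hT)
  have hderiv : ‖iteratedFDeriv ℝ i (fun y => f (T y)) x‖ₑ ≤ ‖iteratedFDeriv ℝ i f (T x)‖ₑ :=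
    (enorm_iteratedFDeriv_comp_clm_le T hf i x).trans (mul_le_of_le_one_right' (pow_le_one' hT i))
  exact (mul_le_mul' hweight hderiv).trans (weight_mul_le_mu r hi f (T x))

theorem mu_comp_fst_le (hf : ContDiff ℝ ∞ f) (hr : r ≤ 0) (l : ℕ) :
    mu r l (fun z : E × E' => f z.1) ≤ mu r l f :=
  mu_comp_clm_le (enorm_le_coe.2 (ContinuousLinearMap.norm_fst_le ℝ E E')) hf hr l

theorem mu_comp_snd_le {f : E' → ℂ} (hf : ContDiff ℝ ∞ f) (hr : r ≤ 0) (l : ℕ) :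
    mu r l (fun z : E × E' => f z.2) ≤ mu r l f :=
  mu_comp_clm_le (enorm_le_coe.2 (ContinuousLinearMap.norm_snd_le ℝ E E')) hf hr l

theorem mu_comp_sub_le (q l : ℕ) (f : E → ℂ) (b : E) :
    mu q l (fun x => f (x - b)) ≤ (1 + ‖b‖ₑ) ^ q * mu q l f := by
  refine mu_le_iff.2 fun i hi x => ?_
  rw [iteratedFDeriv_comp_sub, zpow_natCast]
  calc (1 + ‖x‖ₑ) ^ q * ‖iteratedFDeriv ℝ i f (x - b)‖ₑ
      ≤ ((1 + ‖x - b‖ₑ) * (1 + ‖b‖ₑ)) ^ q * ‖iteratedFDeriv ℝ i f (x - b)‖ₑ := by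
        gcongr
        exact one_add_enorm_le_mul x b
    _ = (1 + ‖b‖ₑ) ^ q * ((1 + ‖x - b‖ₑ) ^ (q : ℤ) * ‖iteratedFDeriv ℝ i f (x - b)‖ₑ) := by
        rw [zpow_natCast, mul_pow]
        ring
    _ ≤ (1 + ‖b‖ₑ) ^ q * mu q l f := by
        gcongr
        exact weight_mul_le_mu q hi f (x - b)

theorem weight_mul_mu_comp_add_le (M l : ℕ) (f : E → ℂ) (b : E) :
    (1 + ‖b‖ₑ) ^ M * mu (-M) l (fun x => f (x + b)) ≤ mu M l f := by
  refine mul_mu_le_iff.2 fun i hi x => ?_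
  have hb : (1 + ‖b‖ₑ) ^ M ≤ (1 + ‖x + b‖ₑ) ^ M * (1 + ‖x‖ₑ) ^ M := by
    rw [← mul_pow]
    gcongr
    simpa [add_comm b x] using one_add_enorm_le_mul b (-x)
  calc (1 + ‖b‖ₑ) ^ M * ((1 + ‖x‖ₑ) ^ (-M : ℤ) * ‖iteratedFDeriv ℝ i (fun x => f (x + b)) x‖ₑ)
      = (1 + ‖b‖ₑ) ^ M / (1 + ‖x‖ₑ) ^ M * ‖iteratedFDeriv ℝ i f (x + b)‖ₑ := by
        rw [iteratedFDeriv_comp_add_right, ENNReal.zpow_neg, zpow_natCast, div_eq_mul_inv,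
          mul_assoc]
    _ ≤ (1 + ‖x + b‖ₑ) ^ (M : ℤ) * ‖iteratedFDeriv ℝ i f (x + b)‖ₑ := by
        rw [zpow_natCast]
        gcongr
        exact ENNReal.div_le_of_le_mul hb
    _ ≤ mu M l f := weight_mul_le_mu M hi f (x + b)

theorem hasSum_iteratedFDeriv {ι : Type*} {u : ι → E → ℂ} (hu : ∀ i, ContDiff ℝ ∞ (u i))
    (hf : ∀ x, HasSum (fun i => u i x) (f x)) (hmu : ∑' i, mu 0 l (u i) ≠ ⊤) {k : ℕ} (hk : k ≤ l)
    (x : E) : HasSum (fun i => iteratedFDeriv ℝ k (u i) x) (iteratedFDeriv ℝ k f x) := by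
  have hsum : Summable fun i => (mu 0 l (u i)).toReal := ENNReal.summable_toReal hmu
  have hbound (k : ℕ) (i : ι) (x : E) (hk : (k : ℕ∞) ≤ l) :
      ‖iteratedFDeriv ℝ k (u i) x‖ ≤ (mu 0 l (u i)).toReal := by
    rw [← toReal_enorm]
    exact ENNReal.toReal_mono (ENNReal.ne_top_of_tsum_ne_top hmu i)
      (enorm_iteratedFDeriv_le_mu (by exact_mod_cast hk) (u i) x)
  have hkl : (k : ℕ∞) ≤ l := by exact_mod_cast hk
  obtain rfl : f = fun x => ∑' i, u i x := funext fun x => (hf x).tsum_eq.symm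
  rw [iteratedFDeriv_tsum_apply (N := l) (fun i => (hu i).of_le (by exact_mod_cast le_top))
    (fun _ _ => hsum) hbound hkl x]
  exact (Summable.of_norm_bounded hsum fun i => hbound k i x hkl).hasSum

theorem mu_le_tsum_mu {ι : Type*} {u : ι → E → ℂ} (hu : ∀ i, ContDiff ℝ ∞ (u i))
    (hf : ∀ x, HasSum (fun i => u i x) (f x)) (hr : 0 ≤ r) (l : ℕ) :
    mu r l f ≤ ∑' i, mu r l (u i) := by
  rcases eq_or_ne (∑' i, mu r l (u i)) ⊤ with htop | hfin
  · simp [htop]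
  have hfin₀ : ∑' i, mu 0 l (u i) ≠ ⊤ :=
    ne_top_of_le_ne_top hfin (ENNReal.tsum_le_tsum fun i => mu_mono hr le_rfl)
  refine mu_le_iff.2 fun k hk x => ?_
  calc (1 + ‖x‖ₑ) ^ r * ‖iteratedFDeriv ℝ k f x‖ₑ
      = (1 + ‖x‖ₑ) ^ r * ‖∑' i, iteratedFDeriv ℝ k (u i) x‖ₑ := by
        rw [(hasSum_iteratedFDeriv hu hf hfin₀ hk x).tsum_eq]
    _ ≤ (1 + ‖x‖ₑ) ^ r * ∑' i, ‖iteratedFDeriv ℝ k (u i) x‖ₑ := by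
        gcongr
        exact enorm_tsum_le_tsum_enorm (f := fun i => iteratedFDeriv ℝ k (u i) x)
    _ = ∑' i, (1 + ‖x‖ₑ) ^ r * ‖iteratedFDeriv ℝ k (u i) x‖ₑ := ENNReal.tsum_mul_left.symm
    _ ≤ ∑' i, mu r l (u i) := ENNReal.tsum_le_tsum fun i => weight_mul_le_mu r hk (u i) x

end Mu

section TemperateGrowth

variable {E : Type*} [NormedAddCommGroup E] [NormedSpace ℝ E] {r : ℤ} {l : ℕ} {f : E → ℂ}

theorem mu_lt_top_iff :
    mu r l f < ⊤ ↔ ∃ C : ℝ, ∀ i ≤ l, ∀ x, (1 + ‖x‖) ^ r * ‖iteratedFDeriv ℝ i f x‖ ≤ C := by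
  constructor
  · refine fun h => ⟨(mu r l f).toReal, fun i hi x => (ENNReal.ofReal_le_iff_le_toReal h.ne).1 ?_⟩
    exact le_iSup_of_le x (le_iSup₂_of_le i hi le_rfl)
  · rintro ⟨C, hC⟩
    refine lt_of_le_of_lt ?_ (ENNReal.ofReal_lt_top (r := C))
    exact iSup_le fun x => iSup₂_le fun i hi => ENNReal.ofReal_le_ofReal (hC i hi x)

theorem mu_schwartzMap_ne_top (q l : ℕ) (φ : 𝓢(E, ℂ)) : mu q l φ ≠ ⊤ := by
  refine (mu_lt_top_iff.2 ⟨2 ^ q * ((Finset.Iic (q, l)).sup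
    fun m => SchwartzMap.seminorm ℝ m.1 m.2) φ, fun i hi x => ?_⟩).ne
  rw [zpow_natCast]
  exact SchwartzMap.one_add_le_sup_seminorm_apply (𝕜 := ℝ) (m := (q, l)) le_rfl hi φ x

theorem temperateGrowth'_iff_hasTemperateGrowth : TemperateGrowth' f ↔ f.HasTemperateGrowth := by
  have hweight (C a : ℝ) (q : ℕ) (x : E) :
      (1 + ‖x‖) ^ (-q : ℤ) * a ≤ C ↔ a ≤ C * (1 + ‖x‖) ^ q := by
    rw [zpow_neg, zpow_natCast, inv_mul_le_iff₀ (by positivity), mul_comm]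
  simp only [TemperateGrowth', mu_lt_top_iff, hweight]
  constructor
  · refine fun ⟨hf, h⟩ => ⟨hf, fun l => ?_⟩
    obtain ⟨q, C, hC⟩ := h l
    exact ⟨q, C, hC l le_rfl⟩
  · refine fun hf => ⟨hf.1, fun l => ?_⟩
    obtain ⟨q, C, -, hC⟩ := hf.norm_iteratedFDeriv_le_uniform l
    exact ⟨q, C, hC⟩

end TemperateGrowth

section Asymptotics

variable {g : ℝ → ℝ≥0∞}

theorem isOEps_iff_eventually_le {h : ℝ → ℝ} :
    IsOEps g h ↔ ∃ C : ℝ≥0, ∀ᶠ ε in 𝓝[>] 0, g ε ≤ C * ENNReal.ofReal (h ε) := by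
  have heventually (C : ℝ≥0) : (∀ᶠ ε in 𝓝[>] 0, g ε ≤ C * ENNReal.ofReal (h ε)) ↔
      ∃ η > (0 : ℝ), ∀ ε, 0 < ε → ε ≤ η → g ε ≤ ENNReal.ofReal (C * h ε) := by
    rw [(nhdsGT_basis_Ioc (0 : ℝ)).eventually_iff]
    simp only [Set.mem_Ioc, and_imp, ENNReal.ofReal_mul C.coe_nonneg, ENNReal.ofReal_coe_nnreal,
      gt_iff_lt]
  simp only [heventually]
  constructor
  · rintro ⟨C, hC, η, hη, h⟩
    exact ⟨⟨C, hC.le⟩, η, hη, h⟩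
  · rintro ⟨C, η, hη, h⟩
    have hC : (0 : ℝ) < C + 1 := by positivity
    refine ⟨C + 1, hC, η, hη, fun ε hε hεη => (h ε hε hεη).trans ?_⟩
    rw [ENNReal.ofReal_mul C.coe_nonneg, ENNReal.ofReal_mul hC.le]
    gcongr
    simp

theorem ofReal_zpow_neg_natCast {ε : ℝ} (hε : 0 < ε) (N : ℕ) :
    ENNReal.ofReal (ε ^ (-(N : ℤ))) = ((ε.toNNReal⁻¹ : ℝ≥0) : ℝ≥0∞) ^ N := by
  rw [zpow_neg, zpow_natCast, ← inv_pow, ENNReal.ofReal_pow (inv_nonneg.2 hε.le),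
    ENNReal.ofReal, Real.toNNReal_inv]

theorem isOEps_zpow_neg_iff {N : ℕ} : IsOEps g (fun ε => ε ^ (-(N : ℤ))) ↔
    ∃ C : ℝ≥0, ∀ᶠ ε in 𝓝[>] 0, g ε ≤ C * ((ε.toNNReal⁻¹ : ℝ≥0) : ℝ≥0∞) ^ N := by
  rw [isOEps_iff_eventually_le]
  refine exists_congr fun C => eventually_congr (eventually_mem_nhdsWithin.mono fun ε hε => ?_)
  rw [ofReal_zpow_neg_natCast hε]

theorem isOEps_pow_iff {P : ℕ} : IsOEps g (fun ε => ε ^ P) ↔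
    ∃ C : ℝ≥0, ∀ᶠ ε in 𝓝[>] 0, ((ε.toNNReal⁻¹ : ℝ≥0) : ℝ≥0∞) ^ P * g ε ≤ C := by
  rw [isOEps_iff_eventually_le]
  refine exists_congr fun C => eventually_congr (eventually_mem_nhdsWithin.mono fun ε hε => ?_)
  have hpos : 0 < ε := hε
  have hpow : ENNReal.ofReal (ε ^ P) = (((ε.toNNReal⁻¹ : ℝ≥0) : ℝ≥0∞) ^ P)⁻¹ := by
    rw [← ofReal_zpow_neg_natCast hpos, ← ENNReal.ofReal_inv_of_pos (zpow_pos hpos _), zpow_neg,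
      inv_inv, zpow_natCast]
  rw [hpow, mul_comm, ENNReal.mul_le_iff_le_inv] <;> simp [hpos]

theorem exists_mu_le_of_moderateNetMaps {m n : ℕ}
    {L : ℝ → 𝓢(Fin n → ℝ, ℂ) → ((Fin m → ℝ) → ℂ)} (hL : ModerateNetMaps m n L) (l : ℕ) :
    ∃ (p q l' N : ℕ) (C : ℝ≥0), ∀ᶠ ε in 𝓝[>] 0, ∀ f, mu (-(p : ℤ)) l (L ε f) ≤
      C * ((ε.toNNReal⁻¹ : ℝ≥0) : ℝ≥0∞) ^ N * mu q l' f := by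
  obtain ⟨D, -, ⟨N, C, hC, η, hη, hD⟩, p, q, l', η', hη', h⟩ := hL.2 l
  refine ⟨p, q, l', N, C.toNNReal, ?_⟩
  filter_upwards [Ioc_mem_nhdsGT hη, Ioc_mem_nhdsGT hη'] with ε hε hε' f
  refine (h ε hε'.1 hε'.2 f).trans ?_
  gcongr
  rw [← ofReal_zpow_neg_natCast hε.1, ← ENNReal.ofReal, ← ENNReal.ofReal_mul hC.le]
  exact ENNReal.ofReal_le_ofReal (hD ε hε.1 hε.2)

end Asymptotics

section Character

variable {n : ℕ}

/-- The standard scalar product of `ℝⁿ` as a continuous bilinear form. -/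
def dotBilin (n : ℕ) : (Fin n → ℝ) →L[ℝ] (Fin n → ℝ) →L[ℝ] ℝ :=
  ∑ i, (ContinuousLinearMap.proj (R := ℝ) (φ := fun _ : Fin n => ℝ) i).smulRight
    (ContinuousLinearMap.proj (R := ℝ) (φ := fun _ : Fin n => ℝ) i)

theorem dotBilin_apply (v w : Fin n → ℝ) : dotBilin n v w = ∑ i, v i * w i := by
  simp [dotBilin]

theorem norm_intCast_pi (k : Fin n → ℤ) : ‖fun i => (k i : ℝ)‖ = ‖k‖ := by
  have h (i : Fin n) : ‖(k i : ℝ)‖₊ = ‖k i‖₊ := NNReal.eq (Int.norm_cast_real _)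
  simp only [Pi.norm_def, h]

/-- The character `z ↦ exp (2πi k·z)` of `ℝⁿ` attached to an integer vector `k`; it is the
one-variable exponential composed with the linear form `k·z`. -/
def intChar (k : Fin n → ℤ) (z : Fin n → ℝ) : ℂ :=
  Complex.exp (2 * Real.pi * Complex.I * dotBilin n (fun i => (k i : ℝ)) z)

theorem contDiff_cexp_mul_ofReal (c : ℂ) : ContDiff ℝ ∞ fun t : ℝ => Complex.exp (c * t) :=
  (contDiff_const.mul Complex.ofRealCLM.contDiff).cexp

theorem iteratedDeriv_cexp_mul_ofReal (c : ℂ) (i : ℕ) :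
    iteratedDeriv i (fun t : ℝ => Complex.exp (c * t)) =
      fun t : ℝ => c ^ i * Complex.exp (c * t) := by
  induction i with
  | zero => simp
  | succ i ih =>
    rw [iteratedDeriv_succ, ih]
    ext t
    have h : HasDerivAt (fun t : ℝ => c * (t : ℂ)) (c * 1) t :=
      (Complex.ofRealCLM.hasDerivAt (x := t)).const_mul c
    rw [((h.cexp).const_mul (c ^ i)).deriv]
    ring

theorem contDiff_intChar (k : Fin n → ℤ) : ContDiff ℝ ∞ (intChar k) :=
  (contDiff_cexp_mul_ofReal _).comp (dotBilin n _).contDiff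

theorem enorm_iteratedFDeriv_intChar_le (k : Fin n → ℤ) (i : ℕ) (z : Fin n → ℝ) :
    ‖iteratedFDeriv ℝ i (intChar k) z‖ₑ ≤
      (‖(2 * Real.pi * Complex.I : ℂ)‖ₑ * (‖dotBilin n‖ₑ * ‖k‖ₑ)) ^ i := by
  have hdot : ‖dotBilin n fun i => (k i : ℝ)‖ₑ ≤ ‖dotBilin n‖ₑ * ‖k‖ₑ := by
    rw [← ofReal_norm k, ← norm_intCast_pi, ofReal_norm]
    exact (dotBilin n).le_opENorm _
  have hexp (t : ℝ) : ‖Complex.exp (2 * Real.pi * Complex.I * t)‖ₑ = 1 := by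
    rw [show (2 * Real.pi * Complex.I * t : ℂ) = (2 * Real.pi * t : ℝ) * Complex.I by
      push_cast; ring, ← ofReal_norm, Complex.norm_exp_ofReal_mul_I, ENNReal.ofReal_one]
  calc ‖iteratedFDeriv ℝ i (intChar k) z‖ₑ
      ≤ ‖iteratedFDeriv ℝ i (fun t : ℝ => Complex.exp (2 * Real.pi * Complex.I * t))
          (dotBilin n (fun i => (k i : ℝ)) z)‖ₑ * ‖dotBilin n fun i => (k i : ℝ)‖ₑ ^ i :=
        enorm_iteratedFDeriv_comp_clm_le _ (contDiff_cexp_mul_ofReal _) i z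
    _ = (‖(2 * Real.pi * Complex.I : ℂ)‖ₑ * ‖dotBilin n fun i => (k i : ℝ)‖ₑ) ^ i := by
        rw [← ofReal_norm, norm_iteratedFDeriv_eq_norm_iteratedDeriv, ofReal_norm,
          iteratedDeriv_cexp_mul_ofReal, enorm_mul, enorm_pow, hexp, mul_one, mul_pow]
    _ ≤ (‖(2 * Real.pi * Complex.I : ℂ)‖ₑ * (‖dotBilin n‖ₑ * ‖k‖ₑ)) ^ i := by gcongr

theorem exists_mu_intChar_le (n l : ℕ) :
    ∃ C : ℝ≥0, ∀ k : Fin n → ℤ, mu 0 l (intChar k) ≤ C * (1 + ‖k‖ₑ) ^ l := by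
  set c : ℝ≥0 := ‖(2 * Real.pi * Complex.I : ℂ)‖₊ * ‖dotBilin n‖₊ with hc
  refine ⟨(1 + c) ^ l, fun k => mu_le_iff.2 fun i hi z => ?_⟩
  rw [zpow_zero, one_mul]
  calc ‖iteratedFDeriv ℝ i (intChar k) z‖ₑ ≤ (c * ‖k‖ₑ) ^ i := by
        simpa only [hc, ENNReal.coe_mul, mul_assoc, enorm_eq_nnnorm] using
          enorm_iteratedFDeriv_intChar_le k i z
    _ ≤ ((1 + c) * (1 + ‖k‖ₑ)) ^ i := by gcongr <;> exact le_add_self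
    _ ≤ ((1 + c) * (1 + ‖k‖ₑ)) ^ l :=
        pow_le_pow_right' (one_le_mul le_self_add le_self_add) hi
    _ = ((1 + c) ^ l : ℝ≥0) * (1 + ‖k‖ₑ) ^ l := by push_cast; rw [mul_pow]

theorem hasTemperateGrowth_intChar (k : Fin n → ℤ) : (intChar k).HasTemperateGrowth := by
  refine temperateGrowth'_iff_hasTemperateGrowth.1 ⟨contDiff_intChar k, fun l => ⟨0, ?_⟩⟩
  obtain ⟨C, hC⟩ := exists_mu_intChar_le n l
  exact (hC k).trans_lt (by simp [ENNReal.mul_lt_top])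

theorem mFourier_coe_eq_intChar (k : Fin n → ℤ) (z : Fin n → ℝ) :
    UnitAddTorus.mFourier k (fun i => (z i : UnitAddCircle)) = intChar k z := by
  simp only [UnitAddTorus.mFourier, ContinuousMap.coe_mk, fourier_coe_apply, intChar,
    dotBilin_apply, ← Complex.exp_sum]
  congr 1
  push_cast
  rw [Finset.mul_sum]
  refine Finset.sum_congr rfl fun i _ => ?_
  simp only [div_one]
  ring

theorem fourierIntegral_dotBilin_intCast (F : (Fin n → ℝ) → ℂ) (k : Fin n → ℤ) :
    VectorFourier.fourierIntegral 𝐞 volume (dotBilin n).toLinearMap₁₂ F (fun i => (k i : ℝ)) =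
      ∫ u, intChar (-k) u * F u := by
  refine integral_congr_ae (.of_forall fun u => ?_)
  have hdot : dotBilin n (fun i => ((-k) i : ℝ)) u = -dotBilin n u fun i => (k i : ℝ) := by
    simp [dotBilin_apply, mul_comm]
  simp only [Circle.smul_def, Real.fourierChar_apply, smul_eq_mul, intChar, hdot,
    ContinuousLinearMap.toLinearMap₁₂_apply_apply_apply]
  congr 2
  push_cast
  ring

end Character

section FourierSeries

variable {n : ℕ} {g : (Fin n → ℝ) → ℂ}

/-- The fundamental box `(-1/2, 1/2]ⁿ` of the torus `ℝⁿ/ℤⁿ`. -/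
def unitBox (n : ℕ) : Set (Fin n → ℝ) :=
  {x | ∀ i, x i ∈ Set.Ioc (-(1 / 2) : ℝ) (-(1 / 2) + 1)}

/-- The representative in `unitBox` of a point of the torus. -/
def torusLift (θ : UnitAddTorus (Fin n)) : Fin n → ℝ :=
  fun i => AddCircle.equivIoc (1 : ℝ) (-(1 / 2)) (θ i)

theorem mem_unitBox_of_norm_lt {x : Fin n → ℝ} (hx : ‖x‖ < 1 / 2) : x ∈ unitBox n := by
  intro i
  obtain ⟨h₁, h₂⟩ := abs_lt.1 ((norm_le_pi_norm x i).trans_lt hx)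
  constructor <;> linarith

theorem coe_torusLift (θ : UnitAddTorus (Fin n)) (i : Fin n) :
    ((torusLift θ i : ℝ) : UnitAddCircle) = θ i :=
  AddCircle.coe_equivIoc ..

theorem torusLift_coe {x : Fin n → ℝ} (hx : x ∈ unitBox n) :
    torusLift (fun i => (x i : UnitAddCircle)) = x := by
  ext i
  simp [torusLift, AddCircle.equivIoc_coe_eq (hx i)]

theorem continuousAt_torusLift {θ : UnitAddTorus (Fin n)}
    (hθ : ∀ i, θ i ≠ ((-(1 / 2) : ℝ) : UnitAddCircle)) : ContinuousAt torusLift θ :=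
  continuousAt_pi.2 fun i => (continuousAt_subtype_val.comp
    (AddCircle.continuousAt_equivIoc 1 (-(1 / 2)) (hθ i))).comp
      (f := fun θ : UnitAddTorus (Fin n) => θ i) (continuousAt_apply i θ)

theorem coe_neg_half_notMem_image_Icc :
    ((-(1 / 2) : ℝ) : UnitAddCircle) ∉
      (fun t : ℝ => (t : UnitAddCircle)) '' Set.Icc (-(1 / 4)) (1 / 4) := by
  rintro ⟨t, ht, h⟩
  have h' : t = -(1 / 2) := (AddCircle.coe_eq_coe_iff_of_mem_Ico (p := 1) (a := -(1 / 2))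
    ⟨by linarith [ht.1], by linarith [ht.2]⟩ ⟨le_rfl, by norm_num⟩).1 h
  linarith [ht.1]

theorem continuous_comp_torusLift (hg : Continuous g) (hsupp : ∀ x, g x ≠ 0 → ‖x‖ ≤ 1 / 4) :
    Continuous fun θ => g (torusLift θ) := by
  refine continuous_iff_continuousAt.2 fun θ => ?_
  by_cases h : ∀ i, θ i ≠ ((-(1 / 2) : ℝ) : UnitAddCircle)
  · exact hg.continuousAt.comp (continuousAt_torusLift h)
  push Not at h
  obtain ⟨i, hi⟩ := h
  set K : Set UnitAddCircle := (fun t : ℝ => (t : UnitAddCircle)) '' Set.Icc (-(1 / 4)) (1 / 4)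
  have hK : IsClosed K := (isCompact_Icc.image (AddCircle.continuous_mk' 1)).isClosed
  have hiK : θ i ∈ Kᶜ := hi ▸ coe_neg_half_notMem_image_Icc
  have hzero : ∀ᶠ θ' in 𝓝 θ, g (torusLift θ') = 0 := by
    filter_upwards [(continuousAt_apply i θ).eventually (hK.isOpen_compl.mem_nhds hiK)] with θ' hθ'
    by_contra hne
    exact hθ' ⟨torusLift θ' i, abs_le.1 ((norm_le_pi_norm _ i).trans (hsupp _ hne)),
      coe_torusLift θ' i⟩
  exact (continuousAt_const (y := (0 : ℂ))).congr (hzero.mono fun _ h => h.symm)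

theorem mFourierCoeff_comp_torusLift (hsupp : ∀ x, g x ≠ 0 → ‖x‖ < 1 / 2) (k : Fin n → ℤ) :
    UnitAddTorus.mFourierCoeff (fun θ => g (torusLift θ)) k = ∫ y, intChar (-k) y * g y := by
  have hcompl : ∀ x ∉ unitBox n, intChar (-k) x * g x = 0 := fun x hx =>
    mul_eq_zero_of_right _ (by_contra fun hne => hx (mem_unitBox_of_norm_lt (hsupp x hne)))
  rw [UnitAddTorus.mFourierCoeff_eq_integral _ _ (fun _ => -(1 / 2)),
    ← setIntegral_eq_integral_of_forall_compl_eq_zero hcompl]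
  refine setIntegral_congr_fun (MeasurableSet.univ_pi' fun i => measurableSet_Ioc) fun x hx => ?_
  simp only [mFourier_coe_eq_intChar, smul_eq_mul, torusLift_coe hx]

theorem hasSum_intChar (hg : Continuous g) (hsupp : ∀ x, g x ≠ 0 → ‖x‖ ≤ 1 / 4)
    (hs : Summable fun k : Fin n → ℤ => ∫ y, intChar (-k) y * g y) {z : Fin n → ℝ}
    (hz : ‖z‖ < 1 / 2) :
    HasSum (fun k : Fin n → ℤ => (∫ y, intChar (-k) y * g y) * intChar k z) (g z) := by
  set G : C(UnitAddTorus (Fin n), ℂ) :=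
    ⟨fun θ => g (torusLift θ), continuous_comp_torusLift hg hsupp⟩
  have hcoeff (k : Fin n → ℤ) : UnitAddTorus.mFourierCoeff G k = ∫ y, intChar (-k) y * g y :=
    mFourierCoeff_comp_torusLift (fun x hx => (hsupp x hx).trans_lt (by norm_num)) k
  have hsum : Summable (UnitAddTorus.mFourierCoeff G) := by simpa only [funext hcoeff] using hs
  have hG : G (fun i => (z i : UnitAddCircle)) = g z :=
    congrArg g (torusLift_coe (mem_unitBox_of_norm_lt hz))
  simpa only [hcoeff, mFourier_coe_eq_intChar, smul_eq_mul, hG] using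
    UnitAddTorus.hasSum_mFourier_series_apply_of_summable hsum fun i => (z i : UnitAddCircle)

end FourierSeries

section FourierCoefficient

variable {n : ℕ}

theorem exists_lintegral_enorm_iteratedFDeriv_le {E : Type*} [NormedAddCommGroup E]
    [NormedSpace ℝ E] [MeasurableSpace E] (μ : Measure E) [μ.HasTemperateGrowth] :
    ∃ (d : ℕ) (C : ℝ≥0), ∀ (f : E → ℂ) (l : ℕ), ∀ i ≤ l,
      ∫⁻ x, ‖iteratedFDeriv ℝ i f x‖ₑ ∂μ ≤ C * mu d l f := by
  have hint := μ.integrable_pow_neg_integrablePower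
  set d := μ.integrablePower
  have hweight (x : E) : ‖(1 + ‖x‖) ^ (-(d : ℝ))‖ₑ = (1 + ‖x‖ₑ) ^ (-(d : ℤ)) := by
    rw [Real.enorm_of_nonneg (by positivity), ← ofReal_one_add_norm_zpow, ← Real.rpow_intCast]
    push_cast
    rfl
  refine ⟨d, (∫⁻ x, ‖(1 + ‖x‖) ^ (-(d : ℝ))‖ₑ ∂μ).toNNReal, fun f l i hi => ?_⟩
  rw [ENNReal.coe_toNNReal hint.hasFiniteIntegral.ne,
    ← lintegral_mul_const'' _ hint.aestronglyMeasurable.enorm]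
  refine lintegral_mono fun x => ?_
  rw [hweight, ENNReal.zpow_neg]
  exact (ENNReal.mul_le_iff_le_inv (by simp) (by simp)).1 (weight_mul_le_mu d hi f x)

theorem exists_norm_le_one_abs_dotBilin_eq (w : Fin n → ℝ) :
    ∃ v, ‖v‖ ≤ 1 ∧ |dotBilin n v w| = ‖w‖ := by
  rcases isEmpty_or_nonempty (Fin n) with h | h
  · exact ⟨0, by simp, by simp [Subsingleton.elim w 0]⟩
  obtain ⟨i, hi⟩ := Finite.exists_max fun i => ‖w i‖
  refine ⟨Pi.single i 1, by simp [Pi.norm_single], ?_⟩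
  calc |dotBilin n (Pi.single i 1) w| = ‖w i‖ := by simp [dotBilin_apply, Pi.single_apply]
    _ = ‖w‖ := le_antisymm (norm_le_pi_norm w i) ((pi_norm_le_iff_of_nonneg (norm_nonneg _)).2 hi)

theorem enorm_pow_mul_enorm_fourierIntegral_le (f : 𝓢(Fin n → ℝ, ℂ)) (w : Fin n → ℝ) (j : ℕ) :
    ‖w‖ₑ ^ j * ‖VectorFourier.fourierIntegral 𝐞 volume (dotBilin n).toLinearMap₁₂ f w‖ₑ ≤
      2 ^ j * ∑ i ∈ Finset.range (j + 1), ∫⁻ u, ‖iteratedFDeriv ℝ i f u‖ₑ := by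
  obtain ⟨v, hv, hvw⟩ := exists_norm_le_one_abs_dotBilin_eq w
  have hint (i : ℕ) : Integrable (iteratedFDeriv ℝ i f) :=
    (integrable_norm_iff ((f.smooth i).continuous_iteratedFDeriv le_rfl).aestronglyMeasurable).1
      (by simpa using f.integrable_pow_mul_iteratedFDeriv volume 0 i)
  have hreal : ‖w‖ ^ j *
      ‖VectorFourier.fourierIntegral 𝐞 volume (dotBilin n).toLinearMap₁₂ f w‖ ≤
        2 ^ j * ∑ i ∈ Finset.range (j + 1), ∫ u, ‖iteratedFDeriv ℝ i f u‖ := by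
    have h := VectorFourier.pow_mul_norm_iteratedFDeriv_fourierIntegral_le (dotBilin n)
      (μ := volume) (K := 0) (N := j) (f := f) (f.smooth j)
      (fun a i _ _ => f.integrable_pow_mul_iteratedFDeriv volume a i) le_rfl le_rfl v w (k := 0)
    simp only [hvw, norm_iteratedFDeriv_zero, pow_zero, mul_one, one_mul, Nat.cast_zero, mul_zero,
      zero_add, Finset.range_one, Finset.sum_product, Finset.sum_singleton] at h
    refine h.trans ?_
    gcongr
    · exact Finset.sum_nonneg fun i _ => integral_nonneg fun u => norm_nonneg _
    · exact mul_le_of_le_one_left (pow_nonneg zero_le_two j) (pow_le_one₀ (norm_nonneg v) hv)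
  have hofReal := ENNReal.ofReal_le_ofReal hreal
  rw [ENNReal.ofReal_mul (by positivity), ENNReal.ofReal_mul (by positivity),
    ENNReal.ofReal_pow (norm_nonneg w), ENNReal.ofReal_pow zero_le_two, ofReal_norm, ofReal_norm,
    ENNReal.ofReal_ofNat, ENNReal.ofReal_sum_of_nonneg fun i _ => by positivity] at hofReal
  simpa only [ofReal_integral_norm_eq_lintegral_enorm (hint _)] using hofReal

theorem exists_enorm_integral_intChar_mul_le (n M : ℕ) :
    ∃ (d : ℕ) (C : ℝ≥0), ∀ (f : 𝓢(Fin n → ℝ, ℂ)) (k : Fin n → ℤ),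
      (1 + ‖k‖ₑ) ^ M * ‖∫ u, intChar (-k) u * f u‖ₑ ≤ C * mu d M f := by
  obtain ⟨d, C, hC⟩ := exists_lintegral_enorm_iteratedFDeriv_le (volume : Measure (Fin n → ℝ))
  refine ⟨d, 2 ^ M * (2 ^ M * ((M + 1) * C)), fun f k => ?_⟩
  rw [← fourierIntegral_dotBilin_intCast]
  set c := VectorFourier.fourierIntegral 𝐞 volume (dotBilin n).toLinearMap₁₂ f fun i => (k i : ℝ)
  have hk : ‖fun i => (k i : ℝ)‖ₑ = ‖k‖ₑ := by
    rw [← ofReal_norm, norm_intCast_pi, ofReal_norm]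
  have hpow {j : ℕ} (hj : j ≤ M) : ‖k‖ₑ ^ j * ‖c‖ₑ ≤ 2 ^ M * ((M + 1) * (C * mu d M f)) := by
    calc ‖k‖ₑ ^ j * ‖c‖ₑ ≤ 2 ^ j * ∑ i ∈ Finset.range (j + 1), ∫⁻ u, ‖iteratedFDeriv ℝ i f u‖ₑ := by
          rw [← hk]
          exact enorm_pow_mul_enorm_fourierIntegral_le f _ j
      _ ≤ 2 ^ j * ∑ _i ∈ Finset.range (j + 1), C * mu d M f := by
          gcongr with i hi
          exact hC f M i ((Finset.mem_range_succ_iff.1 hi).trans hj)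
      _ = 2 ^ j * ((j + 1) * (C * mu d M f)) := by simp
      _ ≤ 2 ^ M * ((M + 1) * (C * mu d M f)) := by
          gcongr
          exact one_le_two
  calc (1 + ‖k‖ₑ) ^ M * ‖c‖ₑ
      = ∑ j ∈ Finset.range (M + 1), (M.choose j : ℝ≥0∞) * (‖k‖ₑ ^ j * ‖c‖ₑ) := by
        rw [add_comm, add_pow, Finset.sum_mul]
        exact Finset.sum_congr rfl fun j _ => by rw [one_pow]; ring
    _ ≤ ∑ j ∈ Finset.range (M + 1),
          (M.choose j : ℝ≥0∞) * (2 ^ M * ((M + 1) * (C * mu d M f))) := by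
        refine Finset.sum_le_sum fun j hj => ?_
        gcongr (M.choose j : ℝ≥0∞) * ?_
        exact hpow (Finset.mem_range_succ_iff.1 hj)
    _ = ((2 ^ M * (2 ^ M * ((M + 1) * C)) : ℝ≥0) : ℝ≥0∞) * mu d M f := by
        rw [← Finset.sum_mul, ← Nat.cast_sum, Nat.sum_range_choose]
        push_cast
        ring

end FourierCoefficient

section ModulateTranslate

variable {n : ℕ}

/-- The Schwartz function `z ↦ φ (z - b) exp (2πi k·(z - b))`, a time-frequency shift of `φ`. -/
def modulateTranslate (φ : 𝓢(Fin n → ℝ, ℂ)) (k : Fin n → ℤ) (b : Fin n → ℝ) : 𝓢(Fin n → ℝ, ℂ) :=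
  SchwartzMap.compSubConstCLM ℂ b (SchwartzMap.smulLeftCLM ℂ (intChar k) φ)

theorem modulateTranslate_apply (φ : 𝓢(Fin n → ℝ, ℂ)) (k : Fin n → ℤ) (b z : Fin n → ℝ) :
    modulateTranslate φ k b z = φ (z - b) * intChar k (z - b) := by
  simp [modulateTranslate, hasTemperateGrowth_intChar, mul_comm]

theorem exists_mu_modulateTranslate_le (φ : 𝓢(Fin n → ℝ, ℂ)) (q l : ℕ) :
    ∃ C : ℝ≥0, ∀ k b, mu q l (modulateTranslate φ k b) ≤
      C * ((1 + ‖b‖ₑ) ^ q * (1 + ‖k‖ₑ) ^ l) := by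
  obtain ⟨C, hC⟩ := exists_mu_intChar_le n l
  lift mu q l φ to ℝ≥0 using mu_schwartzMap_ne_top q l φ with A hA
  refine ⟨2 ^ l * (A * C), fun k b => ?_⟩
  have hmul : mu q l (fun u => φ u * intChar k u) ≤ 2 ^ l * (A * mu 0 l (intChar k)) := by
    rw [hA]
    simpa only [add_zero] using mu_mul_le (r := q) (s := 0) (φ.smooth ⊤) (contDiff_intChar k)
  calc mu q l (modulateTranslate φ k b)
      = mu q l (fun z => φ (z - b) * intChar k (z - b)) := by
        rw [funext (modulateTranslate_apply φ k b)]
    _ ≤ (1 + ‖b‖ₑ) ^ q * mu q l (fun u => φ u * intChar k u) :=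
        mu_comp_sub_le q l (fun u => φ u * intChar k u) b
    _ ≤ (1 + ‖b‖ₑ) ^ q * (2 ^ l * (A * (C * (1 + ‖k‖ₑ) ^ l))) := by
        gcongr
        exact hmul.trans (by gcongr; exact hC k)
    _ = (2 ^ l * (A * C) : ℝ≥0) * ((1 + ‖b‖ₑ) ^ q * (1 + ‖k‖ₑ) ^ l) := by
        push_cast
        ring

theorem integral_modulateTranslate_mul (χ f : 𝓢(Fin n → ℝ, ℂ)) (k : Fin n → ℤ) (b : Fin n → ℝ) :
    ∫ y, modulateTranslate χ k b y * f y = ∫ u, intChar k u * (χ u * f (u + b)) := by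
  rw [← integral_sub_right_eq_self _ (-b)]
  simp [modulateTranslate_apply, mul_comm, mul_left_comm]

theorem exists_enorm_integral_modulateTranslate_mul_le (χ : 𝓢(Fin n → ℝ, ℂ)) (M : ℕ) :
    ∃ C : ℝ≥0, ∀ (f : 𝓢(Fin n → ℝ, ℂ)) k b,
      ((1 + ‖b‖ₑ) * (1 + ‖k‖ₑ)) ^ M * ‖∫ y, modulateTranslate χ (-k) b y * f y‖ₑ ≤
        C * mu M M f := by
  obtain ⟨d, C, hC⟩ := exists_enorm_integral_intChar_mul_le n M
  lift mu (d + M : ℕ) M χ to ℝ≥0 using mu_schwartzMap_ne_top (d + M) M χ with A hA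
  refine ⟨C * (2 ^ M * A), fun f k b => ?_⟩
  set F : 𝓢(Fin n → ℝ, ℂ) :=
    SchwartzMap.smulLeftCLM ℂ χ (SchwartzMap.compSubConstCLM ℂ (-b) f)
  have hF (u : Fin n → ℝ) : F u = χ u * f (u + b) := by
    simp [F, χ.hasTemperateGrowth]
  have hmul : mu d M F ≤ 2 ^ M * (A * mu (-M) M fun u => f (u + b)) := by
    have hfb : ContDiff ℝ ∞ fun u => f (u + b) := (f.smooth ⊤).comp (contDiff_id.add contDiff_const)
    rw [funext hF, hA]
    simpa using mu_mul_le (r := (d + M : ℕ)) (s := -M) (l := M) (χ.smooth ⊤) hfb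
  calc ((1 + ‖b‖ₑ) * (1 + ‖k‖ₑ)) ^ M * ‖∫ y, modulateTranslate χ (-k) b y * f y‖ₑ
      = (1 + ‖b‖ₑ) ^ M * ((1 + ‖k‖ₑ) ^ M * ‖∫ u, intChar (-k) u * F u‖ₑ) := by
        simp only [integral_modulateTranslate_mul, hF, mul_pow, mul_assoc]
    _ ≤ (1 + ‖b‖ₑ) ^ M * (C * (2 ^ M * (A * mu (-M) M fun u => f (u + b)))) := by
        gcongr (1 + ‖b‖ₑ) ^ M * ?_
        exact (hC F k).trans (by gcongr)
    _ = C * (2 ^ M * A) * ((1 + ‖b‖ₑ) ^ M * mu (-M) M fun u => f (u + b)) := by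
        ring
    _ ≤ C * (2 ^ M * A) * mu M M f := by
        gcongr
        exact weight_mul_mu_comp_add_le M M f b
    _ = (C * (2 ^ M * A) : ℝ≥0) * mu M M f := by push_cast; rfl

end ModulateTranslate

section PartitionOfUnity

/-- A smooth function on `ℝ`, supported in `[-1/4, 1/4]`, whose translates by `ℤ/4` sum to `1`. -/
def cutoffReal (t : ℝ) : ℝ := Real.smoothTransition (4 * t + 1) - Real.smoothTransition (4 * t)

theorem contDiff_cutoffReal : ContDiff ℝ ∞ cutoffReal :=
  (Real.smoothTransition.contDiff.comp ((contDiff_const.mul contDiff_id).add contDiff_const)).sub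
    (Real.smoothTransition.contDiff.comp (contDiff_const.mul contDiff_id))

theorem cutoffReal_eq_zero {t : ℝ} (ht : 1 / 4 ≤ |t|) : cutoffReal t = 0 := by
  rw [cutoffReal]
  rcases le_abs.1 ht with h | h
  · rw [Real.smoothTransition.one_of_one_le (by linarith),
      Real.smoothTransition.one_of_one_le (by linarith), sub_self]
  · rw [Real.smoothTransition.zero_of_nonpos (by linarith),
      Real.smoothTransition.zero_of_nonpos (by linarith), sub_self]

/-- The integers `j` for which `t` can lie in the support of `cutoffReal (· - j / 4)`. -/
def activeShifts (t : ℝ) : Finset ℤ := {⌊4 * t⌋, ⌊4 * t⌋ + 1}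

theorem cutoffReal_sub_eq_zero {t : ℝ} {j : ℤ} (hj : j ∉ activeShifts t) :
    cutoffReal (t - j / 4) = 0 := by
  refine cutoffReal_eq_zero (not_lt.1 fun h => hj ?_)
  obtain ⟨hlower, hupper⟩ := abs_lt.1 h
  have hlt : ⌊4 * t⌋ < j + 1 := by
    rw [Int.floor_lt]
    push_cast
    linarith
  have hle : j - 1 ≤ ⌊4 * t⌋ := by
    rw [Int.le_floor]
    push_cast
    linarith
  simp only [activeShifts, Finset.mem_insert, Finset.mem_singleton]
  omega

theorem sum_cutoffReal_sub (t : ℝ) : ∑ j ∈ activeShifts t, cutoffReal (t - j / 4) = 1 := by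
  set v := Int.fract (4 * t) with hv
  have hv0 : 0 ≤ v := Int.fract_nonneg _
  have hv1 : v < 1 := Int.fract_lt_one _
  have hfloor : (⌊4 * t⌋ : ℝ) = 4 * t - v := by rw [hv, Int.self_sub_fract]
  have hleft : 4 * (t - ⌊4 * t⌋ / 4) = v := by rw [hfloor]; ring
  have hright : 4 * (t - ((⌊4 * t⌋ + 1 : ℤ) : ℝ) / 4) = v - 1 := by
    push_cast
    rw [hfloor]
    ring
  rw [activeShifts, Finset.sum_pair (by omega), cutoffReal, cutoffReal, hleft, hright,
    sub_add_cancel, Real.smoothTransition.one_of_one_le (x := v + 1) (by linarith),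
    Real.smoothTransition.zero_of_nonpos (x := v - 1) (by linarith)]
  ring

variable {n : ℕ}

/-- The point `j / 4` of the lattice that indexes the partition of unity. -/
def quarterPoint (j : Fin n → ℤ) : Fin n → ℝ := fun i => (j i : ℝ) / 4

/-- The tensor power of `cutoffReal`, whose translates by `quarterPoint j` form the partition of
unity. -/
def cutoffPi (u : Fin n → ℝ) : ℂ := ((∏ i, cutoffReal (u i) : ℝ) : ℂ)

theorem contDiff_cutoffPi : ContDiff ℝ ∞ (cutoffPi (n := n)) := by
  have hprod : ContDiff ℝ ∞ fun u : Fin n → ℝ => ∏ i, cutoffReal (u i) :=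
    contDiff_prod fun i _ => contDiff_cutoffReal.comp (contDiff_apply ℝ ℝ i)
  exact Complex.ofRealCLM.contDiff.comp hprod

theorem cutoffPi_eq_zero_of_coord {u : Fin n → ℝ} {i : Fin n} (h : cutoffReal (u i) = 0) :
    cutoffPi u = 0 := by
  rw [cutoffPi, Finset.prod_eq_zero (Finset.mem_univ i) h, Complex.ofReal_zero]

theorem norm_le_of_cutoffPi_ne_zero {u : Fin n → ℝ} (hu : cutoffPi u ≠ 0) : ‖u‖ ≤ 1 / 4 :=
  (pi_norm_le_iff_of_nonneg (by norm_num)).2 fun _ => not_lt.1 fun h =>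
    hu (cutoffPi_eq_zero_of_coord (cutoffReal_eq_zero h.le))

theorem hasCompactSupport_cutoffPi : HasCompactSupport (cutoffPi (n := n)) :=
  HasCompactSupport.intro (isCompact_closedBall 0 (1 / 4)) fun _ hu =>
    of_not_not fun h => hu (by simpa using norm_le_of_cutoffPi_ne_zero h)

theorem hasSum_cutoffPi_sub (z : Fin n → ℝ) :
    HasSum (fun j : Fin n → ℤ => cutoffPi (z - quarterPoint j)) 1 := by
  have hsum : ∑ j ∈ Fintype.piFinset fun i => activeShifts (z i),
      cutoffPi (z - quarterPoint j) = 1 := by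
    simp only [cutoffPi, quarterPoint, Pi.sub_apply]
    rw [← Complex.ofReal_sum, ← Finset.prod_univ_sum (fun i => activeShifts (z i))
      fun i j => cutoffReal (z i - (j : ℝ) / 4)]
    simp only [sum_cutoffReal_sub, Finset.prod_const_one, Complex.ofReal_one]
  rw [← hsum]
  refine hasSum_sum_of_ne_finset_zero fun j hj => ?_
  obtain ⟨i, hi⟩ := not_forall.1 (mt Fintype.mem_piFinset.2 hj)
  exact cutoffPi_eq_zero_of_coord (cutoffReal_sub_eq_zero hi)

/-- `cutoffPi` as a Schwartz function. -/
def cutoffSchwartz (n : ℕ) : 𝓢(Fin n → ℝ, ℂ) :=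
  hasCompactSupport_cutoffPi.toSchwartzMap contDiff_cutoffPi

theorem cutoffSchwartz_apply (u : Fin n → ℝ) : cutoffSchwartz n u = cutoffPi u := rfl

theorem exists_schwartzMap_eq_one_eq_zero {E : Type*} [NormedAddCommGroup E] [NormedSpace ℝ E]
    [FiniteDimensional ℝ E] {r R : ℝ} (hr : 0 < r) (hrR : r < R) : ∃ φ : 𝓢(E, ℂ),
      (∀ u, ‖u‖ ≤ r → φ u = 1) ∧ ∀ u, R ≤ ‖u‖ → φ u = 0 := by
  let b : ContDiffBump (0 : E) := ⟨r, R, hr, hrR⟩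
  have hc : HasCompactSupport fun u => ((b u : ℝ) : ℂ) :=
    b.hasCompactSupport.comp_left Complex.ofReal_zero
  have hs : ContDiff ℝ ∞ fun u => ((b u : ℝ) : ℂ) := Complex.ofRealCLM.contDiff.comp b.contDiff
  refine ⟨hc.toSchwartzMap hs, fun u hu => ?_, fun u hu => ?_⟩
  · exact congrArg Complex.ofReal (b.one_of_mem_closedBall (by simpa [b] using hu))
  · exact congrArg Complex.ofReal (b.zero_of_le_dist (by simpa [b] using hu))

end PartitionOfUnity

section Lattice

theorem summable_one_add_norm_pow_inv {E : Type*} [NormedAddCommGroup E] [NormedSpace ℝ E]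
    [FiniteDimensional ℝ E] (L : Submodule ℤ E) [DiscreteTopology L] :
    Summable fun x : L => ((1 + ‖x‖) ^ (Module.finrank ℤ L + 1))⁻¹ := by
  refine Summable.of_norm_bounded_eventually
    (ZLattice.summable_norm_rpow L (-(Module.finrank ℤ L + 1 : ℕ)) (by push_cast; linarith)) ?_
  filter_upwards [(Set.finite_singleton (0 : L)).compl_mem_cofinite] with x hx
  have hpos : 0 < ‖x‖ := norm_pos_iff.2 hx
  rw [Real.rpow_neg hpos.le, Real.rpow_natCast, Real.norm_of_nonneg (by positivity)]
  gcongr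
  linarith

theorem tsum_inv_one_add_enorm_quarterPoint_pow_ne_top (n : ℕ) :
    ∑' j : Fin n → ℤ, ((1 + ‖quarterPoint j‖ₑ) ^ (n + 1))⁻¹ ≠ ⊤ := by
  set b := (Pi.basisFun ℝ (Fin n)).unitsSMul fun _ => Units.mk0 (1 / 4) (by norm_num)
  set L := Submodule.span ℤ (Set.range b)
  set e := (b.restrictScalars ℤ).equivFun.symm
  have he (j : Fin n → ℤ) : (e j : Fin n → ℝ) = quarterPoint j := by
    ext i
    simp [e, b, quarterPoint, Module.Basis.equivFun_symm_apply, Module.Basis.unitsSMul_apply,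
      Pi.single_apply, Units.smul_def, div_eq_inv_mul]
  have hrank : Module.finrank ℤ L = n := by simp [L, ZLattice.rank ℝ]
  have hterm (j : Fin n → ℤ) : ENNReal.ofReal ((1 + ‖e j‖) ^ (n + 1))⁻¹ =
      ((1 + ‖quarterPoint j‖ₑ) ^ (n + 1))⁻¹ := by
    rw [Submodule.coe_norm, he, ← zpow_natCast, ← zpow_neg, ofReal_one_add_norm_zpow,
      ENNReal.zpow_neg, zpow_natCast]
  have hsum := (summable_one_add_norm_pow_inv L).comp_injective e.injective
  rw [hrank] at hsum
  simpa only [Function.comp_def, hterm] using hsum.tsum_ofReal_ne_top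

end Lattice

section GaborExpansion

theorem summable_of_mul_enorm_le {ι : Type*} {v : ι → ℝ≥0∞} (hv : ∑' i, (v i)⁻¹ ≠ ⊤) {c : ι → ℂ}
    {C : ℝ≥0} (h : ∀ i, v i * ‖c i‖ₑ ≤ C) : Summable c := by
  have hbound (i : ι) : ‖c i‖ₑ ≤ (v i)⁻¹ * C := by
    have hvi : v i ≠ 0 := ENNReal.inv_ne_top.1 (ENNReal.ne_top_of_tsum_ne_top hv i)
    rw [mul_comm, ← div_eq_mul_inv, ENNReal.le_div_iff_mul_le (.inl hvi) (.inr ENNReal.coe_ne_top),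
      mul_comm]
    exact h i
  have hfin : ∑' i, (v i)⁻¹ * C ≠ ⊤ := by
    rw [ENNReal.tsum_mul_right]
    exact ENNReal.mul_ne_top hv ENNReal.coe_ne_top
  refine Summable.of_norm_bounded (ENNReal.summable_toReal hfin) fun i => ?_
  rw [← toReal_enorm]
  exact ENNReal.toReal_mono (ENNReal.ne_top_of_tsum_ne_top hfin i) (hbound i)

variable {n : ℕ}

theorem enorm_quarterPoint_le (j : Fin n → ℤ) : ‖quarterPoint j‖ₑ ≤ ‖j‖ₑ := by
  rw [enorm_le_iff_norm_le]
  refine (pi_norm_le_iff_of_nonneg (norm_nonneg j)).2 fun i => ?_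
  calc ‖quarterPoint j i‖ = ‖j i‖ / 4 := by simp [quarterPoint, Int.norm_eq_abs]
    _ ≤ ‖j i‖ := div_le_self (norm_nonneg _) (by norm_num)
    _ ≤ ‖j‖ := norm_le_pi_norm j i

/-- The weight of the time-frequency shift by `quarterPoint i.1` in space and `i.2` in frequency. -/
def gaborWeight (i : (Fin n → ℤ) × (Fin n → ℤ)) : ℝ≥0 := (1 + ‖quarterPoint i.1‖₊) * (1 + ‖i.2‖₊)

theorem coe_gaborWeight (i : (Fin n → ℤ) × (Fin n → ℤ)) :
    (gaborWeight i : ℝ≥0∞) = (1 + ‖quarterPoint i.1‖ₑ) * (1 + ‖i.2‖ₑ) := by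
  simp [gaborWeight, enorm_eq_nnnorm]

theorem tsum_inv_gaborWeight_pow_ne_top (n : ℕ) :
    ∑' i : (Fin n → ℤ) × (Fin n → ℤ), ((gaborWeight i : ℝ≥0∞) ^ (n + 1))⁻¹ ≠ ⊤ := by
  set S := ∑' j : Fin n → ℤ, ((1 + ‖quarterPoint j‖ₑ) ^ (n + 1))⁻¹
  have hS : S ≠ ⊤ := tsum_inv_one_add_enorm_quarterPoint_pow_ne_top n
  refine ne_top_of_le_ne_top (ENNReal.mul_ne_top hS hS) ?_
  calc ∑' i : (Fin n → ℤ) × (Fin n → ℤ), ((gaborWeight i : ℝ≥0∞) ^ (n + 1))⁻¹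
      ≤ ∑' i : (Fin n → ℤ) × (Fin n → ℤ), ((1 + ‖quarterPoint i.1‖ₑ) ^ (n + 1))⁻¹ *
          ((1 + ‖quarterPoint i.2‖ₑ) ^ (n + 1))⁻¹ := by
        refine ENNReal.tsum_le_tsum fun i => ?_
        rw [← ENNReal.mul_inv (by simp) (by simp), coe_gaborWeight, mul_pow]
        gcongr
        exact enorm_quarterPoint_le i.2
    _ = S * S := by
        rw [ENNReal.tsum_prod (f := fun j k => ((1 + ‖quarterPoint j‖ₑ) ^ (n + 1))⁻¹ *
          ((1 + ‖quarterPoint k‖ₑ) ^ (n + 1))⁻¹)]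
        simp only [ENNReal.tsum_mul_left, ENNReal.tsum_mul_right, S]

theorem exists_mu_modulateTranslate_le_gaborWeight (φ : 𝓢(Fin n → ℝ, ℂ)) (q l : ℕ) :
    ∃ (A : ℝ≥0) (N : ℕ), ∀ i : (Fin n → ℤ) × (Fin n → ℤ),
      mu q l (modulateTranslate φ i.2 (quarterPoint i.1)) ≤ A * (gaborWeight i : ℝ≥0∞) ^ N := by
  obtain ⟨A, hA⟩ := exists_mu_modulateTranslate_le φ q l
  refine ⟨A, q + l, fun i => (hA i.2 (quarterPoint i.1)).trans ?_⟩
  rw [coe_gaborWeight, mul_pow]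
  gcongr
  · exact le_self_add
  · exact Nat.le_add_right q l
  · exact le_self_add
  · exact Nat.le_add_left l q

theorem hasSum_frequency {χ φ : 𝓢(Fin n → ℝ, ℂ)} (hχ : ∀ u, χ u ≠ 0 → ‖u‖ ≤ 1 / 4)
    (hφ : ∀ u, ‖u‖ ≤ 1 / 4 → φ u = 1) (hφ' : ∀ u, 1 / 2 ≤ ‖u‖ → φ u = 0)
    (f : 𝓢(Fin n → ℝ, ℂ)) (b z : Fin n → ℝ)
    (hs : Summable fun k : Fin n → ℤ => ∫ y, modulateTranslate χ (-k) b y * f y) :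
    HasSum (fun k => (∫ y, modulateTranslate χ (-k) b y * f y) * modulateTranslate φ k b z)
      (χ (z - b) * f z) := by
  simp only [integral_modulateTranslate_mul] at hs ⊢
  simp only [modulateTranslate_apply]
  rcases lt_or_ge ‖z - b‖ (1 / 2) with hlt | hge
  · have hcont : Continuous fun v => χ v * f (v + b) :=
      χ.continuous.mul (f.continuous.comp (continuous_id.add continuous_const))
    have hfourier := (hasSum_intChar hcont (fun v hv => hχ v (left_ne_zero_of_mul hv)) hs
      hlt).mul_left (φ (z - b))
    have hφχ : φ (z - b) * χ (z - b) = χ (z - b) := by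
      rcases eq_or_ne (χ (z - b)) 0 with h | h
      · rw [h, mul_zero]
      · rw [hφ _ (hχ _ h), one_mul]
    rw [sub_add_cancel, ← mul_assoc, hφχ] at hfourier
    exact hfourier.congr_fun fun k => by ring
  · have hχ0 : χ (z - b) = 0 := of_not_not fun h => by linarith [hχ _ h]
    simpa only [hχ0, hφ' _ hge, zero_mul, mul_zero] using hasSum_zero

theorem summable_integral_modulateTranslate_mul (χ f : 𝓢(Fin n → ℝ, ℂ)) :
    Summable fun i : (Fin n → ℤ) × (Fin n → ℤ) =>
      ∫ y, modulateTranslate χ (-i.2) (quarterPoint i.1) y * f y := by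
  obtain ⟨C, hC⟩ := exists_enorm_integral_modulateTranslate_mul_le χ (n + 1)
  lift mu (n + 1 : ℕ) (n + 1) f to ℝ≥0 using mu_schwartzMap_ne_top (n + 1) (n + 1) f with B hB
  refine summable_of_mul_enorm_le (tsum_inv_gaborWeight_pow_ne_top n) (C := C * B) fun i => ?_
  rw [coe_gaborWeight, ENNReal.coe_mul, hB]
  exact hC f i.2 (quarterPoint i.1)

theorem summable_integral_mul_modulateTranslate (χ φ f : 𝓢(Fin n → ℝ, ℂ)) (z : Fin n → ℝ) :
    Summable fun i : (Fin n → ℤ) × (Fin n → ℤ) =>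
      (∫ y, modulateTranslate χ (-i.2) (quarterPoint i.1) y * f y) *
        modulateTranslate φ i.2 (quarterPoint i.1) z := by
  obtain ⟨A, hA⟩ := exists_mu_modulateTranslate_le φ 0 0
  refine Summable.of_norm_bounded
    ((summable_integral_modulateTranslate_mul χ f).norm.mul_right (A : ℝ)) fun i => ?_
  rw [norm_mul]
  gcongr
  have hbound : ‖iteratedFDeriv ℝ 0 (modulateTranslate φ i.2 (quarterPoint i.1)) z‖ₑ ≤ A := by
    simpa using (enorm_iteratedFDeriv_le_mu le_rfl _ z).trans (hA i.2 (quarterPoint i.1))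
  rw [enorm_le_coe] at hbound
  simpa only [coe_nnnorm, norm_iteratedFDeriv_zero] using NNReal.coe_le_coe.2 hbound

theorem hasSum_modulateTranslate {φ : 𝓢(Fin n → ℝ, ℂ)} (hφ : ∀ u, ‖u‖ ≤ 1 / 4 → φ u = 1)
    (hφ' : ∀ u, 1 / 2 ≤ ‖u‖ → φ u = 0) (f : 𝓢(Fin n → ℝ, ℂ)) (z : Fin n → ℝ) :
    HasSum (fun i : (Fin n → ℤ) × (Fin n → ℤ) =>
      (∫ y, modulateTranslate (cutoffSchwartz n) (-i.2) (quarterPoint i.1) y * f y) *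
        modulateTranslate φ i.2 (quarterPoint i.1) z) (f z) := by
  have hfrequency (j : Fin n → ℤ) := hasSum_frequency
    (fun u hu => norm_le_of_cutoffPi_ne_zero (cutoffSchwartz_apply u ▸ hu)) hφ hφ' f
    (quarterPoint j) z
    ((summable_integral_modulateTranslate_mul (cutoffSchwartz n) f).prod_factor j)
  have hspace : HasSum (fun j => cutoffSchwartz n (z - quarterPoint j) * f z) (f z) := by
    simpa only [cutoffSchwartz_apply, one_mul] using (hasSum_cutoffPi_sub z).mul_right (f z)
  have hsum := (summable_integral_mul_modulateTranslate (cutoffSchwartz n) φ f z).hasSum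
  exact (hsum.prod_fiberwise hfrequency).unique hspace ▸ hsum

end GaborExpansion

section SchwartzFrame

/-- A frame expansion of Schwartz functions: pairs of Schwartz functions `g i`, `h i`, growing at
most polynomially in a weight `w` with `∑ w⁻ˢ < ∞`, such that every Schwartz function `f` is the
sum of the `(∫ g i * f) • h i`, with coefficients that decay faster than any power of the weight.
Only finitely many indices lie below a given weight, so truncation yields finite-rank operators. -/
structure SchwartzFrame {E : Type*} [NormedAddCommGroup E] [NormedSpace ℝ E] [MeasurableSpace E]
    (μ : Measure E) where
  ι : Type
  w : ι → ℝ≥0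
  one_le_w : ∀ i, 1 ≤ w i
  s : ℕ
  tsum_inv_w_pow_ne_top : ∑' i, ((w i : ℝ≥0∞) ^ s)⁻¹ ≠ ⊤
  g : ι → 𝓢(E, ℂ)
  h : ι → 𝓢(E, ℂ)
  mu_g_le : ∀ q l : ℕ, ∃ (A : ℝ≥0) (N : ℕ), ∀ i, mu q l (g i) ≤ A * (w i : ℝ≥0∞) ^ N
  mu_h_le : ∀ q l : ℕ, ∃ (A : ℝ≥0) (N : ℕ), ∀ i, mu q l (h i) ≤ A * (w i : ℝ≥0∞) ^ N
  enorm_integral_g_mul_le : ∀ M : ℕ, ∃ (C : ℝ≥0) (M' : ℕ), ∀ (f : 𝓢(E, ℂ)) (i : ι),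
    (w i : ℝ≥0∞) ^ M * ‖∫ y, g i y * f y ∂μ‖ₑ ≤ C * mu M' M' f
  hasSum : ∀ (f : 𝓢(E, ℂ)) z, HasSum (fun i => (∫ y, g i y * f y ∂μ) * h i z) (f z)

theorem nonempty_schwartzFrame (n : ℕ) :
    Nonempty (SchwartzFrame (volume : Measure (Fin n → ℝ))) := by
  obtain ⟨φ, hφ, hφ'⟩ := exists_schwartzMap_eq_one_eq_zero (E := Fin n → ℝ) (r := 1 / 4)
    (R := 1 / 2) (by norm_num) (by norm_num)
  refine ⟨{
    ι := (Fin n → ℤ) × (Fin n → ℤ)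
    w := gaborWeight
    one_le_w := fun i => one_le_mul (by simp) (by simp)
    s := n + 1
    tsum_inv_w_pow_ne_top := tsum_inv_gaborWeight_pow_ne_top n
    g := fun i => modulateTranslate (cutoffSchwartz n) (-i.2) (quarterPoint i.1)
    h := fun i => modulateTranslate φ i.2 (quarterPoint i.1)
    mu_g_le := fun q l => ?_
    mu_h_le := exists_mu_modulateTranslate_le_gaborWeight φ
    enorm_integral_g_mul_le := fun M => ?_
    hasSum := hasSum_modulateTranslate hφ hφ' }⟩
  · obtain ⟨A, N, hA⟩ := exists_mu_modulateTranslate_le_gaborWeight (cutoffSchwartz n) q l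
    exact ⟨A, N, fun i => by simpa [gaborWeight] using hA (i.1, -i.2)⟩
  · obtain ⟨C, hC⟩ := exists_enorm_integral_modulateTranslate_mul_le (cutoffSchwartz n) M
    refine ⟨C, M, fun f i => ?_⟩
    rw [coe_gaborWeight]
    exact hC f i.2 (quarterPoint i.1)

end SchwartzFrame

namespace SchwartzFrame

variable {E X : Type*} [NormedAddCommGroup E] [NormedSpace ℝ E] [MeasurableSpace E]
  {μ : Measure E} (F : SchwartzFrame μ)

theorem coe_w_ne_zero (i : F.ι) : (F.w i : ℝ≥0∞) ≠ 0 := by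
  simpa using (zero_lt_one.trans_le (F.one_le_w i)).ne'

theorem pow_add_mul_inv_w_pow (i : F.ι) (N : ℕ) :
    (F.w i : ℝ≥0∞) ^ (N + F.s) * ((F.w i : ℝ≥0∞) ^ F.s)⁻¹ = (F.w i : ℝ≥0∞) ^ N := by
  rw [pow_add, mul_assoc, ENNReal.mul_inv_cancel (pow_ne_zero _ (F.coe_w_ne_zero i))
    (ENNReal.pow_ne_top ENNReal.coe_ne_top), mul_one]

theorem finite_setOf_w_le (R : ℝ≥0) : {i | F.w i ≤ R}.Finite := by
  have hR : ((R : ℝ≥0∞) ^ F.s)⁻¹ ≠ 0 :=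
    ENNReal.inv_ne_zero.2 (ENNReal.pow_ne_top ENNReal.coe_ne_top)
  refine (ENNReal.finite_const_le_of_tsum_ne_top F.tsum_inv_w_pow_ne_top hR).subset fun i hi => ?_
  exact ENNReal.inv_le_inv.2 (pow_le_pow_left₀ zero_le (ENNReal.coe_le_coe.2 hi) _)

/-- The finitely many indices of weight at most `R`. -/
def low (R : ℝ≥0) : Finset F.ι := (F.finite_setOf_w_le R).toFinset

theorem mem_low {R : ℝ≥0} {i : F.ι} : i ∈ F.low R ↔ F.w i ≤ R := by
  simp [low]

theorem sum_low_le (N : ℕ) (R : ℝ≥0) : ∑ i ∈ F.low R, (F.w i : ℝ≥0∞) ^ N ≤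
    (R : ℝ≥0∞) ^ (N + F.s) * ∑' i, ((F.w i : ℝ≥0∞) ^ F.s)⁻¹ := by
  calc ∑ i ∈ F.low R, (F.w i : ℝ≥0∞) ^ N
      ≤ ∑ i ∈ F.low R, (R : ℝ≥0∞) ^ (N + F.s) * ((F.w i : ℝ≥0∞) ^ F.s)⁻¹ := by
        refine Finset.sum_le_sum fun i hi => ?_
        rw [← F.pow_add_mul_inv_w_pow]
        gcongr
        exact F.mem_low.1 hi
    _ = (R : ℝ≥0∞) ^ (N + F.s) * ∑ i ∈ F.low R, ((F.w i : ℝ≥0∞) ^ F.s)⁻¹ := by rw [Finset.mul_sum]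
    _ ≤ (R : ℝ≥0∞) ^ (N + F.s) * ∑' i, ((F.w i : ℝ≥0∞) ^ F.s)⁻¹ := by
        gcongr
        exact ENNReal.sum_le_tsum _

/-- The partial sum of the frame expansion of `f` over the weights at most `R`. -/
def truncate (R : ℝ≥0) (f : 𝓢(E, ℂ)) : 𝓢(E, ℂ) :=
  ∑ i ∈ F.low R, (∫ y, F.g i y * f y ∂μ) • F.h i

theorem hasSum_truncate_sub (R : ℝ≥0) (f : 𝓢(E, ℂ)) (z : E) :
    HasSum (fun i : {i // i ∉ F.low R} => -(∫ y, F.g i y * f y ∂μ) * F.h i z)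
      ((F.truncate R f - f : 𝓢(E, ℂ)) z) := by
  have htail : HasSum (fun i : {i // i ∉ F.low R} => (∫ y, F.g i y * f y ∂μ) * F.h i z)
      (f z - F.truncate R f z) := by
    refine (Finset.hasSum_compl_iff (f := fun i => (∫ y, F.g i y * f y ∂μ) * F.h i z)
      (F.low R)).2 ?_
    simpa only [truncate, sum_apply, smul_apply, smul_eq_mul,
      sub_add_cancel] using F.hasSum f z
  simpa using htail.neg

theorem mu_frame_term_le (q l P : ℕ) : ∃ (M : ℕ) (K : ℝ≥0), ∀ (f : 𝓢(E, ℂ)) i,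
    (F.w i : ℝ≥0∞) ^ P * mu q l (fun z => -(∫ y, F.g i y * f y ∂μ) * F.h i z) ≤
      ((F.w i : ℝ≥0∞) ^ F.s)⁻¹ * (K * mu M M f) := by
  obtain ⟨A, N, hA⟩ := F.mu_h_le q l
  obtain ⟨C, M, hC⟩ := F.enorm_integral_g_mul_le (P + N + F.s)
  refine ⟨M, C * A, fun f i => ?_⟩
  set c := ∫ y, F.g i y * f y ∂μ
  calc (F.w i : ℝ≥0∞) ^ P * mu q l (fun z => -c * F.h i z)
      ≤ (F.w i : ℝ≥0∞) ^ P * (‖-c‖ₑ * (A * (F.w i : ℝ≥0∞) ^ N)) := by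
        gcongr
        exact (mu_const_mul_le (-c) ((F.h i).smooth ⊤)).trans (by gcongr; exact hA i)
    _ = (F.w i : ℝ≥0∞) ^ (P + N) * ‖c‖ₑ * A := by
        rw [enorm_neg, pow_add]
        ring
    _ = ((F.w i : ℝ≥0∞) ^ F.s)⁻¹ * ((F.w i : ℝ≥0∞) ^ (P + N + F.s) * ‖c‖ₑ * A) := by
        rw [← F.pow_add_mul_inv_w_pow i (P + N)]
        ring
    _ ≤ ((F.w i : ℝ≥0∞) ^ F.s)⁻¹ * (C * mu M M f * A) := by
        gcongr ((F.w i : ℝ≥0∞) ^ F.s)⁻¹ * (?_ * A)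
        exact hC f i
    _ = ((F.w i : ℝ≥0∞) ^ F.s)⁻¹ * ((C * A : ℝ≥0) * mu M M f) := by
        push_cast
        ring

theorem mu_truncate_sub_le (q l P : ℕ) : ∃ (M : ℕ) (K : ℝ≥0), ∀ (f : 𝓢(E, ℂ)) (R : ℝ≥0),
    (R : ℝ≥0∞) ^ P * mu q l (F.truncate R f - f : 𝓢(E, ℂ)) ≤ K * mu M M f := by
  obtain ⟨M, K, hK⟩ := F.mu_frame_term_le q l P
  lift ∑' i, ((F.w i : ℝ≥0∞) ^ F.s)⁻¹ to ℝ≥0 using F.tsum_inv_w_pow_ne_top with S hS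
  refine ⟨M, S * K, fun f R => ?_⟩
  set u : F.ι → E → ℂ := fun i z => -(∫ y, F.g i y * f y ∂μ) * F.h i z
  have hu (i : F.ι) : ContDiff ℝ ∞ (u i) := contDiff_const.mul ((F.h i).smooth ⊤)
  calc (R : ℝ≥0∞) ^ P * mu q l (F.truncate R f - f : 𝓢(E, ℂ))
      ≤ (R : ℝ≥0∞) ^ P * ∑' i : {i // i ∉ F.low R}, mu q l (u i) := by
        gcongr
        exact mu_le_tsum_mu (u := fun i : {i // i ∉ F.low R} => u i) (fun i => hu i)
          (F.hasSum_truncate_sub R f) q.cast_nonneg l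
    _ ≤ ∑' i : {i // i ∉ F.low R}, (F.w i : ℝ≥0∞) ^ P * mu q l (u i) := by
        rw [← ENNReal.tsum_mul_left]
        refine ENNReal.tsum_le_tsum fun i => ?_
        gcongr
        exact (not_le.1 (mt F.mem_low.2 i.2)).le
    _ ≤ ∑' i, (F.w i : ℝ≥0∞) ^ P * mu q l (u i) :=
        ENNReal.tsum_comp_le_tsum_of_injective Subtype.val_injective _
    _ ≤ ∑' i, ((F.w i : ℝ≥0∞) ^ F.s)⁻¹ * (K * mu M M f) := ENNReal.tsum_le_tsum (hK f)
    _ = (S * K : ℝ≥0) * mu M M f := by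
        rw [ENNReal.tsum_mul_right, ← hS]
        push_cast
        ring

/-- The kernel of the finite-rank operator `f ↦ L (F.truncate R f)`. -/
def kernel (L : 𝓢(E, ℂ) →ₗ[ℂ] (X → ℂ)) (R : ℝ≥0) (z : X × E) : ℂ :=
  ∑ i ∈ F.low R, L (F.h i) z.1 * F.g i z.2

section Integral

variable [BorelSpace E] [SecondCountableTopology E] [μ.HasTemperateGrowth]
  {L : 𝓢(E, ℂ) →ₗ[ℂ] (X → ℂ)}

theorem integrable_g_mul (i : F.ι) (f : 𝓢(E, ℂ)) : Integrable (fun y => F.g i y * f y) μ := by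
  refine (SchwartzMap.smulLeftCLM ℂ (F.g i) f).integrable.congr (ae_of_all _ fun y => ?_)
  rw [SchwartzMap.smulLeftCLM_apply_apply (F.g i).hasTemperateGrowth, smul_eq_mul]

theorem integrable_kernel_mul (R : ℝ≥0) (f : 𝓢(E, ℂ)) (x : X) :
    Integrable (fun y => F.kernel L R (x, y) * f y) μ := by
  simp only [kernel, Finset.sum_mul, mul_assoc]
  exact integrable_finsetSum _ fun i _ => (F.integrable_g_mul i f).const_mul _

theorem integral_kernel_mul (R : ℝ≥0) (f : 𝓢(E, ℂ)) (x : X) :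
    ∫ y, F.kernel L R (x, y) * f y ∂μ = L (F.truncate R f) x := by
  simp only [kernel, Finset.sum_mul, mul_assoc]
  rw [integral_finsetSum _ fun i _ => (F.integrable_g_mul i f).const_mul _]
  simp only [integral_const_mul, truncate, map_sum, map_smul, Finset.sum_apply, Pi.smul_apply,
    smul_eq_mul]
  exact Finset.sum_congr rfl fun i _ => mul_comm _ _

end Integral

section Kernel

variable {E' : Type*} [NormedAddCommGroup E'] [NormedSpace ℝ E']

theorem temperateGrowth_kernel {L : 𝓢(E, ℂ) →ₗ[ℂ] (E' → ℂ)} (hL : ∀ f, TemperateGrowth' (L f))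
    (R : ℝ≥0) : TemperateGrowth' (F.kernel L R) := by
  simp only [temperateGrowth'_iff_hasTemperateGrowth] at hL ⊢
  exact .sum fun i _ => ((hL (F.h i)).comp (ContinuousLinearMap.fst ℝ E' E).hasTemperateGrowth).mul
    ((F.g i).hasTemperateGrowth.comp (ContinuousLinearMap.snd ℝ E' E).hasTemperateGrowth)

theorem mu_kernel_le (l q l' : ℕ) : ∃ (K : ℝ≥0) (N : ℕ), ∀ (L : 𝓢(E, ℂ) →ₗ[ℂ] (E' → ℂ)),
    (∀ f, ContDiff ℝ ∞ (L f)) → ∀ (p : ℕ) (B : ℝ≥0∞),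
    (∀ f, mu (-(p : ℤ)) l (L f) ≤ B * mu q l' f) → ∀ R : ℝ≥0,
      mu (-(p : ℤ)) l (F.kernel L R) ≤ K * B * (R : ℝ≥0∞) ^ N := by
  obtain ⟨A, N, hA⟩ := F.mu_h_le q l'
  obtain ⟨A', N', hA'⟩ := F.mu_g_le 0 l
  lift ∑' i, ((F.w i : ℝ≥0∞) ^ F.s)⁻¹ to ℝ≥0 using F.tsum_inv_w_pow_ne_top with S hS
  refine ⟨2 ^ l * A * A' * S, N + N' + F.s, fun L hL p B hB R => ?_⟩
  have hfst (i : F.ι) : ContDiff ℝ ∞ fun z : E' × E => L (F.h i) z.1 := (hL _).comp contDiff_fst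
  have hsnd (i : F.ι) : ContDiff ℝ ∞ fun z : E' × E => F.g i z.2 :=
    ((F.g i).smooth ⊤).comp contDiff_snd
  have hmufst (i : F.ι) : mu (-(p : ℤ)) l (fun z : E' × E => L (F.h i) z.1) ≤
      B * (A * (F.w i : ℝ≥0∞) ^ N) :=
    (mu_comp_fst_le (hL _) (by simp) l).trans ((hB _).trans (by gcongr; exact hA i))
  have hmusnd (i : F.ι) : mu 0 l (fun z : E' × E => F.g i z.2) ≤ A' * (F.w i : ℝ≥0∞) ^ N' :=
    (mu_comp_snd_le ((F.g i).smooth ⊤) le_rfl l).trans (hA' i)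
  calc mu (-(p : ℤ)) l (F.kernel L R)
      ≤ ∑ i ∈ F.low R, mu (-(p : ℤ)) l (fun z : E' × E => L (F.h i) z.1 * F.g i z.2) :=
        mu_sum_le _ fun i _ => (hfst i).mul (hsnd i)
    _ ≤ ∑ i ∈ F.low R, 2 ^ l * (B * (A * (F.w i : ℝ≥0∞) ^ N) * (A' * (F.w i : ℝ≥0∞) ^ N')) := by
        refine Finset.sum_le_sum fun i _ => ?_
        have hmul := mu_mul_le (r := -(p : ℤ)) (s := 0) (l := l) (hfst i) (hsnd i)
        rw [add_zero] at hmul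
        exact hmul.trans (by gcongr; exacts [hmufst i, hmusnd i])
    _ = 2 ^ l * A * A' * B * ∑ i ∈ F.low R, (F.w i : ℝ≥0∞) ^ (N + N') := by
        rw [Finset.mul_sum]
        exact Finset.sum_congr rfl fun i _ => by ring
    _ ≤ 2 ^ l * A * A' * B * ((R : ℝ≥0∞) ^ (N + N' + F.s) * S) := by
        gcongr
        exact hS ▸ F.sum_low_le (N + N') R
    _ = (2 ^ l * A * A' * S : ℝ≥0) * B * (R : ℝ≥0∞) ^ (N + N' + F.s) := by
        push_cast
        ring

end Kernel

section Nets

variable {m n : ℕ} {L : ℝ → 𝓢(Fin n → ℝ, ℂ) →ₗ[ℂ] ((Fin m → ℝ) → ℂ)}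
  (F : SchwartzFrame (volume : Measure (Fin n → ℝ)))

theorem isEtauNet_kernel (hL : ModerateNetMaps m n fun ε => L ε) :
    IsEtauNet fun ε => F.kernel (L ε) ε.toNNReal⁻¹ := by
  refine ⟨fun ε hε => F.temperateGrowth_kernel (hL.1 ε hε) _, fun l => ?_⟩
  obtain ⟨p, q, l', N, C, hLle⟩ := exists_mu_le_of_moderateNetMaps hL l
  obtain ⟨K, N', hK⟩ := F.mu_kernel_le (E' := Fin m → ℝ) l q l'
  refine ⟨p, N + N', isOEps_zpow_neg_iff.2 ⟨K * C, ?_⟩⟩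
  filter_upwards [hLle, Ioc_mem_nhdsGT one_pos] with ε hLε hε
  refine (hK (L ε) (fun f => (hL.1 ε hε f).1) p _ hLε _).trans_eq ?_
  push_cast
  ring

theorem isNtauNet_truncate_sub (hL : ModerateNetMaps m n fun ε => L ε)
    {f : ℝ → 𝓢(Fin n → ℝ, ℂ)} (hf : IsESinfNet fun ε => f ε) :
    IsNtauNet fun ε => L ε (F.truncate ε.toNNReal⁻¹ (f ε) - f ε) := by
  refine ⟨fun ε hε => hL.1 ε hε _, fun l => ?_⟩
  obtain ⟨p, q, l', N, C, hLle⟩ := exists_mu_le_of_moderateNetMaps hL l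
  obtain ⟨N', hN'⟩ := hf.2
  refine ⟨p, fun P => ?_⟩
  obtain ⟨M, K, hK⟩ := F.mu_truncate_sub_le q l' (P + N + N')
  obtain ⟨C', hfle⟩ := isOEps_zpow_neg_iff.1 (hN' M M)
  refine isOEps_pow_iff.2 ⟨C * (K * C'), ?_⟩
  filter_upwards [hLle, hfle, eventually_mem_nhdsWithin] with ε hLε hfε hε
  set R : ℝ≥0 := ε.toNNReal⁻¹
  have hR : (R : ℝ≥0∞) ^ N' ≠ 0 := by
    have : 0 < ε := hε
    simp [R, this]
  have htail : (R : ℝ≥0∞) ^ (P + N) * mu q l' (F.truncate R (f ε) - f ε : 𝓢(Fin n → ℝ, ℂ)) ≤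
      K * C' := by
    refine (ENNReal.mul_le_mul_iff_right hR (ENNReal.pow_ne_top ENNReal.coe_ne_top)).1 ?_
    calc (R : ℝ≥0∞) ^ N' *
          ((R : ℝ≥0∞) ^ (P + N) * mu q l' (F.truncate R (f ε) - f ε : 𝓢(Fin n → ℝ, ℂ)))
        = (R : ℝ≥0∞) ^ (P + N + N') * mu q l' (F.truncate R (f ε) - f ε : 𝓢(Fin n → ℝ, ℂ)) := by
          rw [pow_add _ (P + N)]
          ring
      _ ≤ K * (C' * (R : ℝ≥0∞) ^ N') := (hK (f ε) R).trans (by gcongr)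
      _ = (R : ℝ≥0∞) ^ N' * (K * C') := by ring
  calc (R : ℝ≥0∞) ^ P * mu (-(p : ℤ)) l (L ε (F.truncate R (f ε) - f ε))
      ≤ (R : ℝ≥0∞) ^ P * (C * (R : ℝ≥0∞) ^ N * mu q l' (F.truncate R (f ε) - f ε :
          𝓢(Fin n → ℝ, ℂ))) := by
        gcongr
        exact hLε _
    _ = C * ((R : ℝ≥0∞) ^ (P + N) * mu q l' (F.truncate R (f ε) - f ε : 𝓢(Fin n → ℝ, ℂ))) := by
        rw [pow_add]
        ring
    _ ≤ (C * (K * C') : ℝ≥0) := by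
        push_cast
        gcongr (C : ℝ≥0∞) * ?_
        exact htail

end Nets

end SchwartzFrame

theorem stmt16_general (m n : ℕ) (L : ℝ → 𝓢(Fin n → ℝ, ℂ) →ₗ[ℂ] ((Fin m → ℝ) → ℂ))
    (hL : ModerateNetMaps m n fun ε => L ε) :
    ∃ H : ℝ → (Fin m → ℝ) × (Fin n → ℝ) → ℂ, IsEtauNet H ∧
      ∀ f : ℝ → 𝓢(Fin n → ℝ, ℂ), IsESinfNet (fun ε => f ε) →
        (∀ ε ∈ Set.Ioc (0 : ℝ) 1, ∀ x, Integrable fun y => H ε (x, y) * f ε y) ∧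
        IsNtauNet fun ε x => (∫ y, H ε (x, y) * f ε y) - L ε (f ε) x := by
  obtain ⟨F⟩ := nonempty_schwartzFrame n
  refine ⟨fun ε => F.kernel (L ε) ε.toNNReal⁻¹, F.isEtauNet_kernel hL, fun f hf =>
    ⟨fun ε _ x => F.integrable_kernel_mul _ (f ε) x, ?_⟩⟩
  have herror : (fun ε x => (∫ y, F.kernel (L ε) ε.toNNReal⁻¹ (x, y) * f ε y) - L ε (f ε) x) =
      fun ε => L ε (F.truncate ε.toNNReal⁻¹ (f ε) - f ε) := by
    ext ε x
    rw [F.integral_kernel_mul, map_sub, Pi.sub_apply]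
  exact herror ▸ F.isNtauNet_truncate_sub hL hf

end

/-- kernel theorem for moderate nets whose moderation constants grow like
`ε^{-r(l)}` with `limsup r(l)/l < 1`: the extension is represented on `E_S^∞(ℝ^n)` by a
generalized integral operator with kernel in `E_τ(ℝ^{m+n})`. -/
theorem stmt16 (m n : ℕ) (hm : 1 ≤ m) (hn : 1 ≤ n)
    (L : ℝ → SchwartzMap (Fin n → ℝ) ℂ →ₗ[ℂ] ((Fin m → ℝ) → ℂ))
    (hL : ModerateNetMaps m n (fun ε => ⇑(L ε)))
    (hcont : ∀ ε ∈ Set.Ioc (0:ℝ) 1, ContinuousIntoOM m n ⇑(L ε))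
    (r : ℕ → ℝ) (hr0 : ∀ l, 0 ≤ r l)
    (hr1 : Filter.limsup (fun l : ℕ => r l / (l:ℝ)) Filter.atTop < 1)
    (hmod : ∀ l : ℕ, ∃ p q l' : ℕ, ∃ C ≥ (0:ℝ), ∃ η > (0:ℝ), ∀ ε : ℝ, 0 < ε → ε ≤ η →
      ∀ f : SchwartzMap (Fin n → ℝ) ℂ,
        mu (-(p:ℤ)) l (L ε f) ≤ ENNReal.ofReal (C * ε ^ (-(r l))) * mu (q:ℤ) l' ⇑f) :
    ∃ H : ℝ → ((Fin m → ℝ) × (Fin n → ℝ)) → ℂ, IsEtauNet H ∧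
      ∀ f : ℝ → SchwartzMap (Fin n → ℝ) ℂ, IsESinfNet (fun ε => ⇑(f ε)) →
        (∀ ε ∈ Set.Ioc (0:ℝ) 1, ∀ x : Fin m → ℝ,
          MeasureTheory.Integrable (fun y : Fin n → ℝ => H ε (x, y) * f ε y)) ∧
        IsNtauNet (fun ε (x : Fin m → ℝ) =>
          (∫ y : Fin n → ℝ, H ε (x, y) * f ε y) - L ε (f ε) x) :=
  stmt16_general m n L hL
end

section
/- Let m, n ≥ 1, let Λ : 𝓢(ℝ^n) → 𝓢'(ℝ^m) be a continuous linear map into the space of tempered distributions, let s ∈ (0,1), let φ ∈ 𝓢(ℝ^m), and for ε ∈ (0,1] define L_ε : 𝓢(ℝ^n) → C^∞(ℝ^m) by L_ε(f)(x) = (Λ(f) ∗ φ_{ε^s})(x) = Λ(f)(y ↦ φ_{ε^s}(x−y)). Then each L_ε(f) is smooth with temperate growth, each L_ε is continuous into O_M(ℝ^m), and there exist p, q, l₁, l₂ ∈ ℕ such that for every l ∈ ℕ there exists C ≥ 0 with μ_{-p,l}(L_ε(f)) ≤ C ε^{-s(m+l₂+l)} μ_{q,l₁}(f) for all f ∈ 𝓢(ℝ^n)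 and all ε small enough; in particular (L_ε)_{ε∈(0,1]} is L_{0,c}-strongly moderate for every c ∈ (s,1]. -/
open MeasureTheory Filter

/-!
The topologies of the two Schwartz spaces are given by increasing sequences of seminorms. If no
seminorm order `k` bounded the bilinear form `(f, g) ↦ Λ f g`, there would be bounded sequences
`f_k` and `g_k` along which `Λ f_k g_k` is unbounded; so a single order `k` controls all the
distributions `Λ f`. The derivatives of `Λ f ∗ ρ` fall on `ρ`, translating `ρ` by `x` costs a
factor `(1 + ‖x‖) ^ k`, and for `ρ = φ_t` the order `k + l` costs `t ^ (-(m + k + l))`. With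
`t = ε ^ s` this exponent is affine in `l` with slope `s`, hence the moderateness for all `c > s`.
-/

open SchwartzMap LineDeriv Topology Asymptotics

section JointBound

variable {𝕜 X Y G : Type*} [RCLike 𝕜] [AddCommGroup X] [Module 𝕜 X] [AddCommGroup Y] [Module 𝕜 Y]
  [NormedAddCommGroup G] [NormedSpace 𝕜 G]

theorem norm_map_le_mul_of_seminorm_le_one {p : Seminorm 𝕜 X} {T : X →ₗ[𝕜] G} {M : ℝ}
    (h : ∀ x, p x ≤ 1 → ‖T x‖ ≤ M) (x : X) : ‖T x‖ ≤ M * p x := by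
  have : 0 ≤ M := by simpa using h 0 (by simp)
  have above : ∀ a, p x < a → ‖T x‖ ≤ M * a := fun a ha => by
    have ha₀ : 0 < a := (apply_nonneg p x).trans_lt ha
    have := h ((a : 𝕜)⁻¹ • x) <| by
      rw [map_smul_eq_mul, norm_inv, RCLike.norm_of_nonneg ha₀.le, inv_mul_le_iff₀ ha₀]
      linarith
    rwa [map_smul, norm_smul, norm_inv, RCLike.norm_of_nonneg ha₀.le, inv_mul_le_iff₀ ha₀,
      mul_comm] at this
  exact le_mul_of_forall_lt₀ fun M' hM' a ha =>
    (above a ha).trans <| by have := (apply_nonneg p x).trans_lt ha; gcongr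

theorem norm_map₂_le_mul_mul_of_seminorm_le_one {p : Seminorm 𝕜 X} {q : Seminorm 𝕜 Y}
    {B : X →ₗ[𝕜] Y →ₗ[𝕜] G} {M : ℝ} (h : ∀ x y, p x ≤ 1 → q y ≤ 1 → ‖B x y‖ ≤ M) (x : X) (y : Y) :
    ‖B x y‖ ≤ M * p x * q y := by
  refine (norm_map_le_mul_of_seminorm_le_one (T := B.flip y) (M := M * q y) (fun x hx => ?_)
    x).trans_eq (mul_right_comm _ _ _)
  exact norm_map_le_mul_of_seminorm_le_one (fun y hy => h x y hx hy) y

variable [TopologicalSpace X] [TopologicalSpace Y]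

theorem isVonNBounded_range_of_seminorm_le_one {p : SeminormFamily 𝕜 X ℕ} (hp : WithSeminorms p)
    (hmono : Monotone p) {x : ℕ → X} (hx : ∀ j, p j (x j) ≤ 1) :
    Bornology.IsVonNBounded 𝕜 (Set.range x) := by
  rw [hp.isVonNBounded_iff_seminorm_bounded]
  intro i
  have : IsBoundedUnder (· ≤ ·) atTop fun j => p i (x j) :=
    ⟨1, eventually_map.2 <| (eventually_ge_atTop i).mono fun j hij =>
      (hmono hij (x j)).trans (hx j)⟩
  obtain ⟨M, hM⟩ := this.bddAbove_range
  have hM₀ : 0 ≤ M := (apply_nonneg (p i) (x 0)).trans (hM ⟨0, rfl⟩)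
  refine ⟨M + 1, by positivity, ?_⟩
  rintro _ ⟨j, rfl⟩
  exact (hM ⟨j, rfl⟩).trans_lt (lt_add_one M)

-- The strong topology on `Y →L[𝕜] G` is what bounds the image of a bounded sequence of `X` along
-- a bounded sequence of `Y`.
theorem exists_norm_apply₂_le_mul_mul {p : SeminormFamily 𝕜 X ℕ} (hp : WithSeminorms p)
    (hpm : Monotone p) {q : SeminormFamily 𝕜 Y ℕ} (hq : WithSeminorms q) (hqm : Monotone q)
    (Λ : X →L[𝕜] Y →L[𝕜] G) :
    ∃ (k : ℕ) (C : ℝ), 0 ≤ C ∧ ∀ x y, ‖Λ x y‖ ≤ C * p k x * q k y := by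
  obtain ⟨k, hk⟩ : ∃ k : ℕ, ∀ x y, p k x ≤ 1 → q k y ≤ 1 → ‖Λ x y‖ ≤ k := by
    by_contra! hcon
    choose x y hx hy hxy using hcon
    have hbdd := ContinuousLinearMap.isVonNBounded_image2_apply
      ((isVonNBounded_range_of_seminorm_le_one hp hpm hx).image Λ)
      (isVonNBounded_range_of_seminorm_le_one hq hqm hy)
    obtain ⟨r, hr⟩ := (NormedSpace.isVonNBounded_iff' 𝕜).1 hbdd
    obtain ⟨j, hj⟩ := exists_nat_ge r
    exact (hxy j).not_ge <| (hr _ ⟨_, ⟨_, ⟨j, rfl⟩, rfl⟩, _, ⟨j, rfl⟩, rfl⟩).trans hj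
  exact ⟨k, k, k.cast_nonneg, norm_map₂_le_mul_mul_of_seminorm_le_one
    (B := (ContinuousLinearMap.coeLM 𝕜).comp Λ.toLinearMap) hk⟩

end JointBound

section SchwartzSup

variable {𝕜 E V : Type*} [RCLike 𝕜] [NormedAddCommGroup E] [NormedSpace ℝ E]
  [NormedAddCommGroup V] [NormedSpace ℝ V] [NormedSpace 𝕜 V] [SMulCommClass ℝ 𝕜 V]

variable (𝕜 E V) in
/-- The supremum of the Schwartz seminorms of decay and differentiation order at most `k`. Unlike
the Schwartz seminorms, which are indexed by pairs, they form a monotone sequence. -/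
noncomputable def schwartzSup (k : ℕ) : Seminorm 𝕜 𝓢(E, V) :=
  (Finset.Iic (k, k)).sup (schwartzSeminormFamily 𝕜 E V)

theorem seminorm_le_schwartzSup {a b k : ℕ} (ha : a ≤ k) (hb : b ≤ k) :
    SchwartzMap.seminorm 𝕜 a b ≤ schwartzSup 𝕜 E V k :=
  Finset.le_sup (f := schwartzSeminormFamily 𝕜 E V) (b := (a, b)) (Finset.mem_Iic.2 ⟨ha, hb⟩)

theorem schwartzSup_mono : Monotone (schwartzSup 𝕜 E V) := fun _ _ h =>
  Finset.sup_mono (Finset.Iic_subset_Iic.2 ⟨h, h⟩)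

theorem withSeminorms_schwartzSup : WithSeminorms (schwartzSup 𝕜 E V) := by
  refine (schwartz_withSeminorms 𝕜 E V).congr (fun k => ⟨Finset.Iic (k, k), 1, ?_⟩)
    fun ⟨a, b⟩ => ⟨{max a b}, 1, ?_⟩
  · rw [one_smul]
    exact le_rfl
  · rw [one_smul, Finset.sup_singleton]
    exact seminorm_le_schwartzSup (le_max_left a b) (le_max_right a b)

variable (𝕜) in
theorem weight_mul_norm_iteratedFDeriv_le {a i k : ℕ} (ha : a ≤ k) (hi : i ≤ k) (f : 𝓢(E, V))
    (x : E) : (1 + ‖x‖) ^ a * ‖iteratedFDeriv ℝ i f x‖ ≤ 2 ^ k * schwartzSup 𝕜 E V k f :=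
  SchwartzMap.one_add_le_sup_seminorm_apply (𝕜 := 𝕜) (m := (k, k)) ha hi f x

theorem schwartzSup_le {k : ℕ} {f : 𝓢(E, V)} {M : ℝ} (hM : 0 ≤ M)
    (h : ∀ i ≤ k, ∀ x, (1 + ‖x‖) ^ k * ‖iteratedFDeriv ℝ i f x‖ ≤ M) :
    schwartzSup 𝕜 E V k f ≤ M := by
  refine Seminorm.finset_sup_apply_le hM fun ⟨a, i⟩ hai => ?_
  obtain ⟨ha, hi⟩ := Finset.mem_Iic.1 hai
  refine SchwartzMap.seminorm_le_bound 𝕜 _ _ _ hM fun x => le_trans ?_ (h i hi x)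
  gcongr
  calc ‖x‖ ^ a ≤ (1 + ‖x‖) ^ a := by gcongr; linarith
    _ ≤ (1 + ‖x‖) ^ k := pow_le_pow_right₀ (by linarith [norm_nonneg x]) ha

theorem exists_norm_apply_le_schwartzSup {G : Type*} [NormedAddCommGroup G] [NormedSpace 𝕜 G]
    (T : 𝓢(E, V) →L[𝕜] G) : ∃ (k : ℕ) (C : ℝ), 0 ≤ C ∧ ∀ f, ‖T f‖ ≤ C * schwartzSup 𝕜 E V k f := by
  obtain ⟨s, C, -, hC⟩ := Seminorm.bound_of_continuous withSeminorms_schwartzSup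
    ((normSeminorm 𝕜 G).comp T.toLinearMap) T.continuous.norm
  have hs : s.sup (schwartzSup 𝕜 E V) ≤ schwartzSup 𝕜 E V (s.sup id) :=
    Finset.sup_le fun i hi => schwartzSup_mono (Finset.le_sup (f := id) hi)
  exact ⟨s.sup id, C, C.2, fun f => (hC f).trans (mul_le_mul_of_nonneg_left (hs f) C.2)⟩

end SchwartzSup

section LineDeriv

variable {𝕜 E V : Type*} [RCLike 𝕜] [NormedAddCommGroup E] [NormedSpace ℝ E]
  [NormedAddCommGroup V] [NormedSpace ℝ V] [NormedSpace 𝕜 V] [SMulCommClass ℝ 𝕜 V]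

theorem coe_lineDerivOp (h : E) (ρ : 𝓢(E, V)) : ⇑(∂_{h} ρ : 𝓢(E, V)) = fun y => fderiv ℝ ρ y h :=
  funext (SchwartzMap.lineDerivOp_apply_eq_fderiv h ρ)

theorem lineDerivOp_comm (a b : E) (ρ : 𝓢(E, V)) : ∂_{a} (∂_{b} ρ) = ∂_{b} (∂_{a} ρ) := by
  have second : ∀ u v x, (∂_{u} (∂_{v} ρ) : 𝓢(E, V)) x = fderiv ℝ (fderiv ℝ ρ) x u v :=
      fun u v x => by
    have : DifferentiableAt ℝ (fderiv ℝ ρ) x := (SchwartzMap.fderivCLM ℝ E V ρ).differentiableAt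
    rw [SchwartzMap.lineDerivOp_apply_eq_fderiv, coe_lineDerivOp,
      fderiv_clm_apply this (differentiableAt_const v)]
    simp
  ext x
  rw [second, second]
  exact ((ρ.contDiffAt 2).isSymmSndFDerivAt (by simp)).eq a b

theorem iteratedLineDerivOp_lineDerivOp_comm {i : ℕ} (w : Fin i → E) (h : E) (ρ : 𝓢(E, V)) :
    ∂^{w} (∂_{h} ρ) = ∂_{h} (∂^{w} ρ) := by
  induction i with
  | zero => simp only [iteratedLineDerivOp_fin_zero]
  | succ i ih =>
    rw [iteratedLineDerivOp_succ_left, iteratedLineDerivOp_succ_left, ih, lineDerivOp_comm]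

theorem norm_iteratedFDeriv_lineDerivOp_le (j : ℕ) (h : E) (ρ : 𝓢(E, V)) (v : E) :
    ‖iteratedFDeriv ℝ j (∂_{h} ρ : 𝓢(E, V)) v‖ ≤ ‖h‖ * ‖iteratedFDeriv ℝ (j + 1) ρ v‖ := by
  rw [coe_lineDerivOp, ← norm_iteratedFDeriv_fderiv]
  exact norm_iteratedFDeriv_clm_apply_const
    ((SchwartzMap.fderivCLM ℝ E V ρ).contDiffAt j) le_rfl

theorem norm_iteratedFDeriv_iteratedLineDerivOp_le {i : ℕ} (j : ℕ) (w : Fin i → E) (ρ : 𝓢(E, V))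
    (v : E) : ‖iteratedFDeriv ℝ j (∂^{w} ρ : 𝓢(E, V)) v‖ ≤
      (∏ a, ‖w a‖) * ‖iteratedFDeriv ℝ (j + i) ρ v‖ := by
  induction i generalizing j with
  | zero => simp
  | succ i ih =>
    rw [iteratedLineDerivOp_succ_left, Fin.prod_univ_succ]
    calc _ ≤ ‖w 0‖ * ‖iteratedFDeriv ℝ (j + 1) (∂^{Fin.tail w} ρ : 𝓢(E, V)) v‖ :=
          norm_iteratedFDeriv_lineDerivOp_le _ _ _ _
      _ ≤ ‖w 0‖ * ((∏ a, ‖Fin.tail w a‖) * ‖iteratedFDeriv ℝ (j + 1 + i) ρ v‖) := by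
          gcongr; exact ih _ _
      _ = _ := by rw [add_assoc j 1 i, add_comm 1 i, mul_assoc]; rfl

theorem schwartzSup_iteratedLineDerivOp_le (k : ℕ) {i : ℕ} (w : Fin i → E) (ρ : 𝓢(E, V)) :
    schwartzSup 𝕜 E V k (∂^{w} ρ) ≤ (∏ a, ‖w a‖) * schwartzSup 𝕜 E V (k + i) ρ := by
  have : 0 ≤ ∏ a, ‖w a‖ := Finset.prod_nonneg fun _ _ => norm_nonneg _
  refine Seminorm.finset_sup_apply_le (by positivity) fun ⟨a, j⟩ haj => ?_
  obtain ⟨ha, hj⟩ := Finset.mem_Iic.1 haj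
  refine SchwartzMap.seminorm_le_bound 𝕜 _ _ _ (by positivity) fun v => ?_
  calc ‖v‖ ^ a * ‖iteratedFDeriv ℝ j (∂^{w} ρ : 𝓢(E, V)) v‖
      ≤ ‖v‖ ^ a * ((∏ a, ‖w a‖) * ‖iteratedFDeriv ℝ (j + i) ρ v‖) := by
        gcongr; exact norm_iteratedFDeriv_iteratedLineDerivOp_le j w ρ v
    _ = (∏ a, ‖w a‖) * (‖v‖ ^ a * ‖iteratedFDeriv ℝ (j + i) ρ v‖) := mul_left_comm _ _ _
    _ ≤ _ := by
        gcongr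
        exact (SchwartzMap.le_seminorm 𝕜 a (j + i) ρ v).trans
          (seminorm_le_schwartzSup (le_add_right ha) (add_le_add_left hj i) ρ)

end LineDeriv

section Taylor

theorem one_add_norm_add_le {E : Type*} [SeminormedAddGroup E] (a b : E) :
    1 + ‖a + b‖ ≤ (1 + ‖a‖) * (1 + ‖b‖) := by
  nlinarith [norm_add_le a b, norm_nonneg a, norm_nonneg b]

variable {𝕜 E V : Type*} [RCLike 𝕜] [NormedAddCommGroup E] [NormedSpace ℝ E]
  [NormedAddCommGroup V] [NormedSpace ℝ V] [NormedSpace 𝕜 V] [SMulCommClass ℝ 𝕜 V]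

theorem norm_sub_sub_fderiv_apply_le {f : E → V} (hf : ContDiff ℝ 2 f) {v h : E} {M : ℝ}
    (hM : ∀ y ∈ Metric.closedBall v ‖h‖, ‖iteratedFDeriv ℝ 2 f y‖ ≤ M) :
    ‖f (v + h) - f v - fderiv ℝ f v h‖ ≤ M * ‖h‖ ^ 2 := by
  have hv : v ∈ Metric.closedBall v ‖h‖ := Metric.mem_closedBall_self (norm_nonneg h)
  have hM₀ : 0 ≤ M := (norm_nonneg _).trans (hM v hv)
  have hconv := convex_closedBall v ‖h‖
  have hf' : Differentiable ℝ (fderiv ℝ f) := (hf.fderiv_right le_rfl).differentiable one_ne_zero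
  have lipschitz : ∀ y ∈ Metric.closedBall v ‖h‖, ‖fderiv ℝ f y - fderiv ℝ f v‖ ≤ M * ‖h‖ :=
    fun y hy => by
      refine (hconv.norm_image_sub_le_of_norm_fderiv_le (𝕜 := ℝ) (C := M) (fun y _ => hf' y)
        (fun y hy => ?_) hv hy).trans ?_
      · rw [← norm_iteratedFDeriv_one, norm_iteratedFDeriv_fderiv]
        exact hM y hy
      · gcongr
        exact mem_closedBall_iff_norm.1 hy
  have := hconv.norm_image_sub_le_of_norm_fderiv_le' (𝕜 := ℝ)
    (fun y _ => hf.differentiable two_ne_zero y) lipschitz hv (y := v + h) (by simp)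
  rw [add_sub_cancel_left] at this
  exact this.trans_eq (by ring)

/-- The first-order Taylor remainder `v ↦ ρ (v + h) - ρ v - ∂_h ρ v` of a Schwartz function in the
direction `h`. As a Schwartz function it can be fed to distributions. -/
noncomputable def taylorRemainder (h : E) (ρ : 𝓢(E, V)) : 𝓢(E, V) :=
  ρ.compSubConstCLM ℝ (-h) - ρ - ∂_{h} ρ

theorem taylorRemainder_apply (h : E) (ρ : 𝓢(E, V)) (v : E) :
    taylorRemainder h ρ v = ρ (v + h) - ρ v - fderiv ℝ ρ v h := by
  simp [taylorRemainder, SchwartzMap.lineDerivOp_apply_eq_fderiv]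

theorem iteratedLineDerivOp_taylorRemainder {i : ℕ} (w : Fin i → E) (h : E) (ρ : 𝓢(E, V)) :
    ∂^{w} (taylorRemainder h ρ) = taylorRemainder h (∂^{w} ρ) := by
  have translate :
      ∂^{w} (ρ.compSubConstCLM ℝ (-h)) = (∂^{w} ρ : 𝓢(E, V)).compSubConstCLM ℝ (-h) := by
    ext v
    simp only [SchwartzMap.iteratedLineDerivOp_eq_iteratedFDeriv, SchwartzMap.compSubConstCLM_apply,
      ← iteratedFDeriv_comp_sub]
    rfl
  rw [taylorRemainder, taylorRemainder, ← translate, ← iteratedLineDerivOp_lineDerivOp_comm]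
  exact (map_sub (iteratedLineDerivOpCLM ℝ 𝓢(E, V) w) _ _).trans
    (congrArg (· - _) (map_sub (iteratedLineDerivOpCLM ℝ 𝓢(E, V) w) _ _))

theorem norm_iteratedFDeriv_taylorRemainder_le {i : ℕ} {h v : E} {M : ℝ} {ρ : 𝓢(E, V)}
    (hM : ∀ y ∈ Metric.closedBall v ‖h‖, ‖iteratedFDeriv ℝ (2 + i) ρ y‖ ≤ M) :
    ‖iteratedFDeriv ℝ i (taylorRemainder h ρ) v‖ ≤ M * ‖h‖ ^ 2 := by
  have hM₀ : 0 ≤ M :=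
    (norm_nonneg _).trans (hM v (Metric.mem_closedBall_self (norm_nonneg h)))
  refine ContinuousMultilinearMap.opNorm_le_bound (by positivity) fun w => ?_
  rw [← SchwartzMap.iteratedLineDerivOp_eq_iteratedFDeriv, iteratedLineDerivOp_taylorRemainder,
    taylorRemainder_apply, mul_right_comm, mul_comm M]
  refine norm_sub_sub_fderiv_apply_le ((∂^{w} ρ : 𝓢(E, V)).smooth 2) fun y hy => ?_
  refine (norm_iteratedFDeriv_iteratedLineDerivOp_le 2 w ρ y).trans ?_
  gcongr
  exact hM y hy

theorem schwartzSup_taylorRemainder_le (k : ℕ) {h : E} (hh : ‖h‖ ≤ 1) (ρ : 𝓢(E, V)) :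
    schwartzSup 𝕜 E V k (taylorRemainder h ρ) ≤
      2 ^ k * (2 ^ (k + 2) * schwartzSup 𝕜 E V (k + 2) ρ) * ‖h‖ ^ 2 := by
  refine schwartzSup_le (by positivity) fun i hi v => ?_
  have hv : 0 < (1 + ‖v‖) ^ k := by positivity
  rw [← le_div_iff₀' hv, mul_div_right_comm]
  refine norm_iteratedFDeriv_taylorRemainder_le fun y hy => ?_
  rw [le_div_iff₀' hv]
  have weight : 1 + ‖v‖ ≤ 2 * (1 + ‖y‖) := by
    have := one_add_norm_add_le (v - y) y
    rw [sub_add_cancel, norm_sub_rev] at this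
    refine this.trans ?_
    gcongr
    linarith [mem_closedBall_iff_norm.1 hy]
  calc (1 + ‖v‖) ^ k * ‖iteratedFDeriv ℝ (2 + i) ρ y‖
      ≤ (2 * (1 + ‖y‖)) ^ k * ‖iteratedFDeriv ℝ (2 + i) ρ y‖ := by gcongr
    _ = 2 ^ k * ((1 + ‖y‖) ^ k * ‖iteratedFDeriv ℝ (2 + i) ρ y‖) := by rw [mul_pow, mul_assoc]
    _ ≤ _ := by
        gcongr 2 ^ k * ?_
        exact weight_mul_norm_iteratedFDeriv_le 𝕜 (by lia) (by lia) ρ y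

end Taylor

section DistribConv

variable {𝕜 E V G : Type*} [RCLike 𝕜] [NormedAddCommGroup E] [NormedSpace ℝ E]
  [NormedAddCommGroup V] [NormedSpace ℝ V] [NormedSpace 𝕜 V] [SMulCommClass ℝ 𝕜 V]
  [NormedAddCommGroup G] [NormedSpace 𝕜 G]

/-- The reflected translate `v ↦ ρ (x - v)`, the test function against which a distribution is
evaluated to form its convolution with `ρ` at `x`. -/
noncomputable def reflTranslate (x : E) : 𝓢(E, V) →L[ℝ] 𝓢(E, V) :=
  (SchwartzMap.compSubConstCLM ℝ x).comp
    (SchwartzMap.compCLMOfContinuousLinearEquiv ℝ (ContinuousLinearEquiv.neg ℝ))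

theorem reflTranslate_apply (x : E) (ρ : 𝓢(E, V)) (v : E) :
    reflTranslate x ρ v = ρ (x - v) := by
  simp [reflTranslate]

theorem norm_iteratedFDeriv_reflTranslate (i : ℕ) (x : E) (ρ : 𝓢(E, V)) (v : E) :
    ‖iteratedFDeriv ℝ i (reflTranslate x ρ) v‖ = ‖iteratedFDeriv ℝ i ρ (x - v)‖ := by
  have : ⇑(reflTranslate x ρ) = fun v => (ρ ∘ LinearIsometryEquiv.neg ℝ) (v - x) := by
    ext v
    simp [reflTranslate_apply]
  rw [this, iteratedFDeriv_comp_sub, LinearIsometryEquiv.norm_iteratedFDeriv_comp_right]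
  simp

theorem schwartzSup_reflTranslate_le (k : ℕ) (x : E) (ρ : 𝓢(E, V)) :
    schwartzSup 𝕜 E V k (reflTranslate x ρ) ≤ (1 + ‖x‖) ^ k * (2 ^ k * schwartzSup 𝕜 E V k ρ) := by
  refine schwartzSup_le (by positivity) fun i hi v => ?_
  rw [norm_iteratedFDeriv_reflTranslate]
  have peetre : 1 + ‖v‖ ≤ (1 + ‖x‖) * (1 + ‖x - v‖) := by
    simpa [norm_sub_rev] using one_add_norm_add_le x (v - x)
  calc (1 + ‖v‖) ^ k * ‖iteratedFDeriv ℝ i ρ (x - v)‖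
      ≤ ((1 + ‖x‖) * (1 + ‖x - v‖)) ^ k * ‖iteratedFDeriv ℝ i ρ (x - v)‖ := by gcongr
    _ = (1 + ‖x‖) ^ k * ((1 + ‖x - v‖) ^ k * ‖iteratedFDeriv ℝ i ρ (x - v)‖) := by
      rw [mul_pow, mul_assoc]
    _ ≤ _ := by
      gcongr (1 + ‖x‖) ^ k * ?_
      exact weight_mul_norm_iteratedFDeriv_le 𝕜 le_rfl hi ρ _

theorem reflTranslate_taylorRemainder (x h : E) (ρ : 𝓢(E, V)) :
    reflTranslate x (taylorRemainder h ρ) =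
      reflTranslate (x + h) ρ - reflTranslate x ρ - reflTranslate x (∂_{h} ρ) := by
  ext v
  simp [reflTranslate_apply, taylorRemainder_apply, SchwartzMap.lineDerivOp_apply_eq_fderiv,
    add_sub_right_comm]

/-- The convolution `T ∗ ρ` of a tempered distribution `T` with a Schwartz function `ρ`, that is
`x ↦ T (v ↦ ρ (x - v))`. -/
noncomputable def distribConv (T : 𝓢(E, V) →L[𝕜] G) (ρ : 𝓢(E, V)) (x : E) : G :=
  T (reflTranslate x ρ)

theorem norm_distribConv_le {T : 𝓢(E, V) →L[𝕜] G} {k : ℕ} {C : ℝ} (hC : 0 ≤ C)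
    (hT : ∀ g, ‖T g‖ ≤ C * schwartzSup 𝕜 E V k g) (ρ : 𝓢(E, V)) (x : E) :
    ‖distribConv T ρ x‖ ≤ C * ((1 + ‖x‖) ^ k * (2 ^ k * schwartzSup 𝕜 E V k ρ)) :=
  (hT _).trans <| mul_le_mul_of_nonneg_left (schwartzSup_reflTranslate_le k x ρ) hC

theorem distribConv_taylorRemainder (T : 𝓢(E, V) →L[𝕜] G) (ρ : 𝓢(E, V)) (x h : E) :
    distribConv T (taylorRemainder h ρ) x =
      distribConv T ρ (x + h) - distribConv T ρ x - distribConv T (∂_{h} ρ) x := by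
  simp only [distribConv, reflTranslate_taylorRemainder, map_sub]

variable [NormedSpace ℝ G] [FiniteDimensional ℝ E]

/-- The derivative of `T ∗ ρ` at `x`, in which the differentiation falls on `ρ`. -/
noncomputable def distribConvDeriv (T : 𝓢(E, V) →L[𝕜] G) (ρ : 𝓢(E, V)) (x : E) : E →L[ℝ] G :=
  LinearMap.toContinuousLinearMap
    { toFun := fun h => distribConv T (∂_{h} ρ) x
      map_add' := fun a b => by
        simp only [distribConv, lineDerivOp_left_add, map_add]
      map_smul' := fun r a => by
        simp only [distribConv, lineDerivOp_left_smul, map_smul, RingHom.id_apply,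
          map_real_smul T T.continuous] }

theorem hasFDerivAt_distribConv (T : 𝓢(E, V) →L[𝕜] G) (ρ : 𝓢(E, V)) (x : E) :
    HasFDerivAt (distribConv T ρ) (distribConvDeriv T ρ x) x := by
  obtain ⟨k, C, hC, hT⟩ := exists_norm_apply_le_schwartzSup T
  rw [hasFDerivAt_iff_isLittleO_nhds_zero]
  refine (IsBigO.of_bound (C * ((1 + ‖x‖) ^ k * (2 ^ k *
    (2 ^ k * (2 ^ (k + 2) * schwartzSup 𝕜 E V (k + 2) ρ))))) ?_).trans_isLittleO
    (isLittleO_norm_pow_id one_lt_two)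
  filter_upwards [Metric.closedBall_mem_nhds (0 : E) one_pos] with h hh
  rw [mem_closedBall_zero_iff] at hh
  calc ‖distribConv T ρ (x + h) - distribConv T ρ x - distribConvDeriv T ρ x h‖
      = ‖distribConv T (taylorRemainder h ρ) x‖ := by rw [distribConv_taylorRemainder]; rfl
    _ ≤ C * ((1 + ‖x‖) ^ k * (2 ^ k * schwartzSup 𝕜 E V k (taylorRemainder h ρ))) :=
      norm_distribConv_le hC hT _ x
    _ ≤ C * ((1 + ‖x‖) ^ k * (2 ^ k *
        (2 ^ k * (2 ^ (k + 2) * schwartzSup 𝕜 E V (k + 2) ρ) * ‖h‖ ^ 2))) := by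
      gcongr
      exact schwartzSup_taylorRemainder_le k hh ρ
    _ = _ := by rw [norm_pow, norm_norm]; ring

theorem fderiv_distribConv_apply (T : 𝓢(E, V) →L[𝕜] G) (ρ : 𝓢(E, V)) (x h : E) :
    fderiv ℝ (distribConv T ρ) x h = distribConv T (∂_{h} ρ) x := by
  rw [(hasFDerivAt_distribConv T ρ x).fderiv]
  rfl

theorem contDiff_distribConv (T : 𝓢(E, V) →L[𝕜] G) (ρ : 𝓢(E, V)) :
    ContDiff ℝ (⊤ : ℕ∞) (distribConv T ρ) := by
  have differentiable : ∀ ρ, Differentiable ℝ (distribConv T ρ) := fun ρ x =>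
    (hasFDerivAt_distribConv T ρ x).differentiableAt
  rw [contDiff_infty]
  intro n
  induction n generalizing ρ with
  | zero => exact contDiff_zero.2 (differentiable ρ).continuous
  | succ n ih =>
    push_cast
    refine contDiff_succ_iff_fderiv.2 ⟨differentiable ρ, by simp, ?_⟩
    rw [contDiff_clm_apply_iff]
    intro h
    simp only [fderiv_distribConv_apply]
    exact ih (∂_{h} ρ)

theorem iteratedFDeriv_distribConv_apply (T : 𝓢(E, V) →L[𝕜] G) (ρ : 𝓢(E, V)) {i : ℕ}
    (w : Fin i → E) (x : E) :
    iteratedFDeriv ℝ i (distribConv T ρ) x w = distribConv T (∂^{w} ρ) x := by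
  induction i generalizing x with
  | zero => simp
  | succ i ih =>
    have := (contDiff_distribConv T ρ).differentiable_iteratedFDeriv
      (mod_cast ENat.natCast_lt_top i) x
    rw [iteratedLineDerivOp_succ_left, iteratedFDeriv_succ_apply_left,
      ← fderiv_continuousMultilinear_apply_const_apply this]
    simp only [ih, fderiv_distribConv_apply]

theorem norm_iteratedFDeriv_distribConv_le {T : 𝓢(E, V) →L[𝕜] G} {k : ℕ} {C : ℝ} (hC : 0 ≤ C)
    (hT : ∀ g, ‖T g‖ ≤ C * schwartzSup 𝕜 E V k g) (ρ : 𝓢(E, V)) (i : ℕ) (x : E) :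
    ‖iteratedFDeriv ℝ i (distribConv T ρ) x‖ ≤
      C * ((1 + ‖x‖) ^ k * (2 ^ k * schwartzSup 𝕜 E V (k + i) ρ)) := by
  refine ContinuousMultilinearMap.opNorm_le_bound (by positivity) fun w => ?_
  rw [iteratedFDeriv_distribConv_apply]
  calc ‖distribConv T (∂^{w} ρ) x‖
      ≤ C * ((1 + ‖x‖) ^ k * (2 ^ k * schwartzSup 𝕜 E V k (∂^{w} ρ))) :=
        norm_distribConv_le hC hT _ x
    _ ≤ C * ((1 + ‖x‖) ^ k * (2 ^ k * ((∏ a, ‖w a‖) * schwartzSup 𝕜 E V (k + i) ρ))) := by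
        gcongr
        exact schwartzSup_iteratedLineDerivOp_le k w ρ
    _ = _ := by ring

end DistribConv

section Mu

variable {E F : Type*} [NormedAddCommGroup E] [NormedSpace ℝ E] [NormedAddCommGroup F]
  [NormedSpace ℝ F]

theorem mu_le_ofReal_iff {r : ℤ} {l : ℕ} {f : E → ℂ} {M : ℝ} (hM : 0 ≤ M) :
    mu r l f ≤ ENNReal.ofReal M ↔
      ∀ x, ∀ i ≤ l, (1 + ‖x‖) ^ r * ‖iteratedFDeriv ℝ i f x‖ ≤ M := by
  simp only [mu, iSup_le_iff, ENNReal.ofReal_le_ofReal_iff hM]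

theorem mu_schwartz_lt_top (k : ℕ) (f : 𝓢(E, ℂ)) : mu k k f < ⊤ := by
  refine ((mu_le_ofReal_iff (M := 2 ^ k * schwartzSup ℂ E ℂ k f) (by positivity)).2
    fun x i hi => ?_).trans_lt ENNReal.ofReal_lt_top
  rw [zpow_natCast]
  exact weight_mul_norm_iteratedFDeriv_le ℂ le_rfl hi f x

theorem ofReal_schwartzSup_le_mu (k : ℕ) (f : 𝓢(E, ℂ)) :
    ENNReal.ofReal (schwartzSup ℂ E ℂ k f) ≤ mu k k f := by
  have hμ := ENNReal.ofReal_toReal (mu_schwartz_lt_top k f).ne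
  rw [← hμ]
  refine ENNReal.ofReal_le_ofReal (schwartzSup_le ENNReal.toReal_nonneg fun i hi x => ?_)
  rw [← zpow_natCast]
  exact (mu_le_ofReal_iff ENNReal.toReal_nonneg).1 hμ.ge x i hi

variable [FiniteDimensional ℝ E]

theorem mu_distribConv_le {T : 𝓢(E, ℂ) →L[ℂ] ℂ} {k : ℕ} {C : ℝ} (hC : 0 ≤ C)
    (hT : ∀ g, ‖T g‖ ≤ C * schwartzSup ℂ E ℂ k g) (l : ℕ) (ρ : 𝓢(E, ℂ)) :
    mu (-k) l (distribConv T ρ) ≤ ENNReal.ofReal (C * (2 ^ k * schwartzSup ℂ E ℂ (k + l) ρ)) := by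
  refine (mu_le_ofReal_iff (by positivity)).2 fun x i hi => ?_
  rw [zpow_neg, zpow_natCast, inv_mul_le_iff₀ (by positivity)]
  calc ‖iteratedFDeriv ℝ i (distribConv T ρ) x‖
      ≤ C * ((1 + ‖x‖) ^ k * (2 ^ k * schwartzSup ℂ E ℂ (k + i) ρ)) :=
        norm_iteratedFDeriv_distribConv_le hC hT ρ i x
    _ ≤ C * ((1 + ‖x‖) ^ k * (2 ^ k * schwartzSup ℂ E ℂ (k + l) ρ)) := by
        gcongr C * (_ * (_ * ?_))
        exact schwartzSup_mono (add_le_add_right hi k) ρ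
    _ = _ := mul_left_comm _ _ _

theorem temperateGrowth_distribConv (T : 𝓢(E, ℂ) →L[ℂ] ℂ) (ρ : 𝓢(E, ℂ)) :
    TemperateGrowth' (distribConv T ρ) := by
  obtain ⟨k, C, hC, hT⟩ := exists_norm_apply_le_schwartzSup T
  exact ⟨contDiff_distribConv T ρ, fun l =>
    ⟨k, (mu_distribConv_le hC hT l ρ).trans_lt ENNReal.ofReal_lt_top⟩⟩

theorem exists_mu_distribConv_le (Λ : 𝓢(F, ℂ) →L[ℂ] 𝓢(E, ℂ) →L[ℂ] ℂ) :
    ∃ (k : ℕ) (C : ℝ), 0 ≤ C ∧ ∀ l f ρ, mu (-k) l (distribConv (Λ f) ρ) ≤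
      ENNReal.ofReal (C * schwartzSup ℂ E ℂ (k + l) ρ) * mu k k f := by
  obtain ⟨k, C, hC, hΛ⟩ := exists_norm_apply₂_le_mul_mul withSeminorms_schwartzSup
    schwartzSup_mono withSeminorms_schwartzSup schwartzSup_mono Λ
  refine ⟨k, C * 2 ^ k, by positivity, fun l f ρ => ?_⟩
  calc mu (-k) l (distribConv (Λ f) ρ)
      ≤ ENNReal.ofReal (C * schwartzSup ℂ F ℂ k f * (2 ^ k * schwartzSup ℂ E ℂ (k + l) ρ)) :=
        mu_distribConv_le (by positivity) (hΛ f) l ρ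
    _ = ENNReal.ofReal (C * 2 ^ k * schwartzSup ℂ E ℂ (k + l) ρ) *
        ENNReal.ofReal (schwartzSup ℂ F ℂ k f) := by
        rw [← ENNReal.ofReal_mul (by positivity)]
        ring_nf
    _ ≤ _ := by
        gcongr
        exact ofReal_schwartzSup_le_mu k f

end Mu

theorem continuousIntoOM_distribConv {m n : ℕ}
    (Λ : 𝓢(Fin n → ℝ, ℂ) →L[ℂ] 𝓢(Fin m → ℝ, ℂ) →L[ℂ] ℂ) (ρ : 𝓢(Fin m → ℝ, ℂ)) :
    ContinuousIntoOM m n fun f => distribConv (Λ f) ρ := by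
  obtain ⟨k, C, hC, hΛ⟩ := exists_mu_distribConv_le Λ
  exact fun l => ⟨_, by positivity, k, k, k, fun f => hΛ l f ρ⟩

section Scaling

variable {d : ℕ} {φ ρ : 𝓢(Fin d → ℝ, ℂ)} {t : ℝ}

theorem norm_iteratedFDeriv_scaled (φ : 𝓢(Fin d → ℝ, ℂ)) (ht : 0 < t) (i : ℕ) (v : Fin d → ℝ) :
    ‖iteratedFDeriv ℝ i (scaled φ t) v‖ = t⁻¹ ^ (d + i) * ‖iteratedFDeriv ℝ i φ (t⁻¹ • v)‖ := by
  have : scaled φ t = fun v => (t⁻¹ ^ d : ℝ) • φ (t⁻¹ • v) := by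
    ext v
    simp [scaled]
  have smooth : ContDiff ℝ i fun v => φ (t⁻¹ • v) := (φ.smooth i).comp (contDiff_const_smul _)
  rw [this, iteratedFDeriv_const_smul_apply' smooth.contDiffAt,
    iteratedFDeriv_comp_const_smul _ (φ.smooth i), norm_smul, norm_smul,
    Real.norm_of_nonneg (by positivity), Real.norm_of_nonneg (by positivity), pow_add, mul_assoc]

theorem schwartzSup_le_of_eq_scaled (ht : t ∈ Set.Ioc 0 1) (hρ : ⇑ρ = scaled φ t) (k : ℕ) :
    schwartzSup ℂ _ ℂ k ρ ≤ t⁻¹ ^ (d + k) * schwartzSup ℂ _ ℂ k φ := by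
  have ht₀ := ht.1
  have ht₁ : 1 ≤ t⁻¹ := (one_le_inv₀ ht.1).2 ht.2
  refine Seminorm.finset_sup_apply_le (by positivity) fun ⟨a, i⟩ hai => ?_
  obtain ⟨ha, hi⟩ := Finset.mem_Iic.1 hai
  refine SchwartzMap.seminorm_le_bound ℂ _ _ _ (by positivity) fun v => ?_
  have hv : ‖v‖ ≤ ‖t⁻¹ • v‖ := by
    rw [norm_smul, Real.norm_of_nonneg (by positivity)]
    exact le_mul_of_one_le_left (norm_nonneg v) ht₁
  rw [hρ, norm_iteratedFDeriv_scaled φ ht₀, mul_left_comm]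
  gcongr t⁻¹ ^ ?_ * ?_
  · exact add_le_add_right hi d
  · calc ‖v‖ ^ a * ‖iteratedFDeriv ℝ i φ (t⁻¹ • v)‖
        ≤ ‖t⁻¹ • v‖ ^ a * ‖iteratedFDeriv ℝ i φ (t⁻¹ • v)‖ := by gcongr
      _ ≤ SchwartzMap.seminorm ℂ a i φ := SchwartzMap.le_seminorm ℂ a i φ _
      _ ≤ schwartzSup ℂ _ ℂ k φ := seminorm_le_schwartzSup ha hi φ

theorem rpow_mem_Ioc {ε s : ℝ} (hε : ε ∈ Set.Ioc 0 1) (hs : 0 ≤ s) : ε ^ s ∈ Set.Ioc 0 1 :=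
  ⟨Real.rpow_pos_of_pos hε.1 s, Real.rpow_le_one hε.1.le hε.2 hs⟩

theorem inv_rpow_pow {ε : ℝ} (hε : 0 ≤ ε) (s : ℝ) (N : ℕ) :
    (ε ^ s)⁻¹ ^ N = ε ^ (-(s * N)) := by
  rw [← Real.rpow_neg hε, ← Real.rpow_mul_natCast hε, neg_mul]

theorem exists_mu_distribConv_scaled_rpow_le {n : ℕ} {s : ℝ} (hs : 0 ≤ s)
    (Λ : 𝓢(Fin n → ℝ, ℂ) →L[ℂ] 𝓢(Fin d → ℝ, ℂ) →L[ℂ] ℂ) (φ : 𝓢(Fin d → ℝ, ℂ)) :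
    ∃ k : ℕ, ∀ l : ℕ, ∃ C ≥ (0 : ℝ), ∀ ε ∈ Set.Ioc (0 : ℝ) 1, ∀ ρ : 𝓢(Fin d → ℝ, ℂ),
      ⇑ρ = scaled φ (ε ^ s) → ∀ f, mu (-k) l (distribConv (Λ f) ρ) ≤
        ENNReal.ofReal (C * ε ^ (-(s * ((d : ℝ) + k + l)))) * mu k k f := by
  obtain ⟨k, C, hC, hΛ⟩ := exists_mu_distribConv_le Λ
  refine ⟨k, fun l => ⟨C * schwartzSup ℂ _ ℂ (k + l) φ, by positivity, fun ε hε ρ hρ f => ?_⟩⟩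
  have hsup := schwartzSup_le_of_eq_scaled (rpow_mem_Ioc hε hs) hρ (k + l)
  rw [inv_rpow_pow hε.1.le, mul_comm] at hsup
  push_cast at hsup
  refine (hΛ l f ρ).trans ?_
  rw [mul_assoc C, add_assoc (d : ℝ)]
  gcongr

end Scaling

theorem exists_eq_distribConv {𝕜 E V G : Type*} [RCLike 𝕜] [NormedAddCommGroup E] [NormedSpace ℝ E]
    [NormedAddCommGroup V] [NormedSpace ℝ V] [NormedSpace 𝕜 V] [SMulCommClass ℝ 𝕜 V]
    [NormedAddCommGroup G] [NormedSpace 𝕜 G]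
    {ψ : E → V} {Φ : E → 𝓢(E, V)} (hΦ : ∀ x v, Φ x v = ψ (x - v)) :
    ∃ ρ : 𝓢(E, V), ⇑ρ = ψ ∧ ∀ (T : 𝓢(E, V) →L[𝕜] G) x, T (Φ x) = distribConv T ρ x := by
  have hρ : ⇑(reflTranslate 0 (Φ 0)) = ψ := by
    ext v
    simp [reflTranslate_apply, hΦ]
  refine ⟨_, hρ, fun T x => congrArg T ?_⟩
  ext v
  rw [reflTranslate_apply, hρ, hΦ]

theorem memLa_mul_add {s c b : ℝ} (hs : 0 ≤ s) (hsc : s < c) (hb : 0 ≤ b) :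
    MemLa c fun l => s * (b + l) := by
  have lim : Tendsto (fun l : ℕ => s * (b + l) / l) atTop (𝓝 s) := by
    have := (tendsto_const_div_atTop_nhds_zero_nat (s * b)).add_const s
    rw [zero_add] at this
    refine this.congr' <| (eventually_ne_atTop 0).mono fun l hl => ?_
    field_simp
  exact ⟨fun l => by positivity, Or.inr ⟨hs.trans_lt hsc, lim.limsup_eq.trans_lt hsc⟩⟩

theorem stmt17_general (m n : ℕ)
    (Λ : SchwartzMap (Fin n → ℝ) ℂ →L[ℂ] (SchwartzMap (Fin m → ℝ) ℂ →L[ℂ] ℂ))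
    (s : ℝ) (hs : 0 ≤ s)
    (φ : SchwartzMap (Fin m → ℝ) ℂ)
    (Φ : ℝ → (Fin m → ℝ) → SchwartzMap (Fin m → ℝ) ℂ)
    (hΦ : ∀ t ∈ Set.Ioc (0 : ℝ) 1, ∀ x v, Φ t x v = scaled ⇑φ t (x - v))
    (L : ℝ → SchwartzMap (Fin n → ℝ) ℂ → ((Fin m → ℝ) → ℂ))
    (hLdef : ∀ ε ∈ Set.Ioc (0 : ℝ) 1, ∀ f x, L ε f x = Λ f (Φ (ε ^ s) x)) :
    (∀ ε ∈ Set.Ioc (0 : ℝ) 1, ∀ f, TemperateGrowth' (L ε f)) ∧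
    (∀ ε ∈ Set.Ioc (0 : ℝ) 1, ContinuousIntoOM m n (L ε)) ∧
    (∃ p q l₁ l₂ : ℕ, ∀ l : ℕ, ∃ C ≥ (0 : ℝ), ∃ η > (0 : ℝ), ∀ ε : ℝ, 0 < ε → ε ≤ η →
      ∀ f : SchwartzMap (Fin n → ℝ) ℂ,
        mu (-(p : ℤ)) l (L ε f)
          ≤ ENNReal.ofReal (C * ε ^ (-(s * ((m : ℝ) + l₂ + l)))) * mu (q : ℤ) l₁ ⇑f) ∧
    (∀ c : ℝ, s < c → ∃ lam : ℕ → ℕ, ∃ r : ℕ → ℝ,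
      Filter.Tendsto (fun l : ℕ => (lam l : ℝ) / (l : ℝ)) Filter.atTop (nhds 0) ∧
      MemLa c r ∧ StronglyModerateWith m n L lam r) := by
  have hconv : ∀ ε ∈ Set.Ioc (0 : ℝ) 1, ∃ ρ : 𝓢(Fin m → ℝ, ℂ),
      ⇑ρ = scaled φ (ε ^ s) ∧ L ε = fun f => distribConv (Λ f) ρ := fun ε hε => by
    obtain ⟨ρ, hρ, hT⟩ := exists_eq_distribConv (𝕜 := ℂ) (G := ℂ) (hΦ _ (rpow_mem_Ioc hε hs))
    exact ⟨ρ, hρ, funext₂ fun f x => (hLdef ε hε f x).trans (hT (Λ f) x)⟩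
  have temperate : ∀ ε ∈ Set.Ioc (0 : ℝ) 1, ∀ f, TemperateGrowth' (L ε f) := fun ε hε f => by
    obtain ⟨ρ, -, hL⟩ := hconv ε hε
    exact hL ▸ temperateGrowth_distribConv (Λ f) ρ
  obtain ⟨k, hk⟩ := exists_mu_distribConv_scaled_rpow_le hs Λ φ
  have moderate : ∀ l : ℕ, ∃ C ≥ (0 : ℝ), ∃ η > (0 : ℝ), ∀ ε : ℝ, 0 < ε → ε ≤ η → ∀ f,
      mu (-k) l (L ε f) ≤ ENNReal.ofReal (C * ε ^ (-(s * ((m : ℝ) + k + l)))) * mu k k f :=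
    fun l => by
      obtain ⟨C, hC, bound⟩ := hk l
      refine ⟨C, hC, 1, one_pos, fun ε h₀ h₁ f => ?_⟩
      obtain ⟨ρ, hρ, hL⟩ := hconv ε ⟨h₀, h₁⟩
      exact hL ▸ bound ε ⟨h₀, h₁⟩ ρ hρ f
  refine ⟨temperate, fun ε hε => ?_, ⟨k, k, k, k, moderate⟩, fun c hsc => ?_⟩
  · obtain ⟨ρ, -, hL⟩ := hconv ε hε
    exact hL ▸ continuousIntoOM_distribConv Λ ρ
  · have hr : MemLa c fun l => s * ((m : ℝ) + k + l) := memLa_mul_add hs hsc (by positivity)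
    refine ⟨fun _ => k, _, tendsto_const_div_atTop_nhds_zero_nat _, hr, temperate, hr.1,
      fun l => ?_⟩
    obtain ⟨C, hC, bound⟩ := moderate l
    exact ⟨C, hC, k, k, bound⟩


/-- the regularization net `L_ε(f) = Λ(f) ∗ φ_{ε^s}` of a continuous
linear map `Λ : 𝓢(ℝ^n) → 𝓢'(ℝ^m)` is continuous into `O_M`, satisfies the explicit
moderation estimate, and is `L_{0,c}`-strongly moderate for every `c ∈ (s,1]`. -/
theorem stmt17 (m n : ℕ) (hm : 1 ≤ m) (hn : 1 ≤ n)
    (Λ : SchwartzMap (Fin n → ℝ) ℂ →L[ℂ] (SchwartzMap (Fin m → ℝ) ℂ →L[ℂ] ℂ))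
    (s : ℝ) (hs : s ∈ Set.Ioo (0:ℝ) 1)
    (φ : SchwartzMap (Fin m → ℝ) ℂ)
    (Φ : ℝ → (Fin m → ℝ) → SchwartzMap (Fin m → ℝ) ℂ)
    (hΦ : ∀ t ∈ Set.Ioc (0:ℝ) 1, ∀ x v, Φ t x v = scaled ⇑φ t (x - v))
    (L : ℝ → SchwartzMap (Fin n → ℝ) ℂ → ((Fin m → ℝ) → ℂ))
    (hLdef : ∀ ε ∈ Set.Ioc (0:ℝ) 1, ∀ f x, L ε f x = Λ f (Φ (ε ^ s) x)) :
    (∀ ε ∈ Set.Ioc (0:ℝ) 1, ∀ f, TemperateGrowth' (L ε f)) ∧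
    (∀ ε ∈ Set.Ioc (0:ℝ) 1, ContinuousIntoOM m n (L ε)) ∧
    (∃ p q l₁ l₂ : ℕ, ∀ l : ℕ, ∃ C ≥ (0:ℝ), ∃ η > (0:ℝ), ∀ ε : ℝ, 0 < ε → ε ≤ η →
      ∀ f : SchwartzMap (Fin n → ℝ) ℂ,
        mu (-(p:ℤ)) l (L ε f)
          ≤ ENNReal.ofReal (C * ε ^ (-(s * ((m:ℝ) + l₂ + l)))) * mu (q:ℤ) l₁ ⇑f) ∧
    (∀ c : ℝ, s < c → c ≤ 1 → ∃ lam : ℕ → ℕ, ∃ r : ℕ → ℝ,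
      Filter.Tendsto (fun l : ℕ => (lam l : ℝ) / (l:ℝ)) Filter.atTop (nhds 0) ∧
      MemLa c r ∧ StronglyModerateWith m n L lam r) := by
  obtain ⟨temperate, continuous, moderate, strong⟩ := stmt17_general m n Λ s hs.1.le φ Φ hΦ L hLdef
  exact ⟨temperate, continuous, moderate, fun c hsc _ => strong c hsc⟩
end

section
/- Let u be a tempered distribution on ℝ^m, let s ∈ (0,1), and let φ be a mollifier on ℝ^m. For ε ∈ (0,1] define the smooth function (u ∗ φ_{ε^s})(x) = u(y ↦ φ_{ε^s}(x−y)). Then for every g ∈ 𝓢(ℝ^m) and every p ∈ ℕ: ∫_{ℝ^m} (u ∗ φ_{ε^s})(x) g(x) dx − u(g) = O(ε^p) as ε → 0. That is, the net (u ∗ φ_{ε^s})_{ε∈(0,1]} is equal to u in the generalized distribution sense. -/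
open MeasureTheory Filter

/-!
The pairing of `u ∗ φ_t` with `g` is `∫ g x * u (φ_t (x - ·)) dx`, and `u` may be taken out of this
integral: by Hahn–Banach a tempered distribution factors through finitely many weighted jets
`y ↦ ‖y‖ ^ k • iteratedFDeriv ℝ n f y`, which live in Banach spaces, where continuous functionals
commute with Bochner integrals. After the substitution `x = y + t • z` the argument of `u` becomes
the average `y ↦ ∫ φ z • g (y + t • z) dz`. Expanding `g` and its derivatives by Taylor's formula in
`t • z`, the vanishing moments of `φ` leave only the term `g y` and a remainder of order
`t ^ (N + 1)` in every Schwartz seminorm. With `t = ε ^ s` and `N` large this is `O(ε ^ p)`.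
-/

open scoped SchwartzMap Topology

section Estimates

variable {E F : Type*} [NormedAddCommGroup E] [NormedSpace ℝ E]
  [NormedAddCommGroup F] [NormedSpace ℝ F]

theorem norm_iteratedFDeriv_iteratedFDeriv (f : E → F) (n j : ℕ) (x : E) :
    ‖iteratedFDeriv ℝ j (iteratedFDeriv ℝ n f) x‖ = ‖iteratedFDeriv ℝ (n + j) f x‖ := by
  induction n generalizing j with
  | zero =>
    rw [iteratedFDeriv_zero_eq_comp, LinearIsometryEquiv.norm_iteratedFDeriv_comp_left, zero_add]
  | succ n ih =>
    have hcurry := (continuousMultilinearCurryLeftEquiv ℝ (fun _ : Fin (n + 1) => E)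
      F).symm.norm_iteratedFDeriv_comp_left (𝕜 := ℝ) (fderiv ℝ (iteratedFDeriv ℝ n f)) x j
    rw [iteratedFDeriv_succ_eq_comp_left, hcurry, norm_iteratedFDeriv_fderiv, ih,
      Nat.add_right_comm, add_assoc]

theorem exists_pow_mul_norm_iteratedFDeriv_add_le (f : 𝓢(E, F)) (k n : ℕ) :
    ∃ C, 0 ≤ C ∧ ∀ y v : E, ‖y‖ ^ k * ‖iteratedFDeriv ℝ n f (y + v)‖ ≤ C * (1 + ‖v‖) ^ k := by
  refine ⟨2 ^ k * (Finset.Iic (k, n)).sup (fun i => SchwartzMap.seminorm ℝ i.1 i.2) f,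
    by positivity, fun y v => ?_⟩
  have hpeetre : ‖y‖ ≤ (1 + ‖y + v‖) * (1 + ‖v‖) := by
    have := norm_sub_le (y + v) v
    rw [add_sub_cancel_right] at this
    nlinarith [norm_nonneg (y + v), norm_nonneg v]
  calc ‖y‖ ^ k * ‖iteratedFDeriv ℝ n f (y + v)‖
      ≤ ((1 + ‖y + v‖) * (1 + ‖v‖)) ^ k * ‖iteratedFDeriv ℝ n f (y + v)‖ := by gcongr
    _ = ((1 + ‖y + v‖) ^ k * ‖iteratedFDeriv ℝ n f (y + v)‖) * (1 + ‖v‖) ^ k := by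
      rw [mul_pow]; ring
    _ ≤ _ := by
      gcongr ?_ * _
      exact SchwartzMap.one_add_le_sup_seminorm_apply (𝕜 := ℝ) (m := (k, n)) le_rfl le_rfl f _

theorem norm_sub_taylor_le [CompleteSpace F] {h : E → F} {N : ℕ} (hh : ContDiff ℝ (N + 1) h)
    {y v : E} {B : ℝ} (hB : ∀ r ∈ Set.Icc (0 : ℝ) 1, ‖iteratedFDeriv ℝ (N + 1) h (y + r • v)‖ ≤ B) :
    ‖h (y + v) - ∑ j ∈ Finset.range (N + 1),
      (j.factorial : ℝ)⁻¹ • iteratedFDeriv ℝ j h y fun _ => v‖ ≤ B * ‖v‖ ^ (N + 1) := by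
  have hfact : ‖(N.factorial : ℝ)⁻¹‖ ≤ 1 := by
    rw [norm_inv, Real.norm_natCast]
    exact inv_le_one_of_one_le₀ (mod_cast Nat.factorial_pos N)
  have h_int : ‖∫ r in (0 : ℝ)..1,
      (1 - r) ^ N • iteratedFDeriv ℝ (N + 1) h (y + r • v) fun _ => v‖ ≤
        B * ‖v‖ ^ (N + 1) * |(1 : ℝ) - 0| := by
    refine intervalIntegral.norm_integral_le_of_norm_le_const fun r hr => ?_
    rw [Set.uIoc_of_le zero_le_one] at hr
    have hr' : ‖(1 - r) ^ N‖ ≤ 1 := by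
      rw [norm_pow, Real.norm_eq_abs]
      exact pow_le_one₀ (abs_nonneg _) (abs_le.2 ⟨by linarith [hr.2], by linarith [hr.1]⟩)
    rw [norm_smul]
    refine (mul_le_of_le_one_left (norm_nonneg _) hr').trans ?_
    simpa using (iteratedFDeriv ℝ (N + 1) h (y + r • v)).le_of_opNorm_le
      (hB r ⟨hr.1.le, hr.2⟩) fun _ => v
  rw [map_add_eq_sum_add_integral_iteratedFDeriv fun r _ => hh.contDiffAt, add_sub_cancel_left,
    norm_smul]
  refine (mul_le_of_le_one_left (norm_nonneg _) hfact).trans ?_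
  simpa using h_int

theorem exists_pow_mul_norm_iteratedFDeriv_sub_taylor_le [CompleteSpace F] (f : 𝓢(E, F))
    (k n N : ℕ) : ∃ C, 0 ≤ C ∧ ∀ y v : E,
      ‖y‖ ^ k * ‖iteratedFDeriv ℝ n f (y + v) - ∑ j ∈ Finset.range (N + 1),
        (j.factorial : ℝ)⁻¹ • iteratedFDeriv ℝ j (iteratedFDeriv ℝ n f) y fun _ => v‖ ≤
      C * (1 + ‖v‖) ^ k * ‖v‖ ^ (N + 1) := by
  obtain ⟨C, hC, h⟩ := exists_pow_mul_norm_iteratedFDeriv_add_le f k (n + (N + 1))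
  refine ⟨C, hC, fun y v => ?_⟩
  obtain hy | hy := (pow_nonneg (norm_nonneg y) k).eq_or_lt
  · rw [← hy, zero_mul]
    positivity
  have hsmooth : ContDiff ℝ (N + 1) (iteratedFDeriv ℝ n f) :=
    (f.smooth (N + 1 + n : ℕ)).iteratedFDeriv_right (by norm_cast)
  have htaylor := norm_sub_taylor_le hsmooth (y := y) (v := v)
    (B := C * (1 + ‖v‖) ^ k / ‖y‖ ^ k) fun r hr => by
      rw [norm_iteratedFDeriv_iteratedFDeriv, le_div_iff₀' hy]
      refine (h y (r • v)).trans ?_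
      gcongr
      rw [norm_smul, Real.norm_of_nonneg hr.1]
      exact mul_le_of_le_one_left (norm_nonneg v) hr.2
  rwa [div_mul_eq_mul_div, le_div_iff₀' hy] at htaylor

theorem iteratedFDeriv_schwartz_sub (f g : 𝓢(E, F)) (n : ℕ) (y : E) :
    iteratedFDeriv ℝ n (f - g : 𝓢(E, F)) y = iteratedFDeriv ℝ n f y - iteratedFDeriv ℝ n g y :=
  iteratedFDeriv_sub_apply (f.contDiffAt n) (g.contDiffAt n)

theorem iteratedFDeriv_compSubConstCLM (𝕜 : Type*) [RCLike 𝕜] [NormedSpace 𝕜 F]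
    (f : 𝓢(E, F)) (n : ℕ) (a y : E) :
    iteratedFDeriv ℝ n (f.compSubConstCLM 𝕜 a) y = iteratedFDeriv ℝ n f (y - a) :=
  iteratedFDeriv_comp_sub n a y

theorem continuous_compSubConstCLM (𝕜 : Type*) [RCLike 𝕜] [NormedSpace 𝕜 F]
    [CompleteSpace F] (f : 𝓢(E, F)) :
    Continuous fun a : E => f.compSubConstCLM 𝕜 a := by
  have hzero : Tendsto (fun a : E => f.compSubConstCLM 𝕜 a) (𝓝 0) (𝓝 f) := by
    refine ((schwartz_withSeminorms 𝕜 E F).tendsto_nhds _ _).2 fun ⟨k, n⟩ ε hε => ?_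
    obtain ⟨C, hC, h⟩ := exists_pow_mul_norm_iteratedFDeriv_sub_taylor_le f k n 0
    have hlim : Tendsto (fun a : E => C * (1 + ‖a‖) ^ k * ‖a‖) (𝓝 0) (𝓝 0) := by
      have : Continuous fun a : E => C * (1 + ‖a‖) ^ k * ‖a‖ := by fun_prop
      simpa using this.tendsto 0
    filter_upwards [hlim.eventually_lt_const hε] with a ha
    refine (SchwartzMap.seminorm_le_bound 𝕜 k n _ (by positivity) fun y => ?_).trans_lt ha
    rw [iteratedFDeriv_schwartz_sub, iteratedFDeriv_compSubConstCLM]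
    simpa [sub_eq_add_neg] using h y (-a)
  refine continuous_iff_continuousAt.2 fun a => ?_
  have hshift : Tendsto (fun b : E => b - a) (𝓝 a) (𝓝 0) := by
    simpa using (continuous_sub_right a).tendsto a
  have := ((SchwartzMap.compSubConstCLM 𝕜 a).continuous.tendsto f).comp (hzero.comp hshift)
  simpa [ContinuousAt, Function.comp_def, SchwartzMap.compSubConstCLM_comp] using this

end Estimates

section TranslationWeight

variable {𝕜 E Z : Type*} [RCLike 𝕜] [NormedAddCommGroup E] [MeasurableSpace Z]

/-- A weight `w` on a measure space together with a family of shifts `a` such that every polynomial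
in `‖a z‖` is integrable against `w`; this is what makes averages of the translates by `a z`
converge in the Schwartz space. -/
structure IsTranslationWeight (μ : Measure Z) (w : Z → 𝕜) (a : Z → E) : Prop where
  aestronglyMeasurable_weight : AEStronglyMeasurable w μ
  aestronglyMeasurable_shift : AEStronglyMeasurable a μ
  integrable_pow_mul_norm : ∀ k : ℕ, Integrable (fun z => (1 + ‖a z‖) ^ k * ‖w z‖) μ

theorem isTranslationWeight_smul [NormedSpace ℝ E] [MeasurableSpace E] [BorelSpace E]
    [SecondCountableTopology E] {ν : Measure E} [ν.HasTemperateGrowth] (φ : 𝓢(E, 𝕜)) (t : ℝ) :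
    IsTranslationWeight ν φ fun x : E => t • x where
  aestronglyMeasurable_weight := φ.continuous.aestronglyMeasurable
  aestronglyMeasurable_shift := (continuous_const_smul t).aestronglyMeasurable
  integrable_pow_mul_norm k := by
    have hpow : Integrable (fun x => 2 ^ (k - 1) * (‖φ x‖ + |t| ^ k * (‖x‖ ^ k * ‖φ x‖))) ν :=
      (φ.integrable.norm.add ((φ.integrable_pow_mul ν k).const_mul _)).const_mul _
    refine hpow.mono' (by fun_prop) (Eventually.of_forall fun x => ?_)
    rw [Real.norm_of_nonneg (by positivity), norm_smul, Real.norm_eq_abs]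
    calc (1 + |t| * ‖x‖) ^ k * ‖φ x‖ ≤ 2 ^ (k - 1) * (1 ^ k + (|t| * ‖x‖) ^ k) * ‖φ x‖ := by
          gcongr
          exact add_pow_le zero_le_one (by positivity) k
      _ = _ := by rw [one_pow, mul_pow]; ring

variable {μ : Measure Z} {w : Z → 𝕜} {a : Z → E} {G : Type*} [NormedAddCommGroup G]
  [NormedSpace 𝕜 G]

namespace IsTranslationWeight

theorem integrable_smul_comp (hw : IsTranslationWeight μ w a) {h : E → G} (hh : Continuous h)
    {C : ℝ} {k : ℕ} (hC : ∀ v, ‖h v‖ ≤ C * (1 + ‖v‖) ^ k) :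
    Integrable (fun z => w z • h (a z)) μ := by
  refine ((hw.integrable_pow_mul_norm k).const_mul C).mono'
    (hw.aestronglyMeasurable_weight.smul
      (hh.comp_aestronglyMeasurable hw.aestronglyMeasurable_shift))
    (Eventually.of_forall fun z => ?_)
  rw [norm_smul]
  calc ‖w z‖ * ‖h (a z)‖ ≤ ‖w z‖ * (C * (1 + ‖a z‖) ^ k) := by gcongr; exact hC _
    _ = _ := by ring

theorem integrable_smul_comp_sub (hw : IsTranslationWeight μ w a) {h : E → G} (hh : Continuous h)
    {B : ℝ} (hB : ∀ v, ‖h v‖ ≤ B) (y : E) : Integrable (fun z => w z • h (y - a z)) μ :=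
  hw.integrable_smul_comp (h := fun v => h (y - v)) (k := 0) (hh.comp (continuous_sub_left y))
    fun v => by simpa using hB (y - v)

theorem hasFDerivAt_integral_smul_comp_sub [NormedSpace ℝ E] [NormedSpace ℝ G]
    (hw : IsTranslationWeight μ w a) {h : E → G} (hh : ContDiff ℝ 1 h)
    {B B' : ℝ} (hB : ∀ v, ‖h v‖ ≤ B) (hB' : ∀ v, ‖fderiv ℝ h v‖ ≤ B') (y : E) :
    HasFDerivAt (fun y => ∫ z, w z • h (y - a z) ∂μ) (∫ z, w z • fderiv ℝ h (y - a z) ∂μ) y := by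
  have hw_int : Integrable (fun z => B' * ‖w z‖) μ := by
    simpa using (hw.integrable_pow_mul_norm 0).const_mul B'
  refine hasFDerivAt_integral_of_dominated_of_fderiv_le
    (F' := fun y z => w z • fderiv ℝ h (y - a z)) univ_mem
    (Eventually.of_forall fun x =>
      (hw.integrable_smul_comp_sub hh.continuous hB x).aestronglyMeasurable)
    (hw.integrable_smul_comp_sub hh.continuous hB y)
    (hw.integrable_smul_comp_sub (hh.continuous_fderiv one_ne_zero) hB' y).aestronglyMeasurable
    (Eventually.of_forall fun z x _ => ?_) hw_int (Eventually.of_forall fun z x _ => ?_)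
  · rw [norm_smul, mul_comm]
    gcongr
    exact hB' _
  · exact ((hasFDerivAt_comp_sub (a z)).2
      (hh.differentiable one_ne_zero _).hasFDerivAt).const_smul (w z)

end IsTranslationWeight

end TranslationWeight

section TranslationAverage

variable {𝕜 E F Z : Type*} [RCLike 𝕜] [NormedAddCommGroup E] [NormedSpace ℝ E]
  [NormedAddCommGroup F] [NormedSpace ℝ F] [NormedSpace 𝕜 F] [SMulCommClass ℝ 𝕜 F]
  [MeasurableSpace Z] {μ : Measure Z} {w : Z → 𝕜} {a : Z → E}

namespace IsTranslationWeight

theorem integrable_smul_iteratedFDeriv (hw : IsTranslationWeight μ w a) (f : 𝓢(E, F)) (n : ℕ)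
    (y : E) : Integrable (fun z => w z • iteratedFDeriv ℝ n f (y - a z)) μ :=
  hw.integrable_smul_comp_sub ((f.smooth n).continuous_iteratedFDeriv le_rfl)
    (f.norm_iteratedFDeriv_le_seminorm ℝ n) y

theorem hasFDerivAt_integral_smul_iteratedFDeriv (hw : IsTranslationWeight μ w a) (f : 𝓢(E, F))
    (n : ℕ) (y : E) :
    HasFDerivAt (fun y => ∫ z, w z • iteratedFDeriv ℝ n f (y - a z) ∂μ)
      (∫ z, w z • fderiv ℝ (iteratedFDeriv ℝ n f) (y - a z) ∂μ) y :=
  hw.hasFDerivAt_integral_smul_comp_sub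
    ((f.smooth (1 + n : ℕ)).iteratedFDeriv_right (by norm_cast))
    (f.norm_iteratedFDeriv_le_seminorm ℝ n)
    (fun v => norm_fderiv_iteratedFDeriv.trans_le (f.norm_iteratedFDeriv_le_seminorm ℝ (n + 1) v)) y

theorem iteratedFDeriv_integral_smul [CompleteSpace F] (hw : IsTranslationWeight μ w a)
    (f : 𝓢(E, F)) (n : ℕ) (y : E) :
    iteratedFDeriv ℝ n (fun y => ∫ z, w z • f (y - a z) ∂μ) y =
      ∫ z, w z • iteratedFDeriv ℝ n f (y - a z) ∂μ := by
  induction n generalizing y with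
  | zero =>
    ext m
    rw [ContinuousMultilinearMap.integral_apply (hw.integrable_smul_iteratedFDeriv f 0 y)]
    rfl
  | succ n ih =>
    let curry := (continuousMultilinearCurryLeftEquiv ℝ (fun _ : Fin (n + 1) => E) F).symm
    have hcurry (z : Z) : w z • iteratedFDeriv ℝ (n + 1) f (y - a z) =
        curry (w z • fderiv ℝ (iteratedFDeriv ℝ n f) (y - a z)) := rfl
    rw [iteratedFDeriv_succ_eq_comp_left, funext ih, Function.comp_apply,
      (hw.hasFDerivAt_integral_smul_iteratedFDeriv f n y).fderiv]
    simp_rw [hcurry]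
    exact (LinearIsometry.integral_comp_comm (𝕜 := ℝ) (μ := μ) (E := E →L[ℝ] E [×n]→L[ℝ] F)
      (F := E [×(n + 1)]→L[ℝ] F) curry.toLinearIsometry _).symm

/-- The Schwartz function `y ↦ ∫ w z • f (y - a z)`, an average of translates of `f`. Convolutions
and averages over dilated shifts are both of this form. -/
noncomputable def average [CompleteSpace F] (hw : IsTranslationWeight μ w a) (f : 𝓢(E, F)) :
    𝓢(E, F) where
  toFun y := ∫ z, w z • f (y - a z) ∂μ
  smooth' := contDiff_of_differentiable_iteratedFDeriv fun n _ y => by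
    simpa only [funext (hw.iteratedFDeriv_integral_smul f n)] using
      (hw.hasFDerivAt_integral_smul_iteratedFDeriv f n y).differentiableAt
  decay' k n := by
    obtain ⟨C, -, h⟩ := exists_pow_mul_norm_iteratedFDeriv_add_le f k n
    refine ⟨∫ z, C * ((1 + ‖a z‖) ^ k * ‖w z‖) ∂μ, fun y => ?_⟩
    rw [hw.iteratedFDeriv_integral_smul f n, ← norm_norm y, ← norm_pow, ← norm_smul,
      ← integral_smul]
    refine norm_integral_le_of_norm_le ((hw.integrable_pow_mul_norm k).const_mul C)
      (Eventually.of_forall fun z => ?_)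
    rw [norm_smul, norm_smul, norm_pow, norm_norm, mul_left_comm]
    calc ‖w z‖ * (‖y‖ ^ k * ‖iteratedFDeriv ℝ n f (y - a z)‖)
        ≤ ‖w z‖ * (C * (1 + ‖a z‖) ^ k) := by
          gcongr ‖w z‖ * ?_
          simpa only [sub_eq_add_neg, norm_neg] using h y (-a z)
      _ = C * ((1 + ‖a z‖) ^ k * ‖w z‖) := by ring

theorem average_apply [CompleteSpace F] (hw : IsTranslationWeight μ w a) (f : 𝓢(E, F)) (y : E) :
    hw.average f y = ∫ z, w z • f (y - a z) ∂μ :=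
  rfl

theorem iteratedFDeriv_average [CompleteSpace F] (hw : IsTranslationWeight μ w a) (f : 𝓢(E, F))
    (n : ℕ) (y : E) :
    iteratedFDeriv ℝ n (hw.average f) y = ∫ z, w z • iteratedFDeriv ℝ n f (y - a z) ∂μ :=
  hw.iteratedFDeriv_integral_smul f n y

end IsTranslationWeight

end TranslationAverage

section WeightedJet

/-- The Banach space of bounded continuous functions from `E` into the `n`-linear maps, in which the
weighted `n`-jets of Schwartz functions live. It is not reducible, so that its normed structure is
found as a whole. -/
def JetSpace (E F : Type*) [NormedAddCommGroup E] [NormedSpace ℝ E] [NormedAddCommGroup F]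
    [NormedSpace ℝ F] (n : ℕ) : Type _ :=
  BoundedContinuousFunction E (E [×n]→L[ℝ] F)

namespace JetSpace

variable {𝕜 E F : Type*} [NormedAddCommGroup E] [NormedSpace ℝ E] [NormedAddCommGroup F]
  [NormedSpace ℝ F] {n : ℕ}

noncomputable instance : NormedAddCommGroup (JetSpace E F n) :=
  inferInstanceAs (NormedAddCommGroup (BoundedContinuousFunction E (E [×n]→L[ℝ] F)))

noncomputable instance [NormedField 𝕜] [NormedSpace 𝕜 F] [SMulCommClass ℝ 𝕜 F] :
    NormedSpace 𝕜 (JetSpace E F n) :=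
  inferInstanceAs (NormedSpace 𝕜 (BoundedContinuousFunction E (E [×n]→L[ℝ] F)))

instance [CompleteSpace F] : CompleteSpace (JetSpace E F n) :=
  inferInstanceAs (CompleteSpace (BoundedContinuousFunction E (E [×n]→L[ℝ] F)))

instance : FunLike (JetSpace E F n) E (E [×n]→L[ℝ] F) :=
  inferInstanceAs (FunLike (BoundedContinuousFunction E (E [×n]→L[ℝ] F)) _ _)

@[ext]
theorem ext {J J' : JetSpace E F n} (h : ∀ y, J y = J' y) : J = J' :=
  DFunLike.ext J J' h

theorem norm_le {J : JetSpace E F n} {C : ℝ} (hC : 0 ≤ C) : ‖J‖ ≤ C ↔ ∀ y, ‖J y‖ ≤ C :=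
  BoundedContinuousFunction.norm_le hC

theorem norm_apply_le (J : JetSpace E F n) (y : E) : ‖J y‖ ≤ ‖J‖ :=
  BoundedContinuousFunction.norm_coe_le_norm J y

theorem integral_apply {Z : Type*} [MeasurableSpace Z] {μ : Measure Z} [CompleteSpace F]
    {J : Z → JetSpace E F n} (hJ : Integrable J μ) (y : E) :
    (∫ z, J z ∂μ) y = ∫ z, J z y ∂μ :=
  ((BoundedContinuousFunction.evalCLM ℝ y :
    JetSpace E F n →L[ℝ] E [×n]→L[ℝ] F).integral_comp_comm hJ).symm

end JetSpace

variable (𝕜 : Type*) {E F : Type*} [RCLike 𝕜] [NormedAddCommGroup E] [NormedSpace ℝ E]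
  [NormedAddCommGroup F] [NormedSpace ℝ F] [NormedSpace 𝕜 F] [SMulCommClass ℝ 𝕜 F]

/-- The weighted jet `y ↦ ‖y‖ ^ k • iteratedFDeriv ℝ n f y` of a Schwartz function `f`, as a
continuous linear map into bounded continuous functions. Its norm is the `(k, n)` Schwartz seminorm,
so that finite families of weighted jets embed the Schwartz space seminorm by seminorm into Banach
spaces. -/
noncomputable def weightedJet (k n : ℕ) : 𝓢(E, F) →L[𝕜] JetSpace E F n :=
  have hbound (f : 𝓢(E, F)) (y : E) :
      ‖‖y‖ ^ k • iteratedFDeriv ℝ n f y‖ ≤ SchwartzMap.seminorm 𝕜 k n f := by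
    rw [norm_smul, norm_pow, norm_norm]
    exact f.le_seminorm 𝕜 k n y
  SchwartzMap.mkCLMtoNormedSpace
    (fun f => BoundedContinuousFunction.ofNormedAddCommGroup
      (fun y => ‖y‖ ^ k • iteratedFDeriv ℝ n f y)
      ((continuous_norm.pow k).smul ((f.smooth n).continuous_iteratedFDeriv le_rfl)) _ (hbound f))
    (fun f g => by
      ext1 y
      exact (congrArg _ (iteratedFDeriv_add_apply (f.contDiffAt n) (g.contDiffAt n))).trans
        (smul_add _ _ _))
    (fun c f => by
      ext1 y
      exact (congrArg _ (iteratedFDeriv_const_smul_apply (f.contDiffAt n))).trans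
        (smul_comm _ _ _))
    ⟨{(k, n)}, 1, zero_le_one, fun f => by
      rw [Finset.sup_singleton, one_mul]
      exact (JetSpace.norm_le (apply_nonneg _ f)).2 (hbound f)⟩

theorem weightedJet_apply (k n : ℕ) (f : 𝓢(E, F)) (y : E) :
    weightedJet 𝕜 k n f y = ‖y‖ ^ k • iteratedFDeriv ℝ n f y :=
  rfl

theorem seminorm_le_norm_weightedJet (k n : ℕ) (f : 𝓢(E, F)) :
    SchwartzMap.seminorm 𝕜 k n f ≤ ‖weightedJet 𝕜 k n f‖ := by
  refine SchwartzMap.seminorm_le_bound 𝕜 k n f (norm_nonneg _) fun y => ?_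
  simpa [weightedJet_apply, norm_smul] using (weightedJet 𝕜 k n f).norm_apply_le y

variable {𝕜}

theorem exists_continuousLinearMap_comp_eq {V X : Type*} [AddCommGroup V] [Module 𝕜 V]
    [NormedAddCommGroup X] [NormedSpace 𝕜 X] (u : V →ₗ[𝕜] 𝕜) (J : V →ₗ[𝕜] X) {C : ℝ}
    (h : ∀ f, ‖u f‖ ≤ C * ‖J f‖) : ∃ U : X →L[𝕜] 𝕜, ∀ f, U (J f) = u f := by
  have hker : u ∈ (LinearMap.ker J).dualAnnihilator := by
    refine (Submodule.mem_dualAnnihilator u).2 fun f hf => ?_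
    simpa [LinearMap.mem_ker.1 hf] using h f
  obtain ⟨w, rfl⟩ := (LinearMap.range_dualMap_eq_dualAnnihilator_ker J).ge hker
  obtain ⟨U, hU, -⟩ := exists_extension_norm_eq (LinearMap.range J)
    ((w.domRestrict (LinearMap.range J)).mkContinuous C (by rintro ⟨_, f, rfl⟩; exact h f))
  exact ⟨U, fun f => hU ⟨J f, LinearMap.mem_range_self J f⟩⟩

theorem exists_norm_apply_le_of_seminorm_le {G : Type*} [NormedAddCommGroup G] [NormedSpace 𝕜 G]
    (T : 𝓢(E, F) →L[𝕜] G) : ∃ (s : Finset (ℕ × ℕ)) (C : ℝ), 0 ≤ C ∧ ∀ (f : 𝓢(E, F)) (M : ℝ),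
      0 ≤ M → (∀ i ∈ s, SchwartzMap.seminorm 𝕜 i.1 i.2 f ≤ M) → ‖T f‖ ≤ C * M := by
  obtain ⟨s, C, -, h⟩ := Seminorm.bound_of_continuous (schwartz_withSeminorms 𝕜 E F)
    ((normSeminorm 𝕜 G).comp T.toLinearMap) (continuous_norm.comp T.continuous)
  exact ⟨s, C, C.2, fun f M hM hf => (h f).trans
    (mul_le_mul_of_nonneg_left (Seminorm.finset_sup_apply_le hM hf) C.2)⟩

theorem exists_apply_weightedJets_eq (u : 𝓢(E, F) →L[𝕜] 𝕜) :
    ∃ (s : Finset (ℕ × ℕ)) (U : (∀ i : s, JetSpace E F i.1.2) →L[𝕜] 𝕜),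
      ∀ f, U (fun i => weightedJet 𝕜 i.1.1 i.1.2 f) = u f := by
  obtain ⟨s, C, -, h⟩ := exists_norm_apply_le_of_seminorm_le u
  let J : 𝓢(E, F) →L[𝕜] ∀ i : s, JetSpace E F i.1.2 :=
    ContinuousLinearMap.pi fun i => weightedJet 𝕜 i.1.1 i.1.2
  obtain ⟨U, hU⟩ := exists_continuousLinearMap_comp_eq u.toLinearMap J.toLinearMap
    fun f => h f ‖J f‖ (norm_nonneg _) fun i hi =>
      (seminorm_le_norm_weightedJet 𝕜 i.1 i.2 f).trans (norm_le_pi_norm (J f) ⟨i, hi⟩)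
  exact ⟨s, U, hU⟩

end WeightedJet

section Commutation

variable {𝕜 E F Z : Type*} [RCLike 𝕜] [NormedAddCommGroup E] [NormedSpace ℝ E]
  [NormedAddCommGroup F] [NormedSpace ℝ F] [NormedSpace 𝕜 F] [SMulCommClass ℝ 𝕜 F]
  [CompleteSpace F] [MeasurableSpace Z] {μ : Measure Z} {w : Z → 𝕜} {a : Z → E}

namespace IsTranslationWeight

theorem integrable_smul_weightedJet (hw : IsTranslationWeight μ w a) (k n : ℕ) (f : 𝓢(E, F)) :
    Integrable (fun z => w z • weightedJet 𝕜 k n (f.compSubConstCLM 𝕜 (a z))) μ := by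
  obtain ⟨C, hC, h⟩ := exists_pow_mul_norm_iteratedFDeriv_add_le f k n
  refine hw.integrable_smul_comp (h := fun v => weightedJet 𝕜 k n (f.compSubConstCLM 𝕜 v))
    ((weightedJet 𝕜 k n).continuous.comp (continuous_compSubConstCLM 𝕜 f)) (C := C) (k := k)
    fun v => ?_
  refine (JetSpace.norm_le (by positivity)).2 fun y => ?_
  rw [weightedJet_apply, iteratedFDeriv_compSubConstCLM, norm_smul, norm_pow, norm_norm]
  simpa only [sub_eq_add_neg, norm_neg] using h y (-v)

theorem weightedJet_average (hw : IsTranslationWeight μ w a) (k n : ℕ) (f : 𝓢(E, F)) :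
    weightedJet 𝕜 k n (hw.average f) =
      ∫ z, w z • weightedJet 𝕜 k n (f.compSubConstCLM 𝕜 (a z)) ∂μ := by
  ext1 y
  calc weightedJet 𝕜 k n (hw.average f) y
      = ‖y‖ ^ k • ∫ z, w z • iteratedFDeriv ℝ n f (y - a z) ∂μ :=
        congrArg (‖y‖ ^ k • ·) (hw.iteratedFDeriv_average f n y)
    _ = ∫ z, w z • weightedJet 𝕜 k n (f.compSubConstCLM 𝕜 (a z)) y ∂μ := by
        simp_rw [weightedJet_apply, iteratedFDeriv_compSubConstCLM, ← integral_smul,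
          smul_comm (w _)]
    _ = _ := (JetSpace.integral_apply (hw.integrable_smul_weightedJet k n f) y).symm

theorem apply_average (hw : IsTranslationWeight μ w a) (u : 𝓢(E, F) →L[𝕜] 𝕜) (f : 𝓢(E, F)) :
    u (hw.average f) = ∫ z, w z * u (f.compSubConstCLM 𝕜 (a z)) ∂μ := by
  obtain ⟨s, U, hU⟩ := exists_apply_weightedJets_eq u
  have h_int (i : s) := hw.integrable_smul_weightedJet i.1.1 i.1.2 f
  let J (z : Z) (i : s) : JetSpace E F i.1.2 :=
    w z • weightedJet 𝕜 i.1.1 i.1.2 (f.compSubConstCLM 𝕜 (a z))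
  have hjets : (fun i : s => weightedJet 𝕜 i.1.1 i.1.2 (hw.average f)) = ∫ z, J z ∂μ := by
    funext i
    rw [hw.weightedJet_average, eval_integral h_int]
  have hUJ (z : Z) : U (J z) = w z * u (f.compSubConstCLM 𝕜 (a z)) := by
    rw [← hU, ← smul_eq_mul, ← map_smul]
    rfl
  rw [← hU, hjets, ← U.integral_comp_comm (Integrable.of_eval h_int)]
  exact integral_congr_ae (.of_forall hUJ)

end IsTranslationWeight

end Commutation

section Moments

namespace IsTranslationWeight

variable {𝕜 E G Z : Type*} [RCLike 𝕜] [NormedAddCommGroup E] [NormedSpace ℝ E]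
  [NormedAddCommGroup G] [NormedSpace ℝ G] [NormedSpace 𝕜 G] [MeasurableSpace Z] {μ : Measure Z}
  {w : Z → 𝕜} {a : Z → E}

theorem integrable_smul_multilinear (hw : IsTranslationWeight μ w a) {j : ℕ}
    (M : E [×j]→L[ℝ] G) : Integrable (fun z => w z • M fun _ => a z) μ := by
  refine hw.integrable_smul_comp (h := fun v => M fun _ => v) (C := ‖M‖) (k := j) (by fun_prop)
    fun v => ?_
  calc ‖M fun _ => v‖ ≤ ‖M‖ * ‖v‖ ^ j := by simpa using M.le_opNorm fun _ => v
    _ ≤ ‖M‖ * (1 + ‖v‖) ^ j := by gcongr; linarith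

theorem integrable_smul_taylor (hw : IsTranslationWeight μ w a) (h : E → G)
    (y : E) (N : ℕ) : Integrable (fun z => w z • ∑ j ∈ Finset.range (N + 1),
      (j.factorial : ℝ)⁻¹ • iteratedFDeriv ℝ j h y fun _ => a z) μ := by
  simp_rw [Finset.smul_sum]
  exact integrable_finsetSum _ fun j _ =>
    hw.integrable_smul_multilinear ((j.factorial : ℝ)⁻¹ • iteratedFDeriv ℝ j h y)

end IsTranslationWeight

theorem prod_comp_eq_prod_pow_card {ι κ R : Type*} [Fintype ι] [Fintype κ] [DecidableEq κ]
    [CommMonoid R] (x : κ → R) (r : ι → κ) :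
    ∏ i, x (r i) = ∏ k, x k ^ Finset.card {i | r i = k} := by
  simp_rw [← Finset.prod_const, Finset.prod_fiberwise']

theorem multilinear_diag_eq_sum {R ι κ G : Type*} [CommSemiring R] [AddCommMonoid G] [Module R G]
    [Fintype ι] [Fintype κ] [DecidableEq ι] [DecidableEq κ]
    (M : MultilinearMap R (fun _ : ι => κ → R) G) (z : κ → R) :
    (M fun _ => z) = ∑ r : ι → κ, (∏ i, z (r i)) • M fun i => Pi.single (r i) 1 := by
  conv_lhs => rw [pi_eq_sum_univ' z]
  simp_rw [M.map_sum, M.map_smul_univ]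

variable {d : ℕ} {φ : 𝓢(Fin d → ℝ, ℂ)} {G : Type*} [NormedAddCommGroup G] [NormedSpace ℝ G]
  [NormedSpace ℂ G]

namespace IsMollifier

theorem integral_prod_mul_eq_zero (hφ : IsMollifier φ) {j : ℕ} (hj : j ≠ 0) (r : Fin j → Fin d) :
    ∫ z, (∏ i, (z (r i) : ℂ)) * φ z = 0 := by
  have hα : (fun k => Finset.card {i | r i = k}) ≠ 0 := fun h =>
    (Finset.card_pos.2 ⟨⟨0, Nat.pos_of_ne_zero hj⟩, by simp⟩).ne'
      (congrFun h (r ⟨0, Nat.pos_of_ne_zero hj⟩))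
  rw [← hφ.2 _ hα]
  congr! 3 with z
  exact prod_comp_eq_prod_pow_card (fun k => (z k : ℂ)) r

theorem integral_smul_multilinear_eq_zero [CompleteSpace G] (hφ : IsMollifier φ) {j : ℕ}
    (hj : j ≠ 0) (M : (Fin d → ℝ) [×j]→L[ℝ] G) : ∫ z, φ z • (M fun _ => z) = 0 := by
  have hM (z : Fin d → ℝ) : φ z • (M fun _ => z) = ∑ r : Fin j → Fin d,
      ((∏ i, (z (r i) : ℂ)) * φ z) • M fun i => Pi.single (r i) 1 := by
    have := multilinear_diag_eq_sum M.toMultilinearMap z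
    simp only [ContinuousMultilinearMap.coe_coe] at this
    rw [this, Finset.smul_sum]
    refine Finset.sum_congr rfl fun r _ => ?_
    rw [mul_comm, mul_smul, ← Complex.ofReal_prod, ← Complex.coe_algebraMap, algebraMap_smul]
  have h_int (r : Fin j → Fin d) : Integrable fun z => (∏ i, (z (r i) : ℂ)) * φ z := by
    have := (isTranslationWeight_smul (ν := volume) φ 1).integrable_smul_comp
      (h := fun v : Fin d → ℝ => ∏ i, (v (r i) : ℂ)) (C := 1) (k := j) (by fun_prop) fun v => by
        calc ‖∏ i, (v (r i) : ℂ)‖ ≤ ∏ _i : Fin j, (1 + ‖v‖) := by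
              rw [norm_prod]
              gcongr with i
              rw [Complex.norm_real]
              linarith [norm_le_pi_norm v (r i)]
          _ = 1 * (1 + ‖v‖) ^ j := by simp
    simpa only [one_smul, smul_eq_mul, mul_comm] using this
  simp_rw [hM]
  rw [integral_finsetSum _ fun r _ => (h_int r).smul_const _]
  refine Finset.sum_eq_zero fun r _ => ?_
  rw [integral_smul_const, hφ.integral_prod_mul_eq_zero hj, zero_smul]

theorem integral_smul_taylor [CompleteSpace G] (hφ : IsMollifier φ) (h : (Fin d → ℝ) → G)
    (y : Fin d → ℝ) (N : ℕ) (t : ℝ) : ∫ z, φ z • ∑ j ∈ Finset.range (N + 1),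
      (j.factorial : ℝ)⁻¹ • iteratedFDeriv ℝ j h y (fun _ => t • z) = h y := by
  let M (j : ℕ) := (j.factorial : ℝ)⁻¹ • iteratedFDeriv ℝ j h y
  have hM (j : ℕ) : ∫ z, φ z • (M (j + 1) fun _ => t • z) = 0 := by
    have := hφ.integral_smul_multilinear_eq_zero j.succ_ne_zero (t ^ (j + 1) • M (j + 1))
    simpa [ContinuousMultilinearMap.map_smul_univ] using this
  calc ∫ z, φ z • ∑ j ∈ Finset.range (N + 1), M j (fun _ => t • z)
      = ∑ j ∈ Finset.range (N + 1), ∫ z, φ z • M j (fun _ => t • z) := by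
        simp_rw [Finset.smul_sum]
        exact integral_finsetSum _ fun j _ =>
          (isTranslationWeight_smul φ t).integrable_smul_multilinear (M j)
    _ = ∫ z, φ z • M 0 (fun _ => t • z) := by
        rw [Finset.sum_range_succ', Finset.sum_eq_zero fun j _ => hM j, zero_add]
    _ = h y := by simp [M, integral_smul_const, hφ.1]

end IsMollifier

end Moments

section Approximation

variable {d : ℕ} {φ : 𝓢(Fin d → ℝ, ℂ)} {F : Type*} [NormedAddCommGroup F] [NormedSpace ℝ F]
  [NormedSpace ℂ F] [CompleteSpace F]

namespace IsMollifier

theorem iteratedFDeriv_average_sub (hφ : IsMollifier φ) (f : 𝓢(Fin d → ℝ, F)) (n N : ℕ) (t : ℝ)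
    (y : Fin d → ℝ) : iteratedFDeriv ℝ n
      ((isTranslationWeight_smul (ν := volume) φ t).average f - f : 𝓢(Fin d → ℝ, F)) y =
      ∫ z, φ z • (iteratedFDeriv ℝ n f (y - t • z) - ∑ j ∈ Finset.range (N + 1),
        (j.factorial : ℝ)⁻¹ • iteratedFDeriv ℝ j (iteratedFDeriv ℝ n f) y fun _ => -t • z) := by
  have hw := isTranslationWeight_smul (ν := volume) φ t
  have hw' := isTranslationWeight_smul (ν := volume) φ (-t)
  simp_rw [smul_sub]
  rw [iteratedFDeriv_schwartz_sub, hw.iteratedFDeriv_average,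
    integral_sub (hw.integrable_smul_iteratedFDeriv f n y) (hw'.integrable_smul_taylor _ y N),
    hφ.integral_smul_taylor]

theorem exists_seminorm_average_sub_le (hφ : IsMollifier φ) (f : 𝓢(Fin d → ℝ, F)) (k n N : ℕ) :
    ∃ C, 0 ≤ C ∧ ∀ t : ℝ, |t| ≤ 1 → SchwartzMap.seminorm ℂ k n
      ((isTranslationWeight_smul (ν := volume) φ t).average f - f) ≤ C * |t| ^ (N + 1) := by
  obtain ⟨C, hC, hf⟩ := exists_pow_mul_norm_iteratedFDeriv_sub_taylor_le f k n N
  have hmom := (isTranslationWeight_smul (ν := volume) φ 1).integrable_pow_mul_norm (k + (N + 1))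
  simp only [one_smul] at hmom
  refine ⟨C * ∫ z, (1 + ‖z‖) ^ (k + (N + 1)) * ‖φ z‖, by positivity, fun t ht => ?_⟩
  refine SchwartzMap.seminorm_le_bound ℂ k n _ (by positivity) fun y => ?_
  have hbound (z : Fin d → ℝ) : ‖y‖ ^ k * ‖φ z • (iteratedFDeriv ℝ n f (y - t • z) -
      ∑ j ∈ Finset.range (N + 1), (j.factorial : ℝ)⁻¹ •
        iteratedFDeriv ℝ j (iteratedFDeriv ℝ n f) y fun _ => -t • z)‖ ≤
      C * |t| ^ (N + 1) * ((1 + ‖z‖) ^ (k + (N + 1)) * ‖φ z‖) := by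
    have htz : ‖-t • z‖ = |t| * ‖z‖ := by rw [norm_smul, norm_neg, Real.norm_eq_abs]
    have := hf y (-t • z)
    rw [neg_smul, ← sub_eq_add_neg, ← neg_smul, htz] at this
    rw [norm_smul, mul_left_comm]
    calc _ ≤ ‖φ z‖ * (C * (1 + |t| * ‖z‖) ^ k * (|t| * ‖z‖) ^ (N + 1)) := by gcongr
      _ ≤ ‖φ z‖ * (C * (1 + ‖z‖) ^ k * (|t| * (1 + ‖z‖)) ^ (N + 1)) := by
        gcongr
        · exact mul_le_of_le_one_left (norm_nonneg z) ht
        · linarith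
      _ = _ := by rw [mul_pow]; ring
  calc _ ≤ ∫ z, C * |t| ^ (N + 1) * ((1 + ‖z‖) ^ (k + (N + 1)) * ‖φ z‖) := by
        rw [hφ.iteratedFDeriv_average_sub f n N, ← norm_norm y, ← norm_pow, ← norm_smul,
          ← integral_smul]
        refine norm_integral_le_of_norm_le (hmom.const_mul _) (.of_forall fun z => ?_)
        rw [norm_smul, norm_pow, norm_norm]
        exact hbound z
    _ = _ := by rw [integral_const_mul]; ring

theorem exists_norm_apply_average_sub_le (hφ : IsMollifier φ) {G : Type*} [NormedAddCommGroup G]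
    [NormedSpace ℂ G] (T : 𝓢(Fin d → ℝ, F) →L[ℂ] G) (f : 𝓢(Fin d → ℝ, F)) (N : ℕ) :
    ∃ C, 0 ≤ C ∧ ∀ t : ℝ, |t| ≤ 1 →
      ‖T ((isTranslationWeight_smul (ν := volume) φ t).average f) - T f‖ ≤ C * |t| ^ (N + 1) := by
  obtain ⟨s, K, hK, hT⟩ := exists_norm_apply_le_of_seminorm_le T
  choose C hC h using fun i : ℕ × ℕ => hφ.exists_seminorm_average_sub_le f i.1 i.2 N
  have hsum : 0 ≤ ∑ i ∈ s, C i := Finset.sum_nonneg fun i _ => hC i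
  refine ⟨K * ∑ i ∈ s, C i, by positivity, fun t ht => ?_⟩
  rw [← map_sub, mul_assoc]
  refine hT _ _ (by positivity) fun i hi => (h i t ht).trans ?_
  gcongr
  exact Finset.single_le_sum (fun i _ => hC i) hi

end IsMollifier

end Approximation

section Scaling

variable {d : ℕ} (φ g : 𝓢(Fin d → ℝ, ℂ)) {t : ℝ}

theorem average_scaled (ht : 0 < t) {ψ : 𝓢(Fin d → ℝ, ℂ)} (hψ : ∀ v, ψ v = scaled φ t (-v)) :
    (isTranslationWeight_smul (ν := volume) g 1).average ψ =
      (isTranslationWeight_smul (ν := volume) φ (-t)).average g := by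
  ext y
  have hscale (z : Fin d → ℝ) : φ z * g (y + t • z) = φ (t⁻¹ • (t • z)) * g (y + t • z) := by
    rw [inv_smul_smul₀ ht.ne']
  have htd : t ^ (-(d : ℤ)) = |(t ^ Module.finrank ℝ (Fin d → ℝ))⁻¹| := by
    rw [Module.finrank_fin_fun, zpow_neg, zpow_natCast, abs_of_pos (by positivity)]
  simp only [IsTranslationWeight.average_apply, hψ, one_smul, neg_smul, sub_neg_eq_add, neg_sub,
    smul_eq_mul, scaled]
  rw [integral_congr_ae (.of_forall hscale),
    Measure.integral_comp_smul volume (fun v => φ (t⁻¹ • v) * g (y + v)) t, ← htd,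
    ← integral_add_right_eq_self _ y, ← integral_smul]
  refine integral_congr_ae (.of_forall fun v => ?_)
  simp only [add_sub_cancel_right, Complex.real_smul, add_comm y]
  ring

theorem integral_apply_scaled_mul (u : 𝓢(Fin d → ℝ, ℂ) →L[ℂ] ℂ) (ht : 0 < t)
    {Ψ : (Fin d → ℝ) → 𝓢(Fin d → ℝ, ℂ)} (hΨ : ∀ x v, Ψ x v = scaled φ t (x - v)) :
    ∫ x, u (Ψ x) * g x = u ((isTranslationWeight_smul (ν := volume) φ (-t)).average g) := by
  have htrans (x : Fin d → ℝ) : (Ψ 0).compSubConstCLM ℂ ((1 : ℝ) • x) = Ψ x := by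
    ext v
    simp [hΨ]
  rw [← average_scaled φ g ht fun v => by rw [hΨ 0, zero_sub], IsTranslationWeight.apply_average]
  simp_rw [htrans, mul_comm]

end Scaling

theorem exists_rpow_pow_le_pow {s : ℝ} (hs : 0 < s) (p : ℕ) :
    ∃ N : ℕ, ∀ ε : ℝ, 0 < ε → ε ≤ 1 → (ε ^ s) ^ (N + 1) ≤ ε ^ p := by
  obtain ⟨N, hN⟩ := exists_nat_gt (p / s)
  refine ⟨N, fun ε hε hε1 => ?_⟩
  rw [← Real.rpow_mul_natCast hε.le, ← Real.rpow_natCast ε p]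
  refine Real.rpow_le_rpow_of_exponent_ge hε hε1 ?_
  rw [div_lt_iff₀' hs] at hN
  push_cast
  linarith

theorem stmt18_general (m : ℕ) (u : 𝓢(Fin m → ℝ, ℂ) →L[ℂ] ℂ) (s : ℝ) (hs : 0 < s)
    (φ : 𝓢(Fin m → ℝ, ℂ)) (hφ : IsMollifier φ)
    (Φ : ℝ → (Fin m → ℝ) → 𝓢(Fin m → ℝ, ℂ))
    (hΦ : ∀ t ∈ Set.Ioc (0 : ℝ) 1, ∀ x v, Φ t x v = scaled φ t (x - v))
    (g : 𝓢(Fin m → ℝ, ℂ)) (p : ℕ) :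
    ∃ C > (0 : ℝ), ∃ η > (0 : ℝ), ∀ ε : ℝ, 0 < ε → ε ≤ η →
      ‖(∫ x, u (Φ (ε ^ s) x) * g x) - u g‖ ≤ C * ε ^ p := by
  obtain ⟨N, hN⟩ := exists_rpow_pow_le_pow hs p
  obtain ⟨C, hC, h⟩ := hφ.exists_norm_apply_average_sub_le u g N
  refine ⟨C + 1, by positivity, 1, one_pos, fun ε hε hε1 => ?_⟩
  have ht : 0 < ε ^ s := Real.rpow_pos_of_pos hε s
  have ht1 : ε ^ s ≤ 1 := Real.rpow_le_one hε.le hε1 hs.le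
  have habs : |-ε ^ s| = ε ^ s := by rw [abs_neg, abs_of_pos ht]
  calc ‖(∫ x, u (Φ (ε ^ s) x) * g x) - u g‖ ≤ C * |-ε ^ s| ^ (N + 1) := by
        rw [integral_apply_scaled_mul φ g u ht (hΦ _ ⟨ht, ht1⟩)]
        exact h _ (habs.trans_le ht1)
    _ ≤ (C + 1) * ε ^ p := by
        rw [habs]
        gcongr
        · linarith
        · exact hN ε hε hε1

/-- the net `(u ∗ φ_{ε^s})_ε` is equal to `u` in the generalized
distribution sense. -/
theorem stmt18 (m : ℕ) (hm : 1 ≤ m)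
    (u : SchwartzMap (Fin m → ℝ) ℂ →L[ℂ] ℂ)
    (s : ℝ) (hs : s ∈ Set.Ioo (0:ℝ) 1)
    (φ : SchwartzMap (Fin m → ℝ) ℂ) (hφ : IsMollifier φ)
    (Φ : ℝ → (Fin m → ℝ) → SchwartzMap (Fin m → ℝ) ℂ)
    (hΦ : ∀ t ∈ Set.Ioc (0:ℝ) 1, ∀ x v, Φ t x v = scaled ⇑φ t (x - v))
    (g : SchwartzMap (Fin m → ℝ) ℂ) (p : ℕ) :
    ∃ C > (0:ℝ), ∃ η > (0:ℝ), ∀ ε : ℝ, 0 < ε → ε ≤ η →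
      ‖(∫ x : Fin m → ℝ, u (Φ (ε ^ s) x) * g x) - u g‖ ≤ C * ε ^ p :=
  stmt18_general m u s hs.1 φ hφ Φ hΦ g p
end
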